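/- Super-critical sharpness for Bernoulli percolation: for every dimension d ≥ 2 and every p ∈ (0,1) with p > p_c(ℤ^d), there exists a constant c = c(p) > 0 such that ℙ_p[0 ↔ ∂Λ_n but the open cluster of 0 is finite] ≤ exp(−c·n) for all integers n ≥ 1. -/

import Mathlib

open MeasureTheory

namespace Perc

/-- Vertices of `ℤ^d`. -/
abbrev Vertex (d : ℕ) := Fin d → ℤ

/-- Nearest-neighbour adjacency in `ℤ^d`: `‖x − y‖₁ = 1`. -/
def adj {d : ℕ} (x y : Vertex d) : Prop :=
  (∑ i, (x i - y i).natAbs) = 1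

/-- The unordered pair `e` is a nearest-neighbour edge of `ℤ^d`. -/
def IsEdge {d : ℕ} (e : Sym2 (Vertex d)) : Prop :=
  ∃ x y : Vertex d, adj x y ∧ e = s(x, y)

/-- The set `E` of nearest-neighbour edges of `ℤ^d`. -/
abbrev Edge (d : ℕ) := {e : Sym2 (Vertex d) // IsEdge e}

/-- Percolation configurations `ω ∈ {0,1}^E`. -/
abbrev Config (d : ℕ) := Edge d → Bool

/-- One step along an open edge of `ω`. -/
def step {d : ℕ} (ω : Config d) (x y : Vertex d) : Prop :=
  ∃ h : adj x y, ω ⟨s(x, y), x, y, h, rfl⟩ = true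

/-- `x` and `y` are joined by a path of open edges. -/
def Conn {d : ℕ} (ω : Config d) : Vertex d → Vertex d → Prop :=
  Relation.ReflTransGen (step ω)

/-- The open cluster of `x` in `ω`. -/
def cluster {d : ℕ} (ω : Config d) (x : Vertex d) : Set (Vertex d) :=
  {y | Conn ω x y}

/-- The box `Λ_n = {−n, …, n}^d`. -/
def box (d n : ℕ) : Set (Vertex d) := {x | ∀ i, |x i| ≤ (n : ℤ)}

/-- `∂Λ_n`: vertices of `Λ_n` having a nearest neighbour outside `Λ_n`. -/
def boxBoundary (d n : ℕ) : Set (Vertex d) :=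
  {x | x ∈ box d n ∧ ∃ y, adj x y ∧ y ∉ box d n}

/-- The origin of `ℤ^d`. -/
def origin (d : ℕ) : Vertex d := fun _ => 0

/-- The event `{0 ↔ ∂Λ_n}`. -/
def ZeroToBoundary (d n : ℕ) : Set (Config d) :=
  {ω | ∃ y ∈ boxBoundary d n, Conn ω (origin d) y}

/-- The event `{0 ↔ ∞}` that the open cluster of the origin is infinite. -/
def ZeroToInfinity (d : ℕ) : Set (Config d) :=
  {ω | (cluster ω (origin d)).Infinite}

/-- `μ` is the law of i.i.d. Bernoulli(p) edge variables: it is a probability measure on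
`{0,1}^E` under which every finite cylinder has the corresponding product probability. -/
def IsBernoulli (d : ℕ) (p : ℝ) (μ : Measure (Config d)) : Prop :=
  IsProbabilityMeasure μ ∧
    ∀ (s : Finset (Edge d)) (f : Edge d → Bool),
      μ {ω : Config d | ∀ e ∈ s, ω e = f e} =
        ENNReal.ofReal (∏ e ∈ s, if f e then p else 1 - p)

set_option linter.all false

section L0
variable {ι : Type*}

noncomputable def ber (r : unitInterval) : Measure Bool :=
  ENNReal.ofReal (r : ℝ) • Measure.dirac true + ENNReal.ofReal (1 - (r : ℝ)) • Measure.dirac false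

instance (r : unitInterval) : IsProbabilityMeasure (ber r) := by
  constructor
  simp only [ber, Measure.add_apply, Measure.smul_apply, measure_univ, smul_eq_mul, mul_one]
  rw [← ENNReal.ofReal_add r.2.1 (by linarith [r.2.2])]
  simp

lemma ber_single (r : unitInterval) (b : Bool) :
    ber r {b} = ENNReal.ofReal (if b then (r : ℝ) else 1 - r) := by
  cases b <;> simp [ber]

noncomputable def PM (r : ι → unitInterval) : Measure (ι → Bool) :=
  Measure.infinitePi (fun i => ber (r i))

instance (r : ι → unitInterval) : IsProbabilityMeasure (PM r) := by
  unfold PM; infer_instance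

lemma PM_cyl (r : ι → unitInterval) (s : Finset ι) (f : ι → Bool) :
    PM r {ω | ∀ i ∈ s, ω i = f i} =
      ENNReal.ofReal (∏ i ∈ s, if f i then (r i : ℝ) else 1 - r i) := by
  have : {ω : ι → Bool | ∀ i ∈ s, ω i = f i} = Set.pi (s : Set ι) (fun i => {f i}) := by
    ext ω; simp [Set.pi]
  rw [this, PM, Measure.infinitePi_pi _ (fun i _ => MeasurableSet.singleton _)]
  rw [ENNReal.ofReal_prod_of_nonneg]
  · exact Finset.prod_congr rfl fun i _ => ber_single _ _
  · intro i _
    split_ifs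
    · exact (r i).2.1
    · linarith [(r i).2.2]

/-- a measure with the cylinder formula is `PM`. -/
lemma eq_PM (r : ι → unitInterval) (ν : Measure (ι → Bool))
    (h : ∀ (s : Finset ι) (f : ι → Bool), ν {ω | ∀ i ∈ s, ω i = f i} =
      ENNReal.ofReal (∏ i ∈ s, if f i then (r i : ℝ) else 1 - r i)) : ν = PM r := by
  classical
  have hfin : ∀ s : Finset ι, ν.map s.restrict = (PM r).map s.restrict := by
    intro s
    apply Measure.ext_of_singleton
    intro g
    rw [Measure.map_apply (by fun_prop) (MeasurableSet.singleton _),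
      Measure.map_apply (by fun_prop) (MeasurableSet.singleton _)]
    have : (s.restrict : (ι → Bool) → (s → Bool)) ⁻¹' {g} = {ω : ι → Bool | ∀ i ∈ s, ω i =
        (fun j => if hj : j ∈ s then g ⟨j, hj⟩ else false) i} := by
      ext ω
      simp only [Set.mem_preimage, Set.mem_singleton_iff, Set.mem_ofPred_eq]
      constructor
      · intro hh i hi
        rw [← hh]; simp [hi]
      · intro hh
        funext i
        have := hh i i.2
        simpa using this
    rw [this, h, PM_cyl]
  refine Measure.eq_infinitePi _ ?_
  intro s t ht
  have hmeas : MeasurableSet (Set.pi Set.univ (fun i : s => t i)) :=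
    MeasurableSet.univ_pi (fun i => ht i)
  have e : Set.pi (s : Set ι) t = s.restrict ⁻¹' (Set.pi Set.univ (fun i : s => t i)) := by
    ext ω; simp [Set.pi]
  rw [e, ← Measure.map_apply (by fun_prop) hmeas, hfin,
    Measure.map_apply (by fun_prop) hmeas, ← e, PM, Measure.infinitePi_pi _ (fun i _ => ht i)]

def Dep (J : Set ι) (A : Set (ι → Bool)) : Prop :=
  ∀ ω ω' : ι → Bool, (∀ i ∈ J, ω i = ω' i) → ω ∈ A → ω' ∈ A

lemma Dep.mono {J J' : Set ι} {A : Set (ι → Bool)} (h : Dep J A) (hJ : J ⊆ J') : Dep J' A :=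
  fun ω ω' hh => h ω ω' (fun i hi => hh i (hJ hi))

lemma Dep.inter {J : Set ι} {A B : Set (ι → Bool)} (h : Dep J A) (h' : Dep J B) :
    Dep J (A ∩ B) :=
  fun ω ω' hh hA => ⟨h ω ω' hh hA.1, h' ω ω' hh hA.2⟩

lemma Dep.compl {J : Set ι} {A : Set (ι → Bool)} (h : Dep J A) : Dep J Aᶜ :=
  fun ω ω' hh hA hA' => hA (h ω' ω (fun i hi => (hh i hi).symm) hA')

lemma Dep.meas' {J : Set ι} {A : Set (ι → Bool)} (h : Dep J A) (hA : MeasurableSet A) :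
    MeasurableSet[⨆ i ∈ J, MeasurableSpace.comap (fun ω : ι → Bool => ω i) inferInstance] A := by
  classical
  let g : (ι → Bool) → (ι → Bool) := fun ω i => if i ∈ J then ω i else false
  have e : A = g ⁻¹' A := by
    ext ω
    constructor
    · exact h ω (g ω) (fun i hi => by simp [g, hi])
    · exact h (g ω) ω (fun i hi => by simp [g, hi])
  have hg : @Measurable _ _ (⨆ i ∈ J, MeasurableSpace.comap (fun ω : ι → Bool => ω i) inferInstance)
      MeasurableSpace.pi g := by
    rw [@measurable_pi_iff]
    intro i
    by_cases hi : i ∈ J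
    · simp only [g, hi, if_true]
      apply Measurable.mono (comap_measurable (fun ω : ι → Bool => ω i)) _ le_rfl
      exact le_iSup₂_of_le i hi le_rfl
    · simp only [g, hi, if_false]
      exact measurable_const
  rw [e]
  exact hg hA

lemma Dep.meas {J : Set ι} (hJ : J.Finite) {A : Set (ι → Bool)} (h : Dep J A) :
    MeasurableSet A := by
  classical
  have hg : Measurable (hJ.toFinset.restrict : (ι → Bool) → _) := by fun_prop
  have e : A = hJ.toFinset.restrict ⁻¹' (hJ.toFinset.restrict '' A) := by
    ext ω
    constructor
    · intro hω; exact ⟨ω, hω, rfl⟩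
    · rintro ⟨ω', h', he⟩
      refine h ω' ω (fun i hi => ?_) h'
      exact congrFun he ⟨i, by simpa using hi⟩
  rw [e]
  exact hg (Set.toFinite _).measurableSet

lemma indep (r : ι → unitInterval) {J J' : Set ι} {A B : Set (ι → Bool)}
    (hA : MeasurableSet A) (hB : MeasurableSet B) (hJA : Dep J A) (hJB : Dep J' B)
    (hd : Disjoint J J') : PM r (A ∩ B) = PM r A * PM r B := by
  have h1 : ProbabilityTheory.iIndepFun (fun i (ω : ι → Bool) => ω i) (PM r) := by
    have := ProbabilityTheory.iIndepFun_infinitePi (P := fun i => ber (r i))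
      (X := fun i (b : Bool) => b) (fun i => measurable_id)
    exact this
  have h2 := ProbabilityTheory.indep_iSup_of_disjoint (fun i => (measurable_pi_apply i).comap_le)
    h1 hd
  exact (ProbabilityTheory.Indep_iff _ _ _).1 h2 _ _ (hJA.meas' hA) (hJB.meas' hB)

lemma indep_real (r : ι → unitInterval) {J J' : Set ι} {A B : Set (ι → Bool)}
    (hA : MeasurableSet A) (hB : MeasurableSet B) (hJA : Dep J A) (hJB : Dep J' B)
    (hd : Disjoint J J') : (PM r).real (A ∩ B) = (PM r).real A * (PM r).real B := by
  simp [measureReal_def, indep r hA hB hJA hJB hd]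

/-- pulling back along an injection -/
lemma PM_map_inj {κ : Type*} (r : ι → unitInterval) (f : κ → ι) (hf : Function.Injective f) :
    (PM r).map (fun ω k => ω (f k)) = PM (fun k => r (f k)) := by
  classical
  apply eq_PM
  intro s g
  have hm : Measurable (fun (ω : ι → Bool) (k : κ) => ω (f k)) := by fun_prop
  have hms : MeasurableSet {ω : κ → Bool | ∀ i ∈ s, ω i = g i} :=
    Dep.meas (J := (s : Set κ)) s.finite_toSet (fun ω ω' hh hA i hi => by
      rw [← hh i (by simpa using hi)]; exact hA i hi)
  rw [Measure.map_apply hm hms]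
  have hex : ∃ g' : ι → Bool, ∀ k, g' (f k) = g k :=
    ⟨Function.extend f g (fun _ => false), fun k => hf.extend_apply _ _ _⟩
  obtain ⟨g', hg'⟩ := hex
  have := PM_cyl r (s.map ⟨f, hf⟩) g'
  simp only [Finset.prod_map, Function.Embedding.coeFn_mk, hg'] at this
  rw [← this]
  congr 1
  ext ω
  simp [hg']

lemma PM_open (r : ι → unitInterval) (s : Finset ι) :
    (PM r).real {ω | ∀ i ∈ s, ω i = true} = ∏ i ∈ s, (r i : ℝ) := by
  have := PM_cyl r s (fun _ => true)
  simp only [if_true] at this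
  rw [measureReal_def, this, ENNReal.toReal_ofReal]
  exact Finset.prod_nonneg fun i _ => (r i).2.1

lemma PM_closed (r : ι → unitInterval) (s : Finset ι) :
    (PM r).real {ω | ∀ i ∈ s, ω i = false} = ∏ i ∈ s, (1 - (r i : ℝ)) := by
  have := PM_cyl r s (fun _ => false)
  simp only [Bool.false_eq_true, if_false] at this
  rw [measureReal_def, this, ENNReal.toReal_ofReal]
  exact Finset.prod_nonneg fun i _ => by linarith [(r i).2.2]

lemma dep_cyl (s : Finset ι) (f : ι → Bool) : Dep (s : Set ι) {ω | ∀ i ∈ s, ω i = f i} :=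
  fun ω ω' hh hA i hi => by rw [← hh i (by simpa using hi)]; exact hA i hi

/-- sum over values of a countable valued function -/
lemma cond_le {Ω α : Type*} [MeasurableSpace Ω] [Countable α] (P : Measure Ω) (f : Ω → α)
    (W : Set Ω) (U : Set Ω) (c : ENNReal)
    (hf : ∀ a, MeasurableSet {ω | f ω = a}) (hU : MeasurableSet U)
    (h : ∀ a, P ({ω | f ω = a} ∩ W) ≤ c * P ({ω | f ω = a} ∩ U)) :
    P W ≤ c * P U := by
  have e : W = ⋃ a, ({ω | f ω = a} ∩ W) := by ext; simp
  have e' : U = ⋃ a, ({ω | f ω = a} ∩ U) := by ext; simp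
  calc P W = P (⋃ a, ({ω | f ω = a} ∩ W)) := by rw [← e]
    _ ≤ ∑' a, P ({ω | f ω = a} ∩ W) := measure_iUnion_le _
    _ ≤ ∑' a, c * P ({ω | f ω = a} ∩ U) := ENNReal.tsum_le_tsum h
    _ = c * ∑' a, P ({ω | f ω = a} ∩ U) := ENNReal.tsum_mul_left
    _ = c * P (⋃ a, ({ω | f ω = a} ∩ U)) := by
        rw [measure_iUnion]
        · intro a b hab
          apply Set.disjoint_left.2
          rintro ω ⟨h1, _⟩ ⟨h2, _⟩
          exact hab (h1.symm.trans h2)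
        · exact fun a => (hf a).inter hU
    _ = c * P U := by rw [← e']

lemma cond_le_real {Ω α : Type*} [MeasurableSpace Ω] [Countable α] (P : Measure Ω)
    [IsProbabilityMeasure P] (f : Ω → α)
    (W : Set Ω) (U : Set Ω) (c : ℝ) (hc : 0 ≤ c)
    (hf : ∀ a, MeasurableSet {ω | f ω = a}) (hU : MeasurableSet U)
    (h : ∀ a, P.real ({ω | f ω = a} ∩ W) ≤ c * P.real ({ω | f ω = a} ∩ U)) :
    P.real W ≤ c * P.real U := by
  have := cond_le P f W U (ENNReal.ofReal c) hf hU (fun a => by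
    have := h a
    rw [measureReal_def, measureReal_def] at this
    rw [← ENNReal.ofReal_toReal (measure_ne_top P ({ω | f ω = a} ∩ W)),
      ← ENNReal.ofReal_toReal (measure_ne_top P ({ω | f ω = a} ∩ U)), ← ENNReal.ofReal_mul hc]
    exact ENNReal.ofReal_le_ofReal this)
  rw [measureReal_def, measureReal_def, ← ENNReal.toReal_ofReal hc, ← ENNReal.toReal_mul]
  exact ENNReal.toReal_mono (ENNReal.mul_ne_top ENNReal.ofReal_ne_top (measure_ne_top _ _)) this

/-- disjoint trials -/
lemma trials (r : ι → unitInterval) {κ : Type*} (I : Finset κ) (Q : κ → Finset ι) (a : ℝ)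
    (ha : 0 ≤ a) (ha1 : a ≤ 1)
    (hr : ∀ u ∈ I, ∀ i ∈ Q u, a ≤ r i) (M : ℕ) (hM : ∀ u ∈ I, (Q u).card ≤ M)
    (hdis : ∀ u ∈ I, ∀ v ∈ I, u ≠ v → Disjoint (Q u) (Q v)) :
    (PM r).real {ω | ∀ u ∈ I, ¬ ∀ i ∈ Q u, ω i = true} ≤ (1 - a ^ M) ^ I.card := by
  classical
  induction I using Finset.induction_on with
  | empty => simp
  | insert u I hu ih =>
    have hih := ih (fun v hv => hr v (Finset.mem_insert_of_mem hv))
      (fun v hv => hM v (Finset.mem_insert_of_mem hv))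
      (fun v hv w hw => hdis v (Finset.mem_insert_of_mem hv) w (Finset.mem_insert_of_mem hw))
    have e : {ω : ι → Bool | ∀ v ∈ insert u I, ¬ ∀ i ∈ Q v, ω i = true} =
      {ω | ∀ i ∈ Q u, ω i = true}ᶜ ∩ {ω | ∀ v ∈ I, ¬ ∀ i ∈ Q v, ω i = true} := by
      ext ω
      simp only [Finset.mem_insert, forall_eq_or_imp, Set.mem_ofPred_eq, Set.mem_inter_iff,
        Set.mem_compl_iff]
    have d1 : Dep (Q u : Set ι) {ω | ∀ i ∈ Q u, ω i = true}ᶜ := (dep_cyl (Q u) (fun _ => true)).compl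
    have d2 : Dep ((I.biUnion Q : Finset ι) : Set ι)
        {ω | ∀ v ∈ I, ¬ ∀ i ∈ Q v, ω i = true} := by
      intro ω ω' hh hA v hv hc
      refine hA v hv (fun i hi => ?_)
      rw [hh i (by simp only [Finset.coe_biUnion, Set.mem_iUnion]; exact ⟨v, hv, hi⟩)]
      exact hc i hi
    have hdisj : Disjoint (Q u : Set ι) ((I.biUnion Q : Finset ι) : Set ι) := by
      rw [Finset.disjoint_coe, Finset.disjoint_biUnion_right]
      intro v hv
      exact hdis u (Finset.mem_insert_self _ _) v (Finset.mem_insert_of_mem hv)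
        (fun h => hu (h ▸ hv))
    rw [e, indep_real r (d1.meas (Finset.finite_toSet _)) (d2.meas (Finset.finite_toSet _)) d1 d2 hdisj,
      Finset.card_insert_of_notMem hu, pow_succ, mul_comm]
    have h1 : (PM r).real {ω | ∀ i ∈ Q u, ω i = true}ᶜ ≤ 1 - a ^ M := by
      rw [probReal_compl_eq_one_sub ((dep_cyl (Q u) (fun _ => true)).meas (Finset.finite_toSet _)),
        PM_open]
      have : a ^ M ≤ ∏ i ∈ Q u, (r i : ℝ) := by
        calc a ^ M ≤ a ^ (Q u).card :=
              pow_le_pow_of_le_one ha ha1 (hM u (Finset.mem_insert_self _ _))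
          _ = ∏ i ∈ Q u, a := by simp
          _ ≤ _ := Finset.prod_le_prod (fun _ _ => ha) (hr u (Finset.mem_insert_self _ _))
      linarith
    have h2 : (0:ℝ) ≤ 1 - a ^ M := by linarith [pow_le_one₀ (n := M) ha ha1]
    exact mul_le_mul hih h1 measureReal_nonneg (pow_nonneg h2 _)

def Decr (A : Set (ι → Bool)) : Prop :=
  ∀ ω ω' : ι → Bool, (∀ i, ω' i = true → ω i = true) → ω ∈ A → ω' ∈ A

lemma split_real [DecidableEq ι] (r : ι → unitInterval) (i : ι) (J : Finset ι) (A : Set (ι → Bool))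
    (hA : Dep (insert i J : Finset ι) A) (hi : i ∉ J) :
    (PM r).real A = r i * (PM r).real {ω | Function.update ω i true ∈ A}
      + (1 - r i) * (PM r).real {ω | Function.update ω i false ∈ A} := by
  have key : ∀ b : Bool, Dep (J : Set ι) {ω | Function.update ω i b ∈ A} := by
    intro b ω ω' hh hω
    refine hA _ _ (fun j hj => ?_) hω
    by_cases hji : j = i
    · subst hji; simp
    · have : j ∈ J := by
        simp only [Finset.coe_insert, Set.mem_insert_iff, Finset.mem_coe] at hj
        tauto
      simp [Function.update_of_ne hji, hh j (by simpa using this)]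
  have hAm : MeasurableSet A := hA.meas (Finset.finite_toSet _)
  have hd : Disjoint (J : Set ι) (({i} : Finset ι) : Set ι) := by
    simpa using hi
  have k2 : ∀ b : Bool, (PM r).real (A ∩ {ω | ∀ j ∈ ({i} : Finset ι), ω j = b}) =
      (PM r).real {ω | Function.update ω i b ∈ A} *
      (PM r).real {ω | ∀ j ∈ ({i} : Finset ι), ω j = b} := by
    intro b
    rw [← indep_real r ((key b).meas (Finset.finite_toSet _))
      ((dep_cyl {i} (fun _ => b)).meas (Finset.finite_toSet _)) (key b) (dep_cyl {i} (fun _ => b)) hd]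
    congr 1
    ext ω
    simp only [Set.mem_inter_iff, Set.mem_ofPred_eq, Finset.mem_singleton, forall_eq]
    constructor
    · rintro ⟨h1, h2⟩
      refine ⟨?_, h2⟩
      rw [← h2, Function.update_eq_self]; exact h1
    · rintro ⟨h1, h2⟩
      refine ⟨?_, h2⟩
      rw [← h2, Function.update_eq_self] at h1; exact h1
  have h1 := k2 true
  have h0 := k2 false
  rw [PM_open] at h1
  rw [PM_closed] at h0
  simp only [Finset.prod_singleton] at h1 h0
  have hm : MeasurableSet {ω : ι → Bool | ∀ j ∈ ({i} : Finset ι), ω j = true} :=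
    (dep_cyl {i} (fun _ => true)).meas (Finset.finite_toSet _)
  rw [← measureReal_inter_add_sdiff (s := A) hm, h1]
  have : A \ {ω : ι → Bool | ∀ j ∈ ({i} : Finset ι), ω j = true} =
     A ∩ {ω | ∀ j ∈ ({i} : Finset ι), ω j = false} := by
    ext ω; simp
  rw [this, h0]; ring

lemma harris (r : ι → unitInterval) (J : Finset ι) : ∀ (A B : Set (ι → Bool)),
    Dep (J : Set ι) A → Dep (J : Set ι) B → Decr A → Decr B →
    (PM r).real A * (PM r).real B ≤ (PM r).real (A ∩ B) := by
  classical
  induction J using Finset.induction_on with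
  | empty =>
    intro A B hA hB _ _
    have := indep_real r (hA.meas (Finset.finite_toSet _)) (hB.meas (Finset.finite_toSet _)) hA hB
      (by simp)
    rw [this]
  | insert i J hi ih =>
    intro A B hA hB dA dB
    have key : ∀ (A : Set (ι → Bool)), Dep ((insert i J : Finset ι) : Set ι) A → ∀ b : Bool,
        Dep (J : Set ι) {ω | Function.update ω i b ∈ A} := by
      intro A hA b ω ω' hh hω
      refine hA _ _ (fun j hj => ?_) hω
      by_cases hji : j = i
      · subst hji; simp
      · have : j ∈ J := by
          simp only [Finset.coe_insert, Set.mem_insert_iff, Finset.mem_coe] at hj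
          tauto
        simp [Function.update_of_ne hji, hh j (by simpa using this)]
    have kd : ∀ (A : Set (ι → Bool)), Decr A → ∀ b : Bool,
        Decr {ω | Function.update ω i b ∈ A} := by
      intro A dA b ω ω' hh hω
      refine dA _ _ (fun j => ?_) hω
      by_cases hji : j = i
      · subst hji; simp
      · simp [Function.update_of_ne hji]; exact hh j
    have km : ∀ (A : Set (ι → Bool)), Decr A →
       (PM r).real {ω | Function.update ω i true ∈ A} ≤
       (PM r).real {ω | Function.update ω i false ∈ A} := by
      intro A dA
      refine measureReal_mono ?_
      intro ω hω
      refine dA _ _ (fun j => ?_) hω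
      by_cases hji : j = i
      · subst hji; simp
      · simp [Function.update_of_ne hji]
    rw [split_real r i J A hA hi, split_real r i J B hB hi, split_real r i J (A ∩ B) (hA.inter hB) hi]
    have i1 := ih _ _ (key A hA true) (key B hB true) (kd A dA true) (kd B dB true)
    have i0 := ih _ _ (key A hA false) (key B hB false) (kd A dA false) (kd B dB false)
    have e : ∀ b, {ω : ι → Bool | Function.update ω i b ∈ A ∩ B} =
      {ω | Function.update ω i b ∈ A} ∩ {ω | Function.update ω i b ∈ B} := fun b => rfl
    rw [e, e]
    have m1 := km A dA
    have m2 := km B dB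
    have r0 := (r i).2.1
    have r1 := (r i).2.2
    have hmm := mul_nonneg (sub_nonneg.2 m1) (sub_nonneg.2 m2)
    have hrr : 0 ≤ (r i : ℝ) * (1 - r i) := mul_nonneg r0 (by linarith)
    have h3 := mul_nonneg hrr hmm
    have h4 := mul_le_mul_of_nonneg_left i1 r0
    have h5 := mul_le_mul_of_nonneg_left i0 (sub_nonneg.2 r1)
    nlinarith

lemma harris_finset (r : ι → unitInterval) (J : Finset ι) {κ : Type*} (T : Finset κ)
    (A : κ → Set (ι → Bool)) (hA : ∀ k, Dep (J : Set ι) (A k)) (dA : ∀ k, Decr (A k)) :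
    ∏ k ∈ T, (PM r).real (A k) ≤ (PM r).real {ω | ∀ k ∈ T, ω ∈ A k} := by
  classical
  induction T using Finset.induction_on with
  | empty => simp
  | insert k T hk ih =>
    rw [Finset.prod_insert hk]
    have e : {ω | ∀ j ∈ insert k T, ω ∈ A j} = A k ∩ {ω | ∀ j ∈ T, ω ∈ A j} := by
      ext; simp
    rw [e]
    refine le_trans (mul_le_mul_of_nonneg_left ih measureReal_nonneg) ?_
    apply harris r J _ _ (hA k) _ (dA k)
    · exact fun ω ω' h hω j hj => dA j ω ω' h (hω j hj)
    · exact fun ω ω' h hω j hj => hA j ω ω' h (hω j hj)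

end L0

section L1
open Relation
variable {d : ℕ}

lemma rtg_mono {α : Type*} {r q : α → α → Prop} (h : ∀ a b, r a b → q a b) {a b : α}
    (hr : ReflTransGen r a b) : ReflTransGen q a b := by
  induction hr with
  | refl => exact ReflTransGen.refl
  | tail _ h2 ih => exact ih.tail (h _ _ h2)

lemma rtg_symm {α : Type*} {r : α → α → Prop} (h : ∀ a b, r a b → r b a) {a b : α}
    (hr : ReflTransGen r a b) : ReflTransGen r b a := by
  induction hr with
  | refl => exact ReflTransGen.refl
  | tail _ h2 ih => exact ReflTransGen.head (h _ _ h2) ih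

lemma rtg_lift {α β : Type*} {r : α → α → Prop} {q : β → β → Prop} (f : α → β)
    (h : ∀ a b, r a b → q (f a) (f b)) {a b : α}
    (hr : ReflTransGen r a b) : ReflTransGen q (f a) (f b) := by
  induction hr with
  | refl => exact ReflTransGen.refl
  | tail _ h2 ih => exact ih.tail (h _ _ h2)

lemma adj_symm {x y : Vertex d} (h : adj x y) : adj y x := by
  unfold adj at *
  rw [← h]
  exact Finset.sum_congr rfl fun i _ => by omega

lemma adj_ne {x y : Vertex d} (h : adj x y) : x ≠ y := by
  rintro rfl
  simp [adj] at h

lemma adj_le {x y : Vertex d} (h : adj x y) (i : Fin d) : |x i - y i| ≤ 1 := by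
  have : (x i - y i).natAbs ≤ 1 := by
    rw [← h]
    exact Finset.single_le_sum (f := fun i => (x i - y i).natAbs) (fun _ _ => Nat.zero_le _)
      (Finset.mem_univ i)
  rw [Int.abs_eq_natAbs]; omega

lemma adj_update (x : Vertex d) (i : Fin d) (a : ℤ) (h : (x i - a).natAbs = 1) :
    adj x (Function.update x i a) := by
  unfold adj
  rw [Finset.sum_eq_single i]
  · simpa using h
  · intro j _ hj; simp [Function.update_of_ne hj]
  · simp

lemma step_iff {ω : Config d} {x y : Vertex d} :
    step ω x y ↔ ∃ e : Edge d, e.1 = s(x, y) ∧ ω e = true := by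
  constructor
  · rintro ⟨h, h'⟩; exact ⟨_, rfl, h'⟩
  · rintro ⟨⟨e, he⟩, h1, h2⟩
    simp only at h1
    subst h1
    obtain ⟨a, b, hab, he'⟩ := he
    have : adj x y := by
      rcases Sym2.eq_iff.1 he' with ⟨rfl, rfl⟩ | ⟨rfl, rfl⟩
      · exact hab
      · exact adj_symm hab
    exact ⟨this, h2⟩

lemma step_symm {ω : Config d} {x y : Vertex d} (h : step ω x y) : step ω y x := by
  rw [step_iff] at *
  rwa [Sym2.eq_swap]

lemma step_adj {ω : Config d} {x y : Vertex d} (h : step ω x y) : adj x y := h.1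

/-- transfer of a step between configurations agreeing on the edge -/
lemma step_congr {ω ω' : Config d} {x y : Vertex d}
    (h : ∀ e : Edge d, e.1 = s(x, y) → ω e = ω' e) (hs : step ω x y) : step ω' x y := by
  rw [step_iff] at *
  obtain ⟨e, he, h1⟩ := hs
  exact ⟨e, he, by rw [← h e he]; exact h1⟩

def edge (x y : Vertex d) (h : adj x y) : Edge d := ⟨s(x, y), x, y, h, rfl⟩

lemma edge_exists (e : Edge d) : ∃ x y, ∃ h : adj x y, e = edge x y h := by
  obtain ⟨e, x, y, h, rfl⟩ := e
  exact ⟨x, y, h, rfl⟩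

instance : Countable (Edge d) := by
  have : Countable (Sym2 (Vertex d)) := Quotient.countable
  infer_instance

noncomputable def bx (x : Vertex d) (r : ℕ) : Finset (Vertex d) :=
  Finset.Icc (fun i => x i - r) (fun i => x i + r)

lemma mem_bx {x y : Vertex d} {r : ℕ} : y ∈ bx x r ↔ ∀ i, |y i - x i| ≤ r := by
  simp only [bx, Finset.mem_Icc, Pi.le_def, ← forall_and, abs_le]
  constructor <;> intro h i <;> have := h i <;> constructor <;> linarith [this.1, this.2]

lemma card_bx (x : Vertex d) (r : ℕ) : (bx x r).card = (2 * r + 1) ^ d := by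
  rw [bx, Pi.card_Icc]
  simp only [Int.card_Icc]
  have : ∀ i, (x i + r + 1 - (x i - r)).toNat = 2 * r + 1 := fun i => by omega
  simp [this]

lemma self_mem_bx (x : Vertex d) (r : ℕ) : x ∈ bx x r := by
  rw [mem_bx]; intro i; simp

lemma bx_trans {x y z : Vertex d} {r r' : ℕ} (h : y ∈ bx x r) (h' : z ∈ bx y r') :
    z ∈ bx x (r + r') := by
  rw [mem_bx] at *
  intro i
  have := h i; have := h' i
  rw [abs_le] at *
  push_cast
  constructor <;> linarith [(h i), (abs_le.1 (h i)).1, (abs_le.1 (h i)).2]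

lemma bx_symm {x y : Vertex d} {r : ℕ} (h : y ∈ bx x r) : x ∈ bx y r := by
  rw [mem_bx] at *
  intro i; rw [abs_sub_comm]; exact h i

lemma bx_mono {x : Vertex d} {r r' : ℕ} (h : r ≤ r') : bx x r ⊆ bx x r' := by
  intro y hy
  rw [mem_bx] at *
  intro i; exact (hy i).trans (by exact_mod_cast h)

lemma adj_bx {x y : Vertex d} (h : adj x y) : y ∈ bx x 1 := by
  rw [mem_bx]; intro i; rw [abs_sub_comm]; simpa using adj_le h i

/-- edges with both endpoints in `S` -/
def E2 (S : Set (Vertex d)) : Set (Edge d) := {e | ∀ v ∈ e.1, v ∈ S}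
/-- edges touching `S` -/
def ET (S : Set (Vertex d)) : Set (Edge d) := {e | ∃ v ∈ e.1, v ∈ S}

lemma ET_fin (S : Finset (Vertex d)) : (ET (S : Set (Vertex d))).Finite ∧
    (ET (S : Set (Vertex d))).ncard ≤ S.card * 3 ^ d := by
  classical
  have key : Subtype.val '' (ET (S : Set (Vertex d))) ⊆
     ((S.biUnion fun v => (bx v 1).image fun u => s(v, u) : Finset (Sym2 (Vertex d))) : Set _) := by
    rintro _ ⟨e, ⟨v, hv, hvS⟩, rfl⟩
    obtain ⟨x, y, h, rfl⟩ := edge_exists e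
    simp only [edge, Sym2.mem_iff] at hv
    simp only [Finset.coe_biUnion, Set.mem_iUnion, Finset.coe_image, Set.mem_image, edge]
    rcases hv with rfl | rfl
    · exact ⟨v, hvS, y, adj_bx h, rfl⟩
    · exact ⟨v, hvS, x, adj_bx (adj_symm h), Sym2.eq_swap⟩
  have hfin := (Finset.finite_toSet _).subset key
  refine ⟨Set.Finite.of_finite_image hfin Subtype.val_injective.injOn, ?_⟩
  rw [← Set.ncard_image_of_injective _ Subtype.val_injective]
  refine (Set.ncard_le_ncard key (Finset.finite_toSet _)).trans ?_
  rw [Set.ncard_coe_finset]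
  refine Finset.card_biUnion_le_card_mul _ _ _ (fun v _ => ?_)
  refine Finset.card_image_le.trans ?_
  rw [card_bx]

lemma E2_sub_ET (S : Set (Vertex d)) : E2 S ⊆ ET S := by
  intro e he
  obtain ⟨x, y, h, rfl⟩ := edge_exists e
  exact ⟨x, by simp [edge], he x (by simp [edge])⟩

lemma E2_fin (S : Finset (Vertex d)) : (E2 (S : Set (Vertex d))).Finite :=
  (ET_fin S).1.subset (E2_sub_ET _)

lemma E2_mono {S T : Set (Vertex d)} (h : S ⊆ T) : E2 S ⊆ E2 T := fun e he v hv => h (he v hv)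
lemma ET_mono {S T : Set (Vertex d)} (h : S ⊆ T) : ET S ⊆ ET T :=
  fun e ⟨v, hv, hS⟩ => ⟨v, hv, h hS⟩

lemma mem_E2 {S : Set (Vertex d)} {e : Edge d} {x y : Vertex d} (he : e.1 = s(x, y)) :
    e ∈ E2 S ↔ x ∈ S ∧ y ∈ S := by
  simp only [E2, Set.mem_ofPred_eq, he, Sym2.mem_iff]
  constructor
  · intro h; exact ⟨h x (Or.inl rfl), h y (Or.inr rfl)⟩
  · rintro ⟨h1, h2⟩ v (rfl | rfl) <;> assumption

lemma mem_ET {S : Set (Vertex d)} {e : Edge d} {x y : Vertex d} (he : e.1 = s(x, y)) :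
    e ∈ ET S ↔ x ∈ S ∨ y ∈ S := by
  simp only [ET, Set.mem_ofPred_eq, he, Sym2.mem_iff]
  constructor
  · rintro ⟨v, rfl | rfl, h⟩
    · exact Or.inl h
    · exact Or.inr h
  · rintro (h | h)
    · exact ⟨x, Or.inl rfl, h⟩
    · exact ⟨y, Or.inr rfl, h⟩

noncomputable def e2 (S : Finset (Vertex d)) : Finset (Edge d) := (E2_fin S).toFinset
noncomputable def et (S : Finset (Vertex d)) : Finset (Edge d) := (ET_fin S).1.toFinset

lemma coe_e2 (S : Finset (Vertex d)) : (e2 S : Set (Edge d)) = E2 (S : Set (Vertex d)) := by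
  simp [e2]
lemma coe_et (S : Finset (Vertex d)) : (et S : Set (Edge d)) = ET (S : Set (Vertex d)) := by
  simp [et]

lemma card_et (S : Finset (Vertex d)) : (et S).card ≤ S.card * 3 ^ d := by
  rw [← Set.ncard_coe_finset, coe_et]; exact (ET_fin S).2
lemma card_e2 (S : Finset (Vertex d)) : (e2 S).card ≤ S.card * 3 ^ d := by
  refine le_trans (Finset.card_le_card ?_) (card_et S)
  intro e he
  rw [← Finset.mem_coe, coe_et]; rw [← Finset.mem_coe, coe_e2] at he
  exact E2_sub_ET _ he

/-- connection inside `B` -/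
def CB (ω : Config d) (B : Set (Vertex d)) : Vertex d → Vertex d → Prop :=
  ReflTransGen (fun u v => u ∈ B ∧ v ∈ B ∧ step ω u v)

lemma CB.symm {ω : Config d} {B : Set (Vertex d)} {x y : Vertex d} (h : CB ω B x y) :
    CB ω B y x := by
  refine rtg_symm ?_ h
  exact fun u v h => ⟨h.2.1, h.1, step_symm h.2.2⟩

lemma CB.mono {ω ω' : Config d} {B B' : Set (Vertex d)} {x y : Vertex d} (h : CB ω B x y)
    (hB : B ⊆ B') (hω : ∀ e, e ∈ E2 B → ω e = true → ω' e = true) : CB ω' B' x y := by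
  refine rtg_mono ?_ h
  rintro u v ⟨h1, h2, h3⟩
  refine ⟨hB h1, hB h2, ?_⟩
  rw [step_iff] at *
  obtain ⟨e, he, ho⟩ := h3
  exact ⟨e, he, hω e ((mem_E2 he).2 ⟨h1, h2⟩) ho⟩

lemma CB.congr {ω ω' : Config d} {B : Set (Vertex d)} {x y : Vertex d} (h : CB ω B x y)
    (hω : ∀ e, e ∈ E2 B → ω e = ω' e) : CB ω' B x y :=
  h.mono le_rfl (fun e he h => by rw [← hω e he]; exact h)

lemma CB.conn {ω : Config d} {B : Set (Vertex d)} {x y : Vertex d} (h : CB ω B x y) :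
    Conn ω x y := rtg_mono (fun u v h => h.2.2) h

lemma CB.mem {ω : Config d} {B : Set (Vertex d)} {x y : Vertex d} (h : CB ω B x y) (hx : x ∈ B) :
    y ∈ B := by
  induction h with
  | refl => exact hx
  | tail _ h _ => exact h.2.1

lemma CB_univ {ω : Config d} {x y : Vertex d} : CB ω Set.univ x y ↔ Conn ω x y := by
  unfold CB Conn; simp

lemma Conn.symm {ω : Config d} {x y : Vertex d} (h : Conn ω x y) : Conn ω y x := by
  rw [← CB_univ] at *; exact CB.symm h

lemma meas_rtg {Ω V : Type*} [MeasurableSpace Ω] [Countable V] (rel : Ω → V → V → Prop)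
    (h : ∀ u v, MeasurableSet {ω | rel ω u v}) (a b : V) :
    MeasurableSet {ω | ReflTransGen (rel ω) a b} := by
  let S : ℕ → V → Set Ω := fun n => Nat.rec (fun b => {_ω | a = b})
    (fun _ Sn b => ⋃ c, Sn c ∩ {ω | rel ω c b}) n
  have hS : ∀ n b, MeasurableSet (S n b) := by
    intro n
    induction n with
    | zero => intro b; exact MeasurableSet.const _
    | succ n ih => intro b; exact MeasurableSet.iUnion fun c => (ih c).inter (h c b)
  have e : {ω | ReflTransGen (rel ω) a b} = ⋃ n, S n b := by
    ext ω
    simp only [Set.mem_ofPred_eq, Set.mem_iUnion]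
    constructor
    · intro hr
      induction hr with
      | refl => exact ⟨0, rfl⟩
      | tail _ h2 ih =>
        obtain ⟨n, hn⟩ := ih
        exact ⟨n + 1, Set.mem_iUnion.2 ⟨_, hn, h2⟩⟩
    · rintro ⟨n, hn⟩
      induction n generalizing b with
      | zero => cases (show a = b from hn); exact ReflTransGen.refl
      | succ n ih =>
        obtain ⟨c, h1, h2⟩ := Set.mem_iUnion.1 hn
        exact (ih c h1).tail h2
  rw [e]
  exact MeasurableSet.iUnion fun n => hS n b

lemma meas_step (u v : Vertex d) : MeasurableSet {ω : Config d | step ω u v} := by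
  have : {ω : Config d | step ω u v} = ⋃ e : Edge d, {ω | e.1 = s(u,v) ∧ ω e = true} := by
    ext ω; simp only [Set.mem_ofPred_eq, Set.mem_iUnion]; exact step_iff
  rw [this]
  refine MeasurableSet.iUnion fun e => (MeasurableSet.const _).inter ?_
  exact measurableSet_eq_fun (measurable_pi_apply e) measurable_const

lemma meas_CB (B : Set (Vertex d)) (x y : Vertex d) :
    MeasurableSet {ω : Config d | CB ω B x y} := by
  refine meas_rtg _ (fun u v => ?_) x y
  exact (MeasurableSet.const _).inter ((MeasurableSet.const _).inter (meas_step u v))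

lemma meas_conn (x y : Vertex d) : MeasurableSet {ω : Config d | Conn ω x y} :=
  meas_rtg _ meas_step x y

/-- boxes are connected -/
lemma bx_conn (x : Vertex d) (r : ℕ) (z : Vertex d) (hz : z ∈ bx x r) :
    ReflTransGen (fun u v => u ∈ bx x r ∧ v ∈ bx x r ∧ adj u v) x z := by
  generalize hN : ∑ i, (z i - x i).natAbs = N
  induction N using Nat.strong_induction_on generalizing z with
  | _ N ih =>
    by_cases hzx : z = x
    · subst hzx; exact ReflTransGen.refl
    · have hex : ∃ i, z i ≠ x i := by
        by_contra hcon; push Not at hcon; exact hzx (funext hcon)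
      obtain ⟨i, hi⟩ := hex
      let a : ℤ := if z i < x i then z i + 1 else z i - 1
      have ha1 : (z i - a).natAbs = 1 := by simp only [a]; split_ifs <;> omega
      have ha2 : (a - x i).natAbs < (z i - x i).natAbs := by simp only [a]; split_ifs <;> omega
      have hz' : Function.update z i a ∈ bx x r := by
        rw [mem_bx] at *
        intro j
        by_cases hj : j = i
        · subst hj; have := hz j; simp only [Function.update_self]
          rw [Int.abs_eq_natAbs] at *; omega
        · rw [Function.update_of_ne hj]; exact hz j
      have hlt : ∑ j, (Function.update z i a j - x j).natAbs < N := by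
        rw [← hN]
        apply Finset.sum_lt_sum
        · intro j _
          by_cases hj : j = i
          · subst hj; simp only [Function.update_self]; omega
          · rw [Function.update_of_ne hj]
        · exact ⟨i, Finset.mem_univ _, by simpa using ha2⟩
      exact (ih _ hlt _ hz' rfl).tail ⟨hz', hz, adj_symm (adj_update z i a ha1)⟩

lemma bx_open {ω : Config d} {x : Vertex d} {r : ℕ} (h : ∀ e ∈ e2 (bx x r), ω e = true)
    {z : Vertex d} (hz : z ∈ bx x r) : CB ω (bx x r : Set (Vertex d)) x z := by
  refine rtg_mono ?_ (bx_conn x r z hz)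
  rintro u v ⟨h1, h2, h3⟩
  refine ⟨h1, h2, h3, h _ ?_⟩
  rw [← Finset.mem_coe, coe_e2]
  exact (mem_E2 rfl).2 ⟨h1, h2⟩

lemma separate (r : ℕ) (X : Finset (Vertex d)) : ∃ X' ⊆ X,
    (∀ u ∈ X', ∀ v ∈ X', u ≠ v → v ∉ bx u r) ∧ X.card ≤ X'.card * (2 * r + 1) ^ d := by
  classical
  induction X using Finset.strongInduction with
  | _ X ih =>
    rcases X.eq_empty_or_nonempty with rfl | ⟨u, hu⟩
    · exact ⟨∅, by simp⟩
    · obtain ⟨X', h1, h2, h3⟩ := ih (X \ bx u r) (by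
        refine Finset.ssubset_iff_subset_ne.2 ⟨Finset.sdiff_subset, fun h => ?_⟩
        rw [← h] at hu
        exact (Finset.mem_sdiff.1 hu).2 (self_mem_bx _ _))
      have hout : ∀ v ∈ X', v ∉ bx u r := fun v hv => (Finset.mem_sdiff.1 (h1 hv)).2
      have huX : u ∉ X' := fun h => hout u h (self_mem_bx _ _)
      refine ⟨insert u X', ?_, ?_, ?_⟩
      · exact Finset.insert_subset hu (h1.trans Finset.sdiff_subset)
      · intro a ha b hb hab
        rw [Finset.mem_insert] at ha hb
        rcases ha with rfl | ha <;> rcases hb with rfl | hb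
        · exact absurd rfl hab
        · exact hout b hb
        · exact fun h => hout a ha (bx_symm h)
        · exact h2 a ha b hb hab
      · rw [Finset.card_insert_of_notMem huX, add_mul, one_mul]
        have := Finset.card_le_card_sdiff_add_card (s := X) (t := bx u r)
        rw [card_bx] at this
        omega

/-! automorphisms -/

def IsAut (φ : Vertex d ≃ Vertex d) : Prop := ∀ x y, adj (φ x) (φ y) ↔ adj x y

lemma IsAut.symm {φ : Vertex d ≃ Vertex d} (h : IsAut φ) : IsAut φ.symm := by
  intro x y
  rw [← h]; simp

def emap (φ : Vertex d ≃ Vertex d) (h : IsAut φ) (e : Edge d) : Edge d :=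
  ⟨e.1.map φ, by
    obtain ⟨e, x, y, hxy, rfl⟩ := e
    exact ⟨φ x, φ y, (h x y).2 hxy, rfl⟩⟩

lemma emap_inj (φ : Vertex d ≃ Vertex d) (h : IsAut φ) : Function.Injective (emap φ h) := by
  intro e e' hee
  apply Subtype.ext
  exact Sym2.map.injective φ.injective (congrArg Subtype.val hee)

def pull (φ : Vertex d ≃ Vertex d) (h : IsAut φ) (ω : Config d) : Config d :=
  fun e => ω (emap φ h e)

lemma step_pull {φ : Vertex d ≃ Vertex d} {h : IsAut φ} {ω : Config d} {x y : Vertex d} :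
    step (pull φ h ω) x y ↔ step ω (φ x) (φ y) := by
  constructor
  · rintro ⟨h1, h2⟩; exact ⟨(h x y).2 h1, h2⟩
  · rintro ⟨h1, h2⟩; exact ⟨(h x y).1 h1, h2⟩

lemma CB_pull {φ : Vertex d ≃ Vertex d} {h : IsAut φ} {ω : Config d} {B : Set (Vertex d)}
    {x y : Vertex d} (hc : CB (pull φ h ω) (φ ⁻¹' B) x y) : CB ω B (φ x) (φ y) := by
  refine rtg_lift φ ?_ hc
  rintro a b ⟨h1, h2, h3⟩
  exact ⟨h1, h2, step_pull.1 h3⟩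

def affEquiv (x0 : Vertex d) (π : Equiv.Perm (Fin d)) (s : Fin d → ℤˣ) : Vertex d ≃ Vertex d where
  toFun y := fun i => x0 i + (s i : ℤ) * y (π i)
  invFun z := fun j => (s (π.symm j) : ℤ) * (z (π.symm j) - x0 (π.symm j))
  left_inv y := by
    funext j
    rcases Int.units_eq_one_or (s (π.symm j)) with h | h <;> simp [h]
  right_inv z := by
    funext j
    rcases Int.units_eq_one_or (s j) with h | h <;> simp [h]

lemma affEquiv_apply (x0 : Vertex d) (π : Equiv.Perm (Fin d)) (s : Fin d → ℤˣ) (y : Vertex d)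
    (i : Fin d) : affEquiv x0 π s y i = x0 i + (s i : ℤ) * y (π i) := rfl

lemma aff_abs (x0 : Vertex d) (π : Equiv.Perm (Fin d)) (s : Fin d → ℤˣ) (y z : Vertex d)
    (i : Fin d) : |affEquiv x0 π s y i - affEquiv x0 π s z i| = |y (π i) - z (π i)| := by
  rw [affEquiv_apply, affEquiv_apply]
  rcases Int.units_eq_one_or (s i) with h | h
  · simp [h]
  · simp only [h, Units.val_neg, Units.val_one]
    rw [← abs_neg]; congr 1; ring

lemma affEquiv_aut (x0 : Vertex d) (π : Equiv.Perm (Fin d)) (s : Fin d → ℤˣ) :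
    IsAut (affEquiv x0 π s) := by
  intro x y
  unfold adj
  have : ∀ i, (affEquiv x0 π s x i - affEquiv x0 π s y i).natAbs = (x (π i) - y (π i)).natAbs := by
    intro i
    have := aff_abs x0 π s x y i
    rw [Int.abs_eq_natAbs, Int.abs_eq_natAbs] at this
    exact_mod_cast this
  simp only [this]
  rw [Equiv.sum_comp π (fun i => (x i - y i).natAbs)]

lemma aff_bx (x0 : Vertex d) (π : Equiv.Perm (Fin d)) (s : Fin d → ℤˣ) (y z : Vertex d) (r : ℕ) :
    affEquiv x0 π s z ∈ bx (affEquiv x0 π s y) r ↔ z ∈ bx y r := by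
  rw [mem_bx, mem_bx]
  simp only [aff_abs]
  constructor
  · intro h i; have := h (π.symm i); simpa using this
  · intro h i; exact h _

end L1

section L2
open Relation
variable {d : ℕ}

lemma rtg_exit {α : Type*} {R : α → α → Prop} {B : Set α} {a z : α} (h : ReflTransGen R a z)
    (ha : a ∈ B) (hz : z ∉ B) : ∃ u v, ReflTransGen (fun x y => x ∈ B ∧ y ∈ B ∧ R x y) a u ∧
      u ∈ B ∧ v ∉ B ∧ R u v := by
  have key : ∀ z, ReflTransGen R a z → (ReflTransGen (fun x y => x ∈ B ∧ y ∈ B ∧ R x y) a z ∧ z ∈ B) ∨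
     ∃ u v, ReflTransGen (fun x y => x ∈ B ∧ y ∈ B ∧ R x y) a u ∧ u ∈ B ∧ v ∉ B ∧ R u v := by
    intro z hz
    induction hz with
    | refl => exact Or.inl ⟨ReflTransGen.refl, ha⟩
    | @tail b c _ h2 ih =>
      rcases ih with ⟨h3, h4⟩ | ih
      · by_cases hc : c ∈ B
        · exact Or.inl ⟨h3.tail ⟨h4, hc, h2⟩, hc⟩
        · exact Or.inr ⟨b, c, h3, h4, hc, h2⟩
      · exact Or.inr ih
  rcases key z h with h | h
  · exact absurd h.2 hz
  · exact h

lemma rtg_last {α : Type*} {R : α → α → Prop} {S : Set α} {a z : α} (h : ReflTransGen R a z)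
    (ha : a ∈ S) (hz : z ∉ S) : ∃ u v, u ∈ S ∧ v ∉ S ∧ R u v ∧
      ReflTransGen (fun x y => x ∉ S ∧ y ∉ S ∧ R x y) v z := by
  induction h with
  | refl => exact absurd ha hz
  | @tail b c _ h2 ih =>
    by_cases hb : b ∈ S
    · exact ⟨b, c, hb, hz, h2, ReflTransGen.refl⟩
    · obtain ⟨u, v, h3, h4, h5, h6⟩ := ih hb
      exact ⟨u, v, h3, h4, h5, h6.tail ⟨hb, hz, h2⟩⟩

lemma meas_infinite {Ω V : Type*} [MeasurableSpace Ω] [Countable V] (s : Ω → Set V)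
    (h : ∀ v, MeasurableSet {ω | v ∈ s ω}) : MeasurableSet {ω | (s ω).Infinite} := by
  have e : {ω | (s ω).Infinite} = ⋂ S : Finset V, ⋃ v : V, ({_ω | v ∉ S} ∩ {ω | v ∈ s ω}) := by
    ext ω
    simp only [Set.mem_ofPred_eq, Set.mem_iInter, Set.mem_iUnion, Set.mem_inter_iff]
    constructor
    · intro hinf S
      obtain ⟨v, hv, hS⟩ := hinf.exists_notMem_finset S
      exact ⟨v, hS, hv⟩
    · intro hh hfin
      obtain ⟨v, hv, hs⟩ := hh hfin.toFinset
      exact hv (by simpa using hs)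
  rw [e]
  exact MeasurableSet.iInter fun S => MeasurableSet.iUnion fun v =>
    (MeasurableSet.const _).inter (h v)

lemma meas_inf (x : Vertex d) : MeasurableSet {ω : Config d | (cluster ω x).Infinite} :=
  meas_infinite (fun ω => cluster ω x) (fun v => meas_conn x v)

/-- zero-one law -/
lemma zero_one {ι : Type*} (r : ι → unitInterval) (A : Set (ι → Bool)) (hA : MeasurableSet A)
    (hdep : ∀ J : Finset ι, Dep ((J : Set ι)ᶜ) A) (h0 : PM r A ≠ 0) : PM r A = 1 := by
  have key : (PM r A)⁻¹ • (PM r).restrict A = PM r := by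
    apply eq_PM
    intro s f
    have d1 := dep_cyl s f
    have hm := d1.meas (Finset.finite_toSet _)
    rw [Measure.smul_apply, Measure.restrict_apply hm,
      indep r hm hA d1 (hdep s) disjoint_compl_right, PM_cyl, smul_eq_mul, mul_comm, mul_assoc,
      ENNReal.mul_inv_cancel h0 (measure_ne_top _ _), mul_one]
  have h2 : ((PM r A)⁻¹ • (PM r).restrict A) A = PM r A := by rw [key]
  rw [Measure.smul_apply, Measure.restrict_apply hA, Set.inter_self, smul_eq_mul,
    ENNReal.inv_mul_cancel h0 (measure_ne_top _ _)] at h2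
  exact h2.symm

lemma inf_dep (J : Finset (Edge d)) :
    Dep ((J : Set (Edge d))ᶜ) {ω : Config d | ∃ x, (cluster ω x).Infinite} := by
  classical
  rintro ω ω' hh ⟨x, hx⟩
  let U : Set (Vertex d) := insert x (⋃ e ∈ J, {v | v ∈ e.1})
  have hU : U.Finite := by
    refine Set.Finite.insert _ (Set.Finite.biUnion (Finset.finite_toSet _) (fun e _ => ?_))
    obtain ⟨a, b, h, rfl⟩ := edge_exists e
    refine (Set.toFinite {a, b}).subset ?_
    intro v hv
    simpa [edge] using hv
  have hsub : cluster ω x ⊆ ⋃ u ∈ U, cluster ω' u := by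
    intro y hy
    change Conn ω x y at hy
    induction hy with
    | refl => exact Set.mem_biUnion (Set.mem_insert _ _) ReflTransGen.refl
    | @tail b c h1 h2 ih =>
      obtain ⟨e, he, ho⟩ := step_iff.1 h2
      by_cases heJ : e ∈ J
      · refine Set.mem_biUnion (x := c) (Set.mem_insert_of_mem _ ?_) ReflTransGen.refl
        exact Set.mem_biUnion (x := e) heJ (by rw [Set.mem_ofPred_eq, he]; simp)
      · obtain ⟨u, hu, hub⟩ := Set.mem_iUnion₂.1 ih
        refine Set.mem_biUnion hu ?_
        exact ReflTransGen.tail hub (step_iff.2 ⟨e, he, by rw [← hh e heJ]; exact ho⟩)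
  by_contra hcon
  simp only [Set.mem_ofPred_eq, not_exists, Set.not_infinite] at hcon
  exact hx ((hU.biUnion fun u _ => hcon u).subset hsub)

variable (q : unitInterval)

/-- constant-parameter product measure -/
noncomputable abbrev PC (d : ℕ) (q : unitInterval) : Measure (Config d) := PM (fun _ : Edge d => q)

/-- the box of radius m meets an infinite cluster -/
def InfBox (d m : ℕ) : Set (Config d) := {ω | ∃ x ∈ bx (origin d) m, (cluster ω x).Infinite}

lemma meas_InfBox (m : ℕ) : MeasurableSet (InfBox d m) := by
  have : InfBox d m = ⋃ x ∈ bx (origin d) m, {ω | (cluster ω x).Infinite} := by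
    ext; simp [InfBox]
  rw [this]
  exact Finset.measurableSet_biUnion _ fun x _ => meas_inf x

lemma exists_m (h0 : PC d q (ZeroToInfinity d) ≠ 0) (ε : ℝ) (hε : 0 < ε) :
    ∃ m : ℕ, 1 ≤ m ∧ 1 - ε ≤ (PC d q).real (InfBox d m) := by
  have h1 : PC d q {ω : Config d | ∃ x, (cluster ω x).Infinite} = 1 := by
    refine zero_one _ _ ?_ inf_dep ?_
    · have : {ω : Config d | ∃ x, (cluster ω x).Infinite} =
        ⋃ x, {ω | (cluster ω x).Infinite} := by ext; simp
      rw [this]; exact MeasurableSet.iUnion meas_inf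
    · intro h
      refine h0 (measure_mono_null ?_ h)
      intro ω hω
      exact ⟨origin d, hω⟩
  have hmono : Monotone (fun m => InfBox d m) := by
    rintro a b hab ω ⟨x, hx, hi⟩
    exact ⟨x, bx_mono hab hx, hi⟩
  have hU : {ω : Config d | ∃ x, (cluster ω x).Infinite} = ⋃ m, InfBox d m := by
    ext ω
    simp only [Set.mem_ofPred_eq, Set.mem_iUnion, InfBox]
    constructor
    · rintro ⟨x, hx⟩
      refine ⟨∑ i, (x i).natAbs, x, ?_, hx⟩
      rw [mem_bx]
      intro i
      have : (x i).natAbs ≤ ∑ i, (x i).natAbs :=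
        Finset.single_le_sum (f := fun i => (x i).natAbs) (fun _ _ => Nat.zero_le _)
          (Finset.mem_univ i)
      simp only [origin, sub_zero]
      rw [Int.abs_eq_natAbs]; exact_mod_cast this
    · rintro ⟨m, x, _, hx⟩; exact ⟨x, hx⟩
  have ht := tendsto_measure_iUnion_atTop (μ := PC d q) hmono
  rw [← hU, h1] at ht
  have ht' : Filter.Tendsto (fun m => (PC d q).real (InfBox d m)) Filter.atTop (nhds 1) := by
    have := (ENNReal.tendsto_toReal ENNReal.one_ne_top).comp ht
    exact this
  have := (ht'.eventually (lt_mem_nhds (show 1 - ε < 1 by linarith))).and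
    (Filter.eventually_ge_atTop 1)
  obtain ⟨m, hm, h1m⟩ := this.exists
  exact ⟨m, h1m, hm.le⟩

open Classical in
/-- boundary vertices reached inside the box -/
noncomputable def XX (m n : ℕ) (ω : Config d) : Finset (Vertex d) :=
  (bx (origin d) n).filter (fun u => (∃ i, |u i| = n) ∧
    ∃ a ∈ bx (origin d) m, CB ω (bx (origin d) n : Set (Vertex d)) a u)

lemma mem_XX {m n : ℕ} {ω : Config d} {u : Vertex d} : u ∈ XX m n ω ↔ u ∈ bx (origin d) n ∧
    (∃ i, |u i| = n) ∧ ∃ a ∈ bx (origin d) m, CB ω (bx (origin d) n : Set (Vertex d)) a u := by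
  classical
  simp only [XX, Finset.mem_filter]

lemma bdry_of_adj {n : ℕ} {u v : Vertex d} (h : adj u v) (hu : u ∈ bx (origin d) n)
    (hv : v ∉ bx (origin d) n) : ∃ i, |u i| = n := by
  rw [mem_bx] at *
  push Not at hv
  obtain ⟨i, hi⟩ := hv
  refine ⟨i, ?_⟩
  have h1 := hu i
  have h2 := adj_le h i
  simp only [origin, sub_zero] at *
  rw [Int.abs_eq_natAbs] at *
  omega

lemma XX_exit {m n : ℕ} (hmn : m ≤ n) {ω : Config d} {a z : Vertex d} (ha : a ∈ bx (origin d) m)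
    {R : Vertex d → Vertex d → Prop} (hR : ∀ x y, R x y → step ω x y)
    (h : ReflTransGen R a z) (hz : z ∉ bx (origin d) n) : ∃ u ∈ XX m n ω, ∃ v, v ∉ bx (origin d) n ∧
      R u v := by
  obtain ⟨u, v, h1, h2, h3, h4⟩ := rtg_exit (B := (bx (origin d) n : Set (Vertex d))) h
    (bx_mono hmn ha) hz
  refine ⟨u, ?_, v, h3, h4⟩
  rw [mem_XX]
  refine ⟨h2, bdry_of_adj (step_adj (hR _ _ h4)) h2 h3, a, ha, ?_⟩
  exact rtg_mono (fun x y h => ⟨h.1, h.2.1, hR _ _ h.2.2⟩) h1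

lemma XX_congr {m n : ℕ} {ω ω' : Config d}
    (h : ∀ e ∈ E2 (bx (origin d) n : Set (Vertex d)), ω e = ω' e) : XX m n ω = XX m n ω' := by
  ext u
  simp only [mem_XX]
  constructor
  · rintro ⟨h1, h2, a, ha, hc⟩
    exact ⟨h1, h2, a, ha, hc.congr h⟩
  · rintro ⟨h1, h2, a, ha, hc⟩
    exact ⟨h1, h2, a, ha, hc.congr (fun e he => (h e he).symm)⟩

lemma XX_dep (m n : ℕ) (p : Finset (Vertex d) → Prop) :
    Dep (E2 (bx (origin d) n : Set (Vertex d))) {ω : Config d | p (XX m n ω)} := by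
  intro ω ω' h hω
  rw [Set.mem_ofPred_eq] at *
  rwa [← XX_congr h]

lemma XX_meas (m n : ℕ) (p : Finset (Vertex d) → Prop) :
    MeasurableSet {ω : Config d | p (XX m n ω)} := (XX_dep m n p).meas (E2_fin _)

lemma XX_mono {m n : ℕ} (hmn : m ≤ n) {ω : Config d} (h : (XX m (n+1) ω).Nonempty) :
    ∃ u ∈ XX m n ω, ∃ v, v ∉ bx (origin d) n ∧ step ω u v := by
  obtain ⟨z, hz⟩ := h
  rw [mem_XX] at hz
  obtain ⟨h1, ⟨i, hi⟩, a, ha, hc⟩ := hz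
  refine XX_exit hmn ha (fun x y h => h) hc.conn ?_
  rw [mem_bx]; push Not
  refine ⟨i, ?_⟩
  simp only [origin, sub_zero, hi]
  push_cast; linarith

/-- few boundary vertices is unlikely -/
lemma XX_few (hq1 : (q : ℝ) < 1) (m n t : ℕ) (hmn : m ≤ n) :
    (PC d q).real {ω | (XX m n ω).Nonempty ∧ (XX m n ω).card ≤ t} ≤
      ((1 - (q:ℝ)) ^ (t * 3 ^ d))⁻¹ * ((PC d q).real {ω | (XX m n ω).Nonempty} -
        (PC d q).real {ω | (XX m (n+1) ω).Nonempty}) := by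
  classical
  have hsub : {ω : Config d | (XX m (n+1) ω).Nonempty} ⊆ {ω | (XX m n ω).Nonempty} := by
    intro ω hω
    obtain ⟨u, hu, _⟩ := XX_mono hmn hω
    exact ⟨u, hu⟩
  have hq0 : 0 < 1 - (q : ℝ) := by linarith
  have hpos : 0 < (1 - (q:ℝ)) ^ (t * 3 ^ d) := by positivity
  rw [← measureReal_sdiff hsub (XX_meas m (n+1) (fun X => X.Nonempty))]
  refine cond_le_real (PC d q) (XX m n) _ _ _ (by positivity) (fun X => XX_meas m n (fun Y => Y = X))
    ((XX_meas m n (fun X => X.Nonempty)).diff (XX_meas m (n+1) (fun X => X.Nonempty))) ?_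
  intro X
  by_cases hX : X.Nonempty ∧ X.card ≤ t
  swap
  · have : {ω : Config d | XX m n ω = X} ∩ {ω | (XX m n ω).Nonempty ∧ (XX m n ω).card ≤ t} = ∅ := by
      ext ω
      simp only [Set.mem_inter_iff, Set.mem_ofPred_eq, Set.mem_empty_iff_false, iff_false]
      rintro ⟨rfl, h⟩; exact hX h
    rw [this]
    simp only [measureReal_empty]
    positivity
  let Q : Finset (Edge d) := et X \ e2 (bx (origin d) n)
  have hQc : Q.card ≤ t * 3 ^ d := by
    refine (Finset.card_le_card Finset.sdiff_subset).trans ((card_et X).trans ?_)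
    exact Nat.mul_le_mul_right _ hX.2
  have hdis : Disjoint (E2 (bx (origin d) n : Set (Vertex d))) (Q : Set (Edge d)) := by
    rw [Finset.coe_sdiff, coe_e2]; exact disjoint_sdiff_self_right
  have hd2 := dep_cyl Q (fun _ => false)
  have hi := indep_real (fun _ : Edge d => q) (XX_meas m n (fun Y => Y = X))
    (hd2.meas (Finset.finite_toSet _)) (XX_dep m n (fun Y => Y = X)) hd2 hdis
  rw [PM_closed, Finset.prod_const] at hi
  have hle : {ω : Config d | XX m n ω = X} ∩ {ω | ∀ e ∈ Q, ω e = false} ⊆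
     {ω | XX m n ω = X} ∩ ({ω | (XX m n ω).Nonempty} \ {ω | (XX m (n+1) ω).Nonempty}) := by
    rintro ω ⟨h1, h2⟩
    refine ⟨h1, ?_, ?_⟩
    · rw [Set.mem_ofPred_eq] at h1 ⊢; rw [h1]; exact hX.1
    · intro h3
      obtain ⟨u, hu, v, hv, hs⟩ := XX_mono hmn h3
      obtain ⟨e, he, ho⟩ := step_iff.1 hs
      rw [Set.mem_ofPred_eq] at h1
      rw [h1] at hu
      have : e ∈ Q := by
        rw [Finset.mem_sdiff, ← Finset.mem_coe, coe_et, mem_ET he, ← Finset.mem_coe, coe_e2,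
          mem_E2 he]
        exact ⟨Or.inl hu, fun h => hv h.2⟩
      rw [h2 e this] at ho
      exact absurd ho (by simp)
  have h5 := measureReal_mono (μ := PC d q) hle
  have h6 : {ω : Config d | XX m n ω = X} ∩ {ω | (XX m n ω).Nonempty ∧ (XX m n ω).card ≤ t} ⊆
    {ω | XX m n ω = X} := Set.inter_subset_left
  have h7 := measureReal_mono (μ := PC d q) h6
  have h8 : (1 - (q:ℝ)) ^ (t * 3 ^ d) ≤ (1 - (q:ℝ)) ^ Q.card :=
    pow_le_pow_of_le_one hq0.le (by linarith [q.2.1]) hQc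
  rw [inv_mul_eq_div, le_div_iff₀ hpos]
  rw [hi] at h5
  refine le_trans ?_ h5
  exact mul_le_mul h7 h8 hpos.le measureReal_nonneg

lemma XX_of_inf {m n : ℕ} (hmn : m ≤ n) : InfBox d m ⊆ {ω | (XX m n ω).Nonempty} := by
  rintro ω ⟨x, hx, hi⟩
  obtain ⟨z, hz, hz'⟩ := hi.exists_notMem_finset (bx (origin d) n)
  obtain ⟨u, hu, _⟩ := XX_exit hmn hx (fun x y h => h) (show Conn ω x z from hz) hz'
  exact ⟨u, hu⟩

lemma XX_many (hq1 : (q : ℝ) < 1) (m t N : ℕ) (ε : ℝ) (hε : 0 < ε)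
    (hm : 1 - ε ≤ (PC d q).real (InfBox d m)) :
    ∃ n, N ≤ n ∧ m ≤ n ∧ (PC d q).real {ω | (XX m n ω).card ≤ t} ≤ 2 * ε := by
  let a : ℕ → ℝ := fun k => (PC d q).real {ω | (XX m (m + k) ω).Nonempty}
  have ha : Antitone a := by
    refine antitone_nat_of_succ_le fun k => measureReal_mono ?_
    intro ω hω
    obtain ⟨u, hu, _⟩ := XX_mono (show m ≤ m + k by omega) hω
    exact ⟨u, hu⟩
  have ht : Filter.Tendsto a Filter.atTop (nhds (⨅ i, a i)) :=
    tendsto_atTop_ciInf ha ⟨0, by rintro _ ⟨k, rfl⟩; exact measureReal_nonneg⟩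
  have hd : Filter.Tendsto (fun k => a k - a (k+1)) Filter.atTop (nhds 0) := by
    have := ht.sub (ht.comp (Filter.tendsto_add_atTop_nat 1))
    simpa using this
  have hq0 : 0 < 1 - (q : ℝ) := by linarith
  have hpos : 0 < (1 - (q:ℝ)) ^ (t * 3 ^ d) := by positivity
  obtain ⟨k, hk, hkN⟩ := ((hd.eventually (gt_mem_nhds (show 0 < (1 - (q:ℝ)) ^ (t * 3 ^ d) * ε by
    positivity))).and (Filter.eventually_ge_atTop N)).exists
  refine ⟨m + k, by omega, by omega, ?_⟩
  have h1 := XX_few (d := d) q hq1 m (m + k) t (by omega)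
  have h2 : ((1 - (q:ℝ)) ^ (t * 3 ^ d))⁻¹ * (a k - a (k+1)) ≤ ε := by
    rw [inv_mul_le_iff₀ hpos]; exact hk.le
  have h3 : {ω : Config d | (XX m (m+k) ω).card ≤ t} ⊆
     (InfBox d m)ᶜ ∪ {ω | (XX m (m+k) ω).Nonempty ∧ (XX m (m+k) ω).card ≤ t} := by
    intro ω hω
    by_cases h : ω ∈ InfBox d m
    · exact Or.inr ⟨XX_of_inf (by omega) h, hω⟩
    · exact Or.inl h
  have h4 := (measureReal_mono (μ := PC d q) h3).trans (measureReal_union_le _ _)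
  rw [probReal_compl_eq_one_sub (meas_InfBox m)] at h4
  have : (PC d q).real {ω | (XX m (m + k) ω).Nonempty ∧ (XX m (m + k) ω).card ≤ t} ≤ ε :=
    h1.trans h2
  linarith

end L2

section L3
open Relation
variable {d : ℕ}

def Good (m n : ℕ) (ω : Config d) (y : Vertex d) : Prop :=
  (∀ z ∈ bx y m, CB ω (bx y m : Set (Vertex d)) y z) ∧
    ∃ a ∈ bx (origin d) m, CB ω (bx (origin d) (n + 2 * m + 1) : Set (Vertex d)) a y

def InA (m n : ℕ) (y : Vertex d) : Prop :=
  ∃ i, |y i| = n + m + 1 ∧ ∀ j, j ≠ i → |y j| ≤ n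

def InF (i0 : Fin d) (m n : ℕ) (y : Vertex d) : Prop :=
  y i0 = n + m + 1 ∧ ∀ j, j ≠ i0 → 0 ≤ y j ∧ y j ≤ n

lemma ex_y {m n : ℕ} {u : Vertex d} (hu : u ∈ bx (origin d) n) (hi : ∃ i, |u i| = n) :
    ∃ y, InA m n y ∧ y ∈ bx u (m + 1) ∧ (∀ z ∈ bx y m, z ∉ bx (origin d) n) ∧
      ∃ v ∈ bx y m, adj u v := by
  obtain ⟨i, hi⟩ := hi
  rw [mem_bx] at hu
  simp only [origin, sub_zero] at hu
  let s : ℤ := if 0 ≤ u i then 1 else -1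
  have hs : u i = s * n ∧ (s = 1 ∨ s = -1) := by
    rcases abs_cases (u i) with h | h
    · simp only [s, h.2, if_true]; exact ⟨by linarith [h.1], by simp⟩
    · simp only [s, not_le.2 h.2, if_false]; exact ⟨by linarith [h.1], by simp⟩
  refine ⟨Function.update u i (s * (n + m + 1)), ⟨i, ?_, ?_⟩, ?_, ?_, Function.update u i (s * (n + 1)), ?_, ?_⟩
  · simp only [Function.update_self]
    rcases hs.2 with h | h <;> rw [h]
    · rw [one_mul, abs_of_nonneg (by positivity)]
    · rw [neg_one_mul, abs_neg, abs_of_nonneg (by positivity)]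
  · intro j hj; rw [Function.update_of_ne hj]; exact hu j
  · rw [mem_bx]; intro j
    by_cases hj : j = i
    · subst hj
      simp only [Function.update_self]
      rw [abs_le]; push_cast
      rcases hs.2 with h | h <;> rw [hs.1, h] <;> constructor <;> linarith
    · rw [Function.update_of_ne hj]; simp; positivity
  · intro z hz hz'
    rw [mem_bx] at hz hz'
    have h1 := hz i
    have h2 := hz' i
    simp only [Function.update_self, origin, sub_zero] at h1 h2
    rw [abs_le] at h1 h2
    rcases hs.2 with h | h <;> rw [h] at h1 <;> linarith [h1.1, h1.2, h2.1, h2.2]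
  · rw [mem_bx]; intro j
    by_cases hj : j = i
    · subst hj
      simp only [Function.update_self]
      rw [abs_le]
      rcases hs.2 with h | h <;> rw [h] <;> constructor <;> linarith
    · rw [Function.update_of_ne hj, Function.update_of_ne hj]; simp
  · apply adj_update
    rcases hs.2 with h | h <;> rw [hs.1, h] <;> omega

lemma good_of_open {m n : ℕ} {u y v : Vertex d} {ω : Config d} (hu : u ∈ XX m n ω)
    (hy : y ∈ bx u (m + 1)) (hv : v ∈ bx y m) (huv : adj u v)
    (ho : ∀ e ∈ e2 (insert u (bx y m)), ω e = true) : Good m n ω y := by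
  have h1 : ∀ z ∈ bx y m, CB ω (bx y m : Set (Vertex d)) y z := by
    intro z hz
    refine bx_open (fun e he => ho e ?_) hz
    rw [← Finset.mem_coe, coe_e2] at *
    exact E2_mono (by simp) he
  refine ⟨h1, ?_⟩
  obtain ⟨hu0, _, a, ha, hc⟩ := mem_XX.1 hu
  refine ⟨a, ha, ?_⟩
  have hyB : ∀ z ∈ bx y m, z ∈ bx (origin d) (n + 2 * m + 1) := by
    intro z hz
    have := bx_trans (bx_trans hu0 hy) hz
    rwa [show n + (m + 1) + m = n + 2 * m + 1 by omega] at this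
  have c1 : CB ω (bx (origin d) (n + 2 * m + 1) : Set (Vertex d)) a u :=
    hc.mono (by exact_mod_cast bx_mono (by omega)) (fun _ _ h => h)
  have c2 : CB ω (bx (origin d) (n + 2 * m + 1) : Set (Vertex d)) v y :=
    (h1 v hv).symm.mono (fun z hz => hyB z hz) (fun _ _ h => h)
  refine (c1.tail ⟨bx_mono (by omega) hu0, hyB v hv, huv, ho _ ?_⟩).trans c2
  rw [← Finset.mem_coe, coe_e2]
  exact (mem_E2 rfl).2 ⟨by simp, by simp [hv]⟩

variable (q : unitInterval)

lemma no_good_all (m n t k K2 : ℕ) (Z : Finset (Vertex d)) (hZ : Z.card ≤ K2)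
    (ht : (k + K2) * (8 * m + 5) ^ d ≤ t) :
    (PC d q).real {ω | ∀ y, InA m n y → y ∉ Z → ¬ Good m n ω y} ≤
      (PC d q).real {ω | (XX m n ω).card ≤ t} +
        (1 - (q:ℝ) ^ (((2 * m + 1) ^ d + 1) * 3 ^ d)) ^ k := by
  classical
  set M := ((2 * m + 1) ^ d + 1) * 3 ^ d with hM
  set W : Set (Config d) := {ω | ∀ y, InA m n y → y ∉ Z → ¬ Good m n ω y} with hW
  have hb0 : (0:ℝ) ≤ 1 - (q:ℝ) ^ M := by linarith [pow_le_one₀ (n := M) q.2.1 q.2.2]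
  have hb1 : 1 - (q:ℝ) ^ M ≤ 1 := by linarith [pow_nonneg q.2.1 M]
  have h1 : (PC d q).real (W ∩ {ω | t < (XX m n ω).card}) ≤ (1 - (q:ℝ) ^ M) ^ k * (PC d q).real Set.univ := by
    refine cond_le_real (PC d q) (XX m n) _ _ _ (pow_nonneg hb0 k)
      (fun X => XX_meas m n (fun Y => Y = X)) MeasurableSet.univ ?_
    intro X
    by_cases hX : t < X.card ∧ ∃ ω₀ : Config d, XX m n ω₀ = X
    swap
    · have : {ω : Config d | XX m n ω = X} ∩ (W ∩ {ω | t < (XX m n ω).card}) = ∅ := by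
        ext ω
        simp only [Set.mem_inter_iff, Set.mem_ofPred_eq, Set.mem_empty_iff_false, iff_false]
        rintro ⟨rfl, _, h⟩; exact hX ⟨h, ω, rfl⟩
      rw [this]
      simp only [measureReal_empty]
      exact mul_nonneg (pow_nonneg hb0 k) measureReal_nonneg
    obtain ⟨hXt, ω₀, hω₀⟩ := hX
    have hex : ∀ u : X, ∃ y, InA m n y ∧ y ∈ bx u.1 (m + 1) ∧ (∀ z ∈ bx y m, z ∉ bx (origin d) n) ∧
      ∃ v ∈ bx y m, adj u.1 v := by
      rintro ⟨u, hu⟩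
      rw [← hω₀, mem_XX] at hu
      exact ex_y hu.1 hu.2.1
    choose y0 hy0 using hex
    let y : Vertex d → Vertex d := fun u => if h : u ∈ X then y0 ⟨u, h⟩ else u
    have hy : ∀ u ∈ X, InA m n (y u) ∧ y u ∈ bx u (m + 1) ∧
        (∀ z ∈ bx (y u) m, z ∉ bx (origin d) n) ∧ ∃ v ∈ bx (y u) m, adj u v := by
      intro u hu
      simp only [y, hu, dif_pos]; exact hy0 ⟨u, hu⟩
    obtain ⟨X', hX'X, hsep, hcard⟩ := separate (4 * m + 2) X
    let X'' := X'.filter (fun u => y u ∉ Z)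
    have hX''X : ∀ u ∈ X'', u ∈ X := fun u hu => hX'X (Finset.mem_filter.1 hu).1
    have hc1 : (X'.filter (fun u => y u ∈ Z)).card ≤ K2 := by
      refine le_trans (Finset.card_le_card_of_injOn y (fun u hu => (Finset.mem_filter.1 hu).2) ?_) hZ
      intro u hu v hv huv
      by_contra hne
      have hu' := Finset.mem_filter.1 hu
      have hv' := Finset.mem_filter.1 hv
      apply hsep u hu'.1 v hv'.1 hne
      have e1 := (hy u (hX'X hu'.1)).2.1
      have e2 := (hy v (hX'X hv'.1)).2.1
      rw [← huv] at e2
      exact bx_mono (by omega) (bx_trans e1 (bx_symm e2))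
    have hc2 : k ≤ X''.card := by
      have e1 : X'.card = (X'.filter (fun u => y u ∈ Z)).card + X''.card :=
        (Finset.card_filter_add_card_filter_not _).symm
      have e2 : (k + K2) * (8 * m + 5) ^ d < X'.card * (8 * m + 5) ^ d := by
        have : 2 * (4 * m + 2) + 1 = 8 * m + 5 := by ring
        rw [this] at hcard
        omega
      have e3 := lt_of_mul_lt_mul_right e2 (Nat.zero_le _)
      omega
    let Q : Vertex d → Finset (Edge d) := fun u => e2 (insert u (bx (y u) m))
    have hins : ∀ u ∈ X, ∀ z ∈ insert u (bx (y u) m), z ∈ bx u (2 * m + 1) := by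
      intro u hu z hz
      rcases Finset.mem_insert.1 hz with rfl | hz
      · exact self_mem_bx _ _
      · have := bx_trans (hy u hu).2.1 hz
        exact bx_mono (by omega) this
    have htr := trials (fun _ : Edge d => q) X'' Q q q.2.1 q.2.2 (fun _ _ _ _ => le_rfl) M
      (by
        intro u hu
        refine (card_e2 _).trans (Nat.mul_le_mul_right _ ((Finset.card_insert_le _ _).trans ?_))
        rw [card_bx])
      (by
        intro u hu v hv huv
        rw [Finset.disjoint_left]
        intro e he he'
        rw [← Finset.mem_coe, coe_e2] at he he'
        obtain ⟨a, b, hab, rfl⟩ := edge_exists e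
        have h1 := ((mem_E2 rfl).1 he).1
        have h2 := ((mem_E2 rfl).1 he').1
        apply hsep u (Finset.mem_filter.1 hu).1 v (Finset.mem_filter.1 hv).1 huv
        exact bx_mono (by omega) (bx_trans (hins u (hX''X u hu) a h1)
          (bx_symm (hins v (hX''X v hv) a h2))))
    let V : Set (Config d) := {ω | ∀ u ∈ X'', ¬ ∀ i ∈ Q u, ω i = true}
    have hVd : Dep ((X''.biUnion Q : Finset (Edge d)) : Set (Edge d)) V := by
      intro ω ω' hh hA v hv hc
      refine hA v hv (fun i hi => ?_)
      rw [hh i (by simp only [Finset.coe_biUnion, Set.mem_iUnion]; exact ⟨v, hv, hi⟩)]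
      exact hc i hi
    have hdis : Disjoint (E2 (bx (origin d) n : Set (Vertex d)))
        ((X''.biUnion Q : Finset (Edge d)) : Set (Edge d)) := by
      rw [Set.disjoint_left]
      intro e he he'
      rw [Finset.mem_coe, Finset.mem_biUnion] at he'
      obtain ⟨u, hu, he'⟩ := he'
      rw [← Finset.mem_coe, coe_e2] at he'
      obtain ⟨a, b, hab, rfl⟩ := edge_exists e
      have h1 := (mem_E2 rfl).1 he
      have h2 := (mem_E2 rfl).1 he'
      have key : ∀ a ∈ bx (origin d) n, a ∈ insert u (bx (y u) m) → a = u := by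
        intro a ha ha'
        rcases Finset.mem_insert.1 ha' with h | h
        · exact h
        · exact absurd ha ((hy u (hX''X u hu)).2.2.1 a h)
      exact adj_ne hab ((key a h1.1 h2.1).trans (key b h1.2 h2.2).symm)
    have hsub : {ω : Config d | XX m n ω = X} ∩ (W ∩ {ω | t < (XX m n ω).card}) ⊆
        {ω | XX m n ω = X} ∩ V := by
      rintro ω ⟨hω, hωW, _⟩
      refine ⟨hω, fun u hu hop => ?_⟩
      have huX := hX''X u hu
      obtain ⟨g1, g2, g3, v, g4, g5⟩ := hy u huX
      rw [Set.mem_ofPred_eq] at hω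
      exact hωW (y u) g1 (Finset.mem_filter.1 hu).2
        (good_of_open (by rw [hω]; exact huX) g2 g4 g5 hop)
    refine (measureReal_mono hsub).trans ?_
    rw [indep_real (fun _ : Edge d => q) (XX_meas m n (fun Y => Y = X))
      (hVd.meas (Finset.finite_toSet _)) (XX_dep m n (fun Y => Y = X)) hVd hdis, Set.inter_univ, mul_comm]
    refine mul_le_mul_of_nonneg_right (htr.trans ?_) measureReal_nonneg
    exact pow_le_pow_of_le_one hb0 hb1 hc2
  have h2 : W ⊆ {ω | (XX m n ω).card ≤ t} ∪ (W ∩ {ω | t < (XX m n ω).card}) := by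
    intro ω hω
    by_cases h : (XX m n ω).card ≤ t
    · exact Or.inl h
    · exact Or.inr ⟨hω, not_le.1 h⟩
  have h3 := (measureReal_mono (μ := PC d q) h2).trans (measureReal_union_le _ _)
  rw [probReal_univ, mul_one] at h1
  linarith

lemma CB_pull' {φ : Vertex d ≃ Vertex d} {h : IsAut φ} {ω : Config d} {B : Set (Vertex d)}
    {x y : Vertex d} (hc : CB ω B (φ x) (φ y)) : CB (pull φ h ω) (φ ⁻¹' B) x y := by
  have := rtg_lift (q := fun u v => u ∈ φ ⁻¹' B ∧ v ∈ φ ⁻¹' B ∧ step (pull φ h ω) u v) φ.symm ?_ hc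
  · simpa [CB] using this
  · rintro a b ⟨h1, h2, h3⟩
    refine ⟨by simpa using h1, by simpa using h2, step_pull.2 (by simpa using h3)⟩

lemma pull_preserves (φ : Vertex d ≃ Vertex d) (h : IsAut φ) {A : Set (Config d)}
    (hA : MeasurableSet A) : (PC d q).real {ω | pull φ h ω ∈ A} = (PC d q).real A := by
  have := PM_map_inj (fun _ : Edge d => q) (emap φ h) (emap_inj φ h)
  have hm : Measurable (fun (ω : Config d) (e : Edge d) => ω (emap φ h e)) := by fun_prop
  have h2 : ((PC d q).map (fun ω k => ω (emap φ h k))) A = PC d q A := by rw [this]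
  rw [Measure.map_apply hm hA] at h2
  rw [measureReal_def, measureReal_def, ← h2]
  rfl

lemma good_pull {m n : ℕ} (π : Equiv.Perm (Fin d)) (s : Fin d → ℤˣ) {ω : Config d} {y : Vertex d}
    (hg : Good m n ω (affEquiv (origin d) π s y)) :
    Good m n (pull _ (affEquiv_aut (origin d) π s) ω) y := by
  set φ := affEquiv (origin d) π s with hφ
  have h0 : φ (origin d) = origin d := by funext i; simp [hφ, affEquiv_apply, origin]
  constructor
  · intro z hz
    have := hg.1 (φ z) ((aff_bx _ _ _ _ _ _).2 hz)
    have := CB_pull' (h := affEquiv_aut (origin d) π s) this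
    refine this.mono ?_ (fun _ _ h => h)
    intro w hw
    exact (aff_bx _ _ _ _ _ _).1 hw
  · obtain ⟨a, ha, hc⟩ := hg.2
    refine ⟨φ.symm a, ?_, ?_⟩
    · rw [← aff_bx (origin d) π s, ← hφ, h0]; simpa using ha
    · rw [← φ.apply_symm_apply a] at hc
      have := CB_pull' (h := affEquiv_aut (origin d) π s) hc
      refine this.mono ?_ (fun _ _ h => h)
      intro w hw
      have hw' : φ w ∈ bx (origin d) (n + 2 * m + 1) := hw
      rw [← h0] at hw'
      exact (aff_bx _ _ _ _ _ _).1 hw'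

lemma InA_exists {m n : ℕ} (i0 : Fin d) {y : Vertex d} (hy : InA m n y) :
    ∃ (π : Equiv.Perm (Fin d)) (s : Fin d → ℤˣ) (y' : Vertex d), InF i0 m n y' ∧
      affEquiv (origin d) π s y' = y := by
  obtain ⟨i, hi, hj⟩ := hy
  refine ⟨Equiv.swap i i0, fun j => if 0 ≤ y j then 1 else -1,
    fun j => |y (Equiv.swap i i0 j)|, ⟨?_, ?_⟩, ?_⟩
  · simpa using hi
  · intro j hj0
    refine ⟨abs_nonneg _, hj _ ?_⟩
    intro h
    apply hj0
    have : Equiv.swap i i0 (Equiv.swap i i0 j) = Equiv.swap i i0 i := by rw [h]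
    simpa using this
  · funext j
    rw [affEquiv_apply]
    simp only [origin, zero_add, Equiv.swap_apply_self]
    split_ifs with h
    · simp [abs_of_nonneg h]
    · simp [abs_of_neg (not_le.1 h)]

lemma good_mono {m n : ℕ} {ω ω' : Config d} {y : Vertex d} (hg : Good m n ω y)
    (h : ∀ e, ω e = true → ω' e = true) : Good m n ω' y :=
  ⟨fun z hz => (hg.1 z hz).mono le_rfl (fun e _ => h e), by
    obtain ⟨a, ha, hc⟩ := hg.2
    exact ⟨a, ha, hc.mono le_rfl (fun e _ => h e)⟩⟩

lemma good_congr {m n : ℕ} {ω ω' : Config d} {y : Vertex d} (hg : Good m n ω y)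
    (hy : bx y m ⊆ bx (origin d) (n + 2 * m + 1))
    (h : ∀ e ∈ E2 (bx (origin d) (n + 2 * m + 1) : Set (Vertex d)), ω e = ω' e) : Good m n ω' y :=
  ⟨fun z hz => (hg.1 z hz).congr (fun e he => h e (E2_mono (by exact_mod_cast hy) he)), by
    obtain ⟨a, ha, hc⟩ := hg.2
    exact ⟨a, ha, hc.congr h⟩⟩

lemma InF_bx {i0 : Fin d} {m n : ℕ} {y : Vertex d} (hy : InF i0 m n y) :
    y ∈ bx (origin d) (n + m + 1) := by
  rw [mem_bx]; intro j
  simp only [origin, sub_zero]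
  by_cases hj : j = i0
  · subst hj; rw [hy.1, abs_of_nonneg (by positivity)]; push_cast; rfl
  · have := hy.2 j hj
    rw [abs_of_nonneg this.1]; push_cast; linarith

lemma InF_sub {i0 : Fin d} {m n : ℕ} {y : Vertex d} (hy : InF i0 m n y) :
    bx y m ⊆ bx (origin d) (n + 2 * m + 1) := by
  intro z hz
  exact bx_mono (by omega) (bx_trans (InF_bx hy) hz)

/-- The main finite size criterion. -/
lemma layer1 (hq0 : 0 < (q:ℝ)) (hq1 : (q : ℝ) < 1) (h0 : PC d q (ZeroToInfinity d) ≠ 0)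
    (i0 : Fin d) (ε : ℝ) (hε : 0 < ε) :
    ∃ m : ℕ, 1 ≤ m ∧ ∀ K1 N : ℕ, ∃ n, N ≤ n ∧ m ≤ n ∧ ∀ Z : Finset (Vertex d), Z.card ≤ K1 →
      (PC d q).real {ω | ∀ y, InF i0 m n y → y ∉ Z → ¬ Good m n ω y} ≤ ε := by
  classical
  let G := Equiv.Perm (Fin d) × (Fin d → ℤˣ)
  let g := Fintype.card G
  have hg : 0 < g := Fintype.card_pos
  have hεg : 0 < ε ^ g := by positivity
  obtain ⟨m, hm1, hm⟩ := exists_m (d := d) q h0 (ε ^ g / 4) (by positivity)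
  refine ⟨m, hm1, fun K1 N => ?_⟩
  set b : ℝ := 1 - (q:ℝ) ^ (((2 * m + 1) ^ d + 1) * 3 ^ d) with hb
  have hb1 : b < 1 := by have : 0 < (q:ℝ) ^ (((2 * m + 1) ^ d + 1) * 3 ^ d) := by positivity
                         linarith
  have hb0 : 0 ≤ b := by
    have := pow_le_one₀ (n := ((2 * m + 1) ^ d + 1) * 3 ^ d) q.2.1 q.2.2
    linarith
  obtain ⟨k, hk⟩ := exists_pow_lt_of_lt_one (show 0 < ε ^ g / 4 by positivity) hb1
  let K2 := g * K1
  obtain ⟨n, hnN, hmn, hn⟩ := XX_many (d := d) q hq1 m ((k + K2) * (8 * m + 5) ^ d) N (ε ^ g / 4)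
    (by positivity) hm
  refine ⟨n, hnN, hmn, fun Z hZ => ?_⟩
  let Z2 : Finset (Vertex d) := (Finset.univ : Finset G).biUnion
    (fun γ => Z.image (affEquiv (origin d) γ.1 γ.2))
  have hZ2 : Z2.card ≤ K2 := by
    refine Finset.card_biUnion_le_card_mul _ _ _ (fun γ _ => Finset.card_image_le.trans hZ)
  have h1 := no_good_all (d := d) q m n _ k K2 Z2 hZ2 le_rfl
  let N0 : Set (Config d) := {ω | ∀ y, InF i0 m n y → y ∉ Z → ¬ Good m n ω y}
  let B := bx (origin d) (n + 2 * m + 1)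
  have hN0d : Dep (e2 B : Set (Edge d)) N0 := by
    intro ω ω' hh hω y hy hyZ hgo
    rw [coe_e2] at hh
    exact hω y hy hyZ (good_congr hgo (InF_sub hy) (fun e he => (hh e he).symm))
  have hN0m := hN0d.meas (Finset.finite_toSet _)
  let NG : G → Set (Config d) := fun γ =>
    {ω | ∀ y, InF i0 m n y → y ∉ Z → ¬ Good m n ω (affEquiv (origin d) γ.1 γ.2 y)}
  have hNGd : ∀ γ, Dep (e2 B : Set (Edge d)) (NG γ) := by
    intro γ ω ω' hh hω y hy hyZ hgo
    rw [coe_e2] at hh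
    refine hω y hy hyZ (good_congr hgo ?_ (fun e he => (hh e he).symm))
    intro z hz
    rw [← (affEquiv (origin d) γ.1 γ.2).apply_symm_apply z, aff_bx] at hz
    have := InF_sub hy hz
    rw [← aff_bx (origin d) γ.1 γ.2] at this
    have h0 : affEquiv (origin d) γ.1 γ.2 (origin d) = origin d := by
      funext i; simp [affEquiv_apply, origin]
    rw [h0] at this
    simpa using this
  have hNGdec : ∀ γ, Decr (NG γ) := by
    intro γ ω ω' hh hω y hy hyZ hgo
    exact hω y hy hyZ (good_mono hgo hh)
  have h2 := harris_finset (fun _ : Edge d => q) (e2 B) (Finset.univ : Finset G) NG hNGd hNGdec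
  have h3 : ∀ γ, (PC d q).real N0 ≤ (PC d q).real (NG γ) := by
    intro γ
    rw [← pull_preserves q _ (affEquiv_aut (origin d) γ.1 γ.2) hN0m]
    refine measureReal_mono ?_
    intro ω hω y hy hyZ hgo
    exact hω y hy hyZ (good_pull γ.1 γ.2 hgo)
  have h4 : (PC d q).real N0 ^ g ≤ ∏ γ ∈ (Finset.univ : Finset G), (PC d q).real (NG γ) := by
    have : (PC d q).real N0 ^ g = ∏ γ ∈ (Finset.univ : Finset G), (PC d q).real N0 := by
      simp [g]
    rw [this]
    exact Finset.prod_le_prod (fun _ _ => measureReal_nonneg) (fun γ _ => h3 γ)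
  have h5 : {ω : Config d | ∀ γ ∈ (Finset.univ : Finset G), ω ∈ NG γ} ⊆
      {ω | ∀ y, InA m n y → y ∉ Z2 → ¬ Good m n ω y} := by
    intro ω hω y hy hyZ hgo
    obtain ⟨π, s, y', hy', rfl⟩ := InA_exists i0 hy
    refine hω (π, s) (Finset.mem_univ _) y' hy' (fun hz => hyZ ?_) hgo
    exact Finset.mem_biUnion.2 ⟨(π, s), Finset.mem_univ _, Finset.mem_image_of_mem _ hz⟩
  have h6 := measureReal_mono (μ := PC d q) h5
  have h7 : (PC d q).real N0 ^ g ≤ ε ^ g := by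
    have : b ^ k < ε ^ g / 4 := hk
    linarith
  exact le_of_pow_le_pow_left₀ hg.ne' hε.le h7

end L3

section L4
open Relation
variable {d : ℕ}

abbrev Col := Fin 7 × Fin 7
abbrev BI (d : ℕ) := Edge d × Option Col
abbrev BC (d : ℕ) := BI d → Bool

def lay (o : Option Col) (w : BC d) : Config d := fun e => w (e, o)

noncomputable def rB (d : ℕ) (q δ : unitInterval) : BI d → unitInterval :=
  fun i => if i.2 = none then q else δ

noncomputable abbrev PB (d : ℕ) (q δ : unitInterval) : Measure (BC d) := PM (rB d q δ)

def RR (S B : Set (Vertex d)) (ω σ : Config d) : Vertex d → Vertex d → Prop :=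
  fun u v => u ∈ B ∧ v ∈ B ∧ (step σ u v ∨ (step ω u v ∧ u ∉ S ∧ v ∉ S))

def Rnew (S B : Set (Vertex d)) (ω σ : Config d) : Set (Vertex d) :=
  {z | ∃ a ∈ S, ReflTransGen (RR S B ω σ) a z}

variable (q δ : unitInterval)

lemma lay_none_law {A : Set (Config d)} (hA : MeasurableSet A) :
    (PB d q δ).real {w | lay none w ∈ A} = (PC d q).real A := by
  have h := PM_map_inj (rB d q δ) (fun e : Edge d => (e, (none : Option Col)))
    (fun a b h => (Prod.mk.inj h).1)
  have hm : Measurable (fun (w : BC d) (e : Edge d) => w (e, (none : Option Col))) := by fun_prop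
  have h2 : ((PB d q δ).map (fun w e => w (e, (none : Option Col)))) A = PC d q A := by
    rw [h]; rfl
  rw [Measure.map_apply hm hA] at h2
  rw [measureReal_def, measureReal_def, ← h2]
  rfl

open Classical in
noncomputable def DD (i0 : Fin d) (m n : ℕ) (S Z : Finset (Vertex d)) (ω : Config d) :
    Finset (Edge d) :=
  (e2 (bx (origin d) (n + 2 * m + 1))).filter (fun e => ∃ a b y, e.1 = s(a, b) ∧ a ∈ S ∧ b ∉ S ∧
    InF i0 m n y ∧ y ∉ Z ∧ (∀ z ∈ bx y m, CB ω (bx y m : Set (Vertex d)) y z) ∧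
      CB ω ((bx (origin d) (n + 2 * m + 1) : Set (Vertex d)) \ S) b y)

lemma mem_DD {i0 : Fin d} {m n : ℕ} {S Z : Finset (Vertex d)} {ω : Config d} {e : Edge d} :
    e ∈ DD i0 m n S Z ω ↔ e ∈ e2 (bx (origin d) (n + 2 * m + 1)) ∧
    ∃ a b y, e.1 = s(a, b) ∧ a ∈ S ∧ b ∉ S ∧
    InF i0 m n y ∧ y ∉ Z ∧ (∀ z ∈ bx y m, CB ω (bx y m : Set (Vertex d)) y z) ∧
      CB ω ((bx (origin d) (n + 2 * m + 1) : Set (Vertex d)) \ S) b y := by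
  classical
  simp only [DD, Finset.mem_filter]

lemma DD_congr {i0 : Fin d} {m n : ℕ} {S Z : Finset (Vertex d)} {ω ω' : Config d}
    (hZ : ∀ y, InF i0 m n y → y ∉ Z → ∀ z ∈ bx y m, z ∉ S)
    (h : ∀ e ∈ E2 ((bx (origin d) (n + 2 * m + 1) : Set (Vertex d)) \ S), ω e = ω' e) :
    DD i0 m n S Z ω ⊆ DD i0 m n S Z ω' := by
  intro e he
  rw [mem_DD] at *
  obtain ⟨h1, a, b, y, h2, h3, h4, h5, h6, h7, h8⟩ := he
  refine ⟨h1, a, b, y, h2, h3, h4, h5, h6, ?_, h8.congr h⟩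
  intro z hz
  refine (h7 z hz).congr (fun e he => h e (E2_mono ?_ he))
  intro w hw
  exact ⟨InF_sub h5 hw, hZ y h5 h6 w hw⟩

lemma rnew_of_DD {i0 : Fin d} {m n : ℕ} {S Z : Finset (Vertex d)} {ω σ : Config d} {e : Edge d}
    (hZ : ∀ y, InF i0 m n y → y ∉ Z → ∀ z ∈ bx y m, z ∉ S)
    (he : e ∈ DD i0 m n S Z ω) (ho : σ e = true) :
    ∃ y, InF i0 m n y ∧ (bx y m : Set (Vertex d)) ⊆
      Rnew S (bx (origin d) (n + 2 * m + 1) : Set (Vertex d)) ω σ := by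
  rw [mem_DD] at he
  obtain ⟨h1, a, b, y, h2, h3, h4, h5, h6, h7, h8⟩ := he
  refine ⟨y, h5, fun z hz => ⟨a, h3, ?_⟩⟩
  rw [← Finset.mem_coe, coe_e2, mem_E2 h2] at h1
  have s1 : RR S (bx (origin d) (n + 2 * m + 1) : Set (Vertex d)) ω σ a b :=
    ⟨h1.1, h1.2, Or.inl (step_iff.2 ⟨e, h2, ho⟩)⟩
  refine ReflTransGen.head s1 (ReflTransGen.trans (b := y) ?_ ?_)
  · refine rtg_mono ?_ h8
    rintro u v ⟨g1, g2, g3⟩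
    exact ⟨g1.1, g2.1, Or.inr ⟨g3, g1.2, g2.2⟩⟩
  · refine rtg_mono ?_ (h7 z hz)
    rintro u v ⟨g1, g2, g3⟩
    exact ⟨InF_sub h5 g1, InF_sub h5 g2, Or.inr ⟨g3, hZ y h5 h6 u g1, hZ y h5 h6 v g2⟩⟩

lemma DD_good {i0 : Fin d} {m n : ℕ} {S Z : Finset (Vertex d)} {ω : Config d}
    (hS : bx (origin d) m ⊆ S)
    (hZ : ∀ y, InF i0 m n y → y ∉ Z → ∀ z ∈ bx y m, z ∉ S)
    (hc : ∀ e ∈ DD i0 m n S Z ω, ω e = false) (y : Vertex d) (hy : InF i0 m n y) (hyZ : y ∉ Z) :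
    ¬ Good m n ω y := by
  rintro ⟨h1, a, ha, hcb⟩
  obtain ⟨u, v, g1, g2, g3, g4⟩ := rtg_last (S := (S : Set (Vertex d))) hcb (hS ha)
    (hZ y hy hyZ y (self_mem_bx _ _))
  obtain ⟨e, he, ho⟩ := step_iff.1 g3.2.2
  have : e ∈ DD i0 m n S Z ω := by
    rw [mem_DD]
    refine ⟨?_, u, v, y, he, g1, g2, hy, hyZ, h1, ?_⟩
    · rw [← Finset.mem_coe, coe_e2, mem_E2 he]; exact ⟨g3.1, g3.2.1⟩
    · refine rtg_mono ?_ g4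
      rintro x y ⟨k1, k2, k3⟩
      exact ⟨⟨k3.1, k1⟩, ⟨k3.2.1, k2⟩, k3.2.2⟩
  rw [hc e this] at ho
  exact absurd ho (by simp)

lemma rB_none (e : Edge d) : rB d q δ (e, none) = q := by simp [rB]
lemma rB_some (e : Edge d) (c : Col) : rB d q δ (e, some c) = δ := by simp [rB]

def withCol (o : Option Col) : Edge d ↪ BI d := ⟨fun e => (e, o), fun a b h => (Prod.mk.inj h).1⟩

lemma step_case2 (hq1 : (q:ℝ) < 1) (i0 : Fin d) (m n t : ℕ) (S Z : Finset (Vertex d)) (c : Col)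
    (hS : bx (origin d) m ⊆ S)
    (hZ : ∀ y, InF i0 m n y → y ∉ Z → ∀ z ∈ bx y m, z ∉ S) :
    (PB d q δ).real {w | ∀ y, InF i0 m n y → ¬ ((bx y m : Set (Vertex d)) ⊆
      Rnew S (bx (origin d) (n + 2 * m + 1) : Set (Vertex d)) (lay none w) (lay (some c) w))} ≤
    ((1 - (q:ℝ)) ^ t)⁻¹ * (PC d q).real {ω | ∀ y, InF i0 m n y → y ∉ Z → ¬ Good m n ω y} +
      (1 - (δ:ℝ)) ^ t := by
  classical
  set B := bx (origin d) (n + 2 * m + 1) with hB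
  set D := DD i0 m n S Z with hD
  have hBSfin : (E2 ((B : Set (Vertex d)) \ S)).Finite :=
    (E2_fin B).subset (E2_mono Set.sdiff_subset)
  have hDdep : ∀ p : Finset (Edge d) → Prop,
      Dep (E2 ((B : Set (Vertex d)) \ S)) {ω : Config d | p (D ω)} := by
    intro p ω ω' h hω
    have : D ω = D ω' := Finset.Subset.antisymm (DD_congr hZ h) (DD_congr hZ (fun e he => (h e he).symm))
    rw [Set.mem_ofPred_eq] at *
    rwa [← this]
  have hDmeas : ∀ p : Finset (Edge d) → Prop, MeasurableSet {ω : Config d | p (D ω)} :=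
    fun p => (hDdep p).meas hBSfin
  have hDnot : ∀ ω : Config d, ∀ e ∈ D ω, e ∉ E2 ((B : Set (Vertex d)) \ S) := by
    intro ω e he h
    rw [hD, mem_DD] at he
    obtain ⟨_, a, b, _, h2, h3, _⟩ := he
    exact ((mem_E2 h2).1 h).1.2 h3
  have hq0 : 0 < 1 - (q : ℝ) := by linarith
  have hpos : 0 < (1 - (q:ℝ)) ^ t := by positivity
  have hδ0 : 0 ≤ 1 - (δ:ℝ) := by linarith [δ.2.2]
  set N : Set (Config d) := {ω | ∀ y, InF i0 m n y → y ∉ Z → ¬ Good m n ω y} with hN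
  have hNd : Dep (e2 B : Set (Edge d)) N := by
    intro ω ω' hh hω y hy hyZ hgo
    rw [coe_e2] at hh
    exact hω y hy hyZ (good_congr hgo (InF_sub hy) (fun e he => (hh e he).symm))
  have hNm := hNd.meas (Finset.finite_toSet _)
  have h1 : (PC d q).real {ω | (D ω).card ≤ t} ≤ ((1 - (q:ℝ)) ^ t)⁻¹ * (PC d q).real N := by
    refine cond_le_real (PC d q) D _ _ _ (by positivity) (fun X => hDmeas (fun Y => Y = X)) hNm ?_
    intro X
    by_cases hX : X.card ≤ t ∧ ∃ ω₀ : Config d, D ω₀ = X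
    swap
    · have : {ω : Config d | D ω = X} ∩ {ω | (D ω).card ≤ t} = ∅ := by
        ext ω
        simp only [Set.mem_inter_iff, Set.mem_ofPred_eq, Set.mem_empty_iff_false, iff_false]
        rintro ⟨rfl, h⟩; exact hX ⟨h, ω, rfl⟩
      rw [this]
      simp only [measureReal_empty]
      positivity
    obtain ⟨hXt, ω₀, hω₀⟩ := hX
    have hdis : Disjoint (E2 ((B : Set (Vertex d)) \ S)) (X : Set (Edge d)) := by
      rw [Set.disjoint_left]; intro e he he'
      rw [← hω₀] at he'
      exact hDnot ω₀ e he' he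
    have hd2 := dep_cyl X (fun _ => false)
    have hi := indep_real (fun _ : Edge d => q) (hDmeas (fun Y => Y = X))
      (hd2.meas (Finset.finite_toSet _)) (hDdep (fun Y => Y = X)) hd2 hdis
    rw [PM_closed, Finset.prod_const] at hi
    have hle : {ω : Config d | D ω = X} ∩ {ω | ∀ e ∈ X, ω e = false} ⊆ {ω | D ω = X} ∩ N := by
      rintro ω ⟨h1, h2⟩
      refine ⟨h1, ?_⟩
      rw [Set.mem_ofPred_eq] at h1
      rw [← h1] at h2
      exact DD_good hS hZ h2
    have h5 := measureReal_mono (μ := PC d q) hle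
    have h7 := measureReal_mono (μ := PC d q)
      (Set.inter_subset_left : {ω : Config d | D ω = X} ∩ {ω | (D ω).card ≤ t} ⊆ {ω | D ω = X})
    have h8 : (1 - (q:ℝ)) ^ t ≤ (1 - (q:ℝ)) ^ X.card :=
      pow_le_pow_of_le_one hq0.le (by linarith [q.2.1]) hXt
    rw [inv_mul_eq_div, le_div_iff₀ hpos]
    rw [hi] at h5
    exact le_trans (mul_le_mul h7 h8 hpos.le measureReal_nonneg) h5
  set W : Set (BC d) := {w | ∀ y, InF i0 m n y → ¬ ((bx y m : Set (Vertex d)) ⊆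
      Rnew S (B : Set (Vertex d)) (lay none w) (lay (some c) w))} with hW
  have hDdep' : ∀ p : Finset (Edge d) → Prop,
      Dep ((withCol none) '' (E2 ((B : Set (Vertex d)) \ S))) {w : BC d | p (D (lay none w))} := by
    intro p w w' h hw
    exact hDdep p (lay none w) (lay none w') (fun e he => h (e, none) ⟨e, he, rfl⟩) hw
  have hDmeas' : ∀ p : Finset (Edge d) → Prop, MeasurableSet {w : BC d | p (D (lay none w))} :=
    fun p => (hDdep' p).meas (hBSfin.image _)
  have h2 : (PB d q δ).real (W ∩ {w | t < (D (lay none w)).card}) ≤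
      (1 - (δ:ℝ)) ^ t * (PB d q δ).real Set.univ := by
    refine cond_le_real (PB d q δ) (fun w => D (lay none w)) _ _ _ (by positivity)
      (fun X => hDmeas' (fun Y => Y = X)) MeasurableSet.univ ?_
    intro X
    by_cases hX : t < X.card
    swap
    · have : {w : BC d | D (lay none w) = X} ∩ (W ∩ {w | t < (D (lay none w)).card}) = ∅ := by
        ext ω
        simp only [Set.mem_inter_iff, Set.mem_ofPred_eq, Set.mem_empty_iff_false, iff_false]
        rintro ⟨rfl, _, h⟩; exact hX h
      rw [this]
      simp only [measureReal_empty]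
      positivity
    have hd2 := dep_cyl (X.map (withCol (some c))) (fun _ => false)
    have hdis : Disjoint ((withCol none) '' (E2 ((B : Set (Vertex d)) \ S)))
        ((X.map (withCol (some c)) : Finset (BI d)) : Set (BI d)) := by
      rw [Set.disjoint_left]
      rintro _ ⟨e, _, rfl⟩ h
      obtain ⟨e', _, he'⟩ := Finset.mem_map.1 (Finset.mem_coe.1 h)
      have h' := congrArg Prod.snd he'
      exact absurd h' (show (some c : Option Col) ≠ none by simp)
    have hi := indep_real (rB d q δ) (hDmeas' (fun Y => Y = X))
      (hd2.meas (Finset.finite_toSet _)) (hDdep' (fun Y => Y = X)) hd2 hdis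
    rw [PM_closed, Finset.prod_map] at hi
    have hrs : ∀ e : Edge d, rB d q δ (withCol (some c) e) = δ := fun e => rB_some q δ e c
    simp only [hrs, Finset.prod_const] at hi
    have hle : {w : BC d | D (lay none w) = X} ∩ (W ∩ {w | t < (D (lay none w)).card}) ⊆
        {w : BC d | D (lay none w) = X} ∩ {w | ∀ i ∈ X.map (withCol (some c)), w i = false} := by
      rintro w ⟨h1, h2, h3⟩
      refine ⟨h1, fun i hi => ?_⟩
      obtain ⟨e, he, rfl⟩ := Finset.mem_map.1 hi
      rw [Set.mem_ofPred_eq] at h1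
      rw [← h1] at he
      by_contra hcon
      have h' : w (withCol (some c) e) = true := by simpa using hcon
      obtain ⟨y, hy, hy'⟩ := rnew_of_DD (σ := lay (some c) w) hZ he h'
      exact h2 y hy hy'
    refine (measureReal_mono hle).trans ?_
    rw [hi, Set.inter_univ, mul_comm]
    refine mul_le_mul_of_nonneg_right ?_ measureReal_nonneg
    exact pow_le_pow_of_le_one hδ0 (by linarith [δ.2.1]) hX.le
  have h3 : W ⊆ {w | lay none w ∈ {ω | (D ω).card ≤ t}} ∪ (W ∩ {w | t < (D (lay none w)).card}) := by
    intro ω hω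
    by_cases h : (D (lay none ω)).card ≤ t
    · exact Or.inl h
    · exact Or.inr ⟨hω, not_le.1 h⟩
  have h4 := (measureReal_mono (μ := PB d q δ) h3).trans (measureReal_union_le _ _)
  rw [lay_none_law q δ (hDmeas (fun X => X.card ≤ t))] at h4
  rw [probReal_univ, mul_one] at h2
  linarith

lemma step_case1 (i0 : Fin d) (m n k : ℕ) (S Y : Finset (Vertex d)) (c : Col)
    (hY : ∀ y ∈ Y, InF i0 m n y ∧ ∃ a ∈ bx y m, a ∈ S) (hk : k * (4 * m + 1) ^ d ≤ Y.card) :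
    (PB d q δ).real {w | ∀ y, InF i0 m n y → ¬ ((bx y m : Set (Vertex d)) ⊆
      Rnew S (bx (origin d) (n + 2 * m + 1) : Set (Vertex d)) (lay none w) (lay (some c) w))} ≤
     (1 - (δ:ℝ) ^ ((2 * m + 1) ^ d * 3 ^ d)) ^ k := by
  classical
  obtain ⟨X', hX'X, hsep, hcard⟩ := separate (2 * m) Y
  have hkX : k ≤ X'.card := by
    rw [show 2 * (2 * m) + 1 = 4 * m + 1 by ring] at hcard
    exact le_of_mul_le_mul_right (hk.trans hcard) (by positivity)
  let Q : Vertex d → Finset (BI d) := fun y => (e2 (bx y m)).map (withCol (some c))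
  have htr := trials (rB d q δ) X' Q δ δ.2.1 δ.2.2 (by
      intro u _ i hi
      obtain ⟨e, he, rfl⟩ := Finset.mem_map.1 hi
      exact (rB_some q δ e c).ge) ((2 * m + 1) ^ d * 3 ^ d) (by
      intro u _
      rw [Finset.card_map]
      refine (card_e2 _).trans ?_
      rw [card_bx]) (by
      intro u hu v hv huv
      rw [Finset.disjoint_left]
      intro e he he'
      obtain ⟨e1, he1, rfl⟩ := Finset.mem_map.1 he
      obtain ⟨e2', he2, heq⟩ := Finset.mem_map.1 he'
      rw [(withCol (some c)).injective heq] at he2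
      rw [← Finset.mem_coe, coe_e2] at he1 he2
      obtain ⟨a, b, hab, rfl⟩ := edge_exists e1
      apply hsep u hu v hv huv
      exact bx_mono (by omega) (bx_trans ((mem_E2 rfl).1 he1).1 (bx_symm ((mem_E2 rfl).1 he2).1)))
  have hb0 : (0:ℝ) ≤ 1 - (δ:ℝ) ^ ((2 * m + 1) ^ d * 3 ^ d) := by
    linarith [pow_le_one₀ (n := ((2 * m + 1) ^ d * 3 ^ d)) δ.2.1 δ.2.2]
  have hb1 : 1 - (δ:ℝ) ^ ((2 * m + 1) ^ d * 3 ^ d) ≤ 1 := by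
    linarith [pow_nonneg δ.2.1 ((2 * m + 1) ^ d * 3 ^ d)]
  refine le_trans (measureReal_mono ?_) (htr.trans (pow_le_pow_of_le_one hb0 hb1 hkX))
  intro w hw u hu hop
  obtain ⟨hF, a, ha, haS⟩ := hY u (hX'X hu)
  refine hw u hF (fun z hz => ⟨a, haS, ?_⟩)
  have hop' : ∀ e ∈ e2 (bx u m), lay (some c) w e = true :=
    fun e he => hop _ (Finset.mem_map_of_mem _ he)
  have c1 := (bx_open hop' ha).symm.trans (bx_open hop' hz)
  refine rtg_mono ?_ c1
  rintro x y ⟨h1, h2, h3⟩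
  exact ⟨InF_sub hF h1, InF_sub hF h2, Or.inl h3⟩

/-- step lemma, at the origin -/
lemma step_lemma (hq0 : 0 < (q:ℝ)) (hq1 : (q : ℝ) < 1) (hδ : 0 < (δ : ℝ))
    (h0 : PC d q (ZeroToInfinity d) ≠ 0) (i0 : Fin d) (ε : ℝ) (hε : 0 < ε) :
    ∃ m n : ℕ, 1 ≤ m ∧ m ≤ n ∧ ∀ (S : Finset (Vertex d)) (c : Col), bx (origin d) m ⊆ S →
     (PB d q δ).real {w | ∀ y, InF i0 m n y → ¬ ((bx y m : Set (Vertex d)) ⊆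
      Rnew S (bx (origin d) (n + 2 * m + 1) : Set (Vertex d)) (lay none w) (lay (some c) w))} ≤ ε := by
  classical
  obtain ⟨t, ht⟩ := exists_pow_lt_of_lt_one (show 0 < ε / 2 by positivity)
    (show 1 - (δ:ℝ) < 1 by linarith)
  have hq0' : 0 < 1 - (q : ℝ) := by linarith
  have hpos : 0 < (1 - (q:ℝ)) ^ t := by positivity
  obtain ⟨m, hm1, hm⟩ := layer1 q hq0 hq1 h0 i0 (ε / 2 * (1 - (q:ℝ)) ^ t) (by positivity)
  have hδp : 0 < (δ:ℝ) ^ ((2 * m + 1) ^ d * 3 ^ d) := by positivity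
  obtain ⟨k, hk⟩ := exists_pow_lt_of_lt_one hε
    (show 1 - (δ:ℝ) ^ ((2 * m + 1) ^ d * 3 ^ d) < 1 by linarith)
  obtain ⟨n, _, hmn, hn⟩ := hm (k * (4 * m + 1) ^ d) 0
  refine ⟨m, n, hm1, hmn, fun S c hS => ?_⟩
  let Y := (bx (origin d) (n + m + 1)).filter (fun y => InF i0 m n y ∧ ∃ a ∈ bx y m, a ∈ S)
  by_cases hY : k * (4 * m + 1) ^ d ≤ Y.card
  · exact (step_case1 q δ i0 m n k S Y c (fun y hy => (Finset.mem_filter.1 hy).2) hY).trans hk.le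
  · have h1 := step_case2 q δ hq1 i0 m n t S Y c hS (by
      intro y hy hyY z hz hzS
      exact hyY (Finset.mem_filter.2 ⟨InF_bx hy, hy, z, hz, hzS⟩))
    have h2 := hn Y (not_le.1 hY).le
    have h3 : ((1 - (q:ℝ)) ^ t)⁻¹ * (PC d q).real {ω | ∀ y, InF i0 m n y → y ∉ Y → ¬ Good m n ω y}
        ≤ ε / 2 := by
      rw [inv_mul_eq_div, div_le_iff₀ hpos]; exact h2
    linarith

end L4

section L5
open Relation
variable {d : ℕ} (q δ : unitInterval)

def bpull (φ : Vertex d ≃ Vertex d) (h : IsAut φ) (w : BC d) : BC d :=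
  fun i => w (emap φ h i.1, i.2)

lemma bpull_preserves (φ : Vertex d ≃ Vertex d) (h : IsAut φ) {A : Set (BC d)}
    (hA : MeasurableSet A) : (PB d q δ).real {w | bpull φ h w ∈ A} = (PB d q δ).real A := by
  have hinj : Function.Injective (fun i : BI d => ((emap φ h i.1, i.2) : BI d)) := by
    rintro ⟨e, o⟩ ⟨e', o'⟩ hh
    have h1 := (Prod.mk.inj hh).1
    have h2 := (Prod.mk.inj hh).2
    simp only at h1 h2
    rw [emap_inj φ h h1, h2]
  have := PM_map_inj (rB d q δ) (fun i : BI d => ((emap φ h i.1, i.2) : BI d)) hinj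
  have hm : Measurable (fun (w : BC d) (i : BI d) => w (emap φ h i.1, i.2)) := by fun_prop
  have h2 : ((PB d q δ).map (fun w i => w (emap φ h i.1, i.2))) A = PB d q δ A := by
    rw [this]; rfl
  rw [Measure.map_apply hm hA] at h2
  rw [measureReal_def, measureReal_def, ← h2]
  rfl

lemma lay_bpull (φ : Vertex d ≃ Vertex d) (h : IsAut φ) (w : BC d) (o : Option Col) :
    lay o (bpull φ h w) = pull φ h (lay o w) := rfl

lemma Rnew_congr {S B : Set (Vertex d)} {ω σ ω' σ' : Config d}
    (h : ∀ e ∈ E2 B, ω e = ω' e) (h' : ∀ e ∈ E2 B, σ e = σ' e) : Rnew S B ω σ ⊆ Rnew S B ω' σ' := by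
  rintro z ⟨a, ha, hz⟩
  refine ⟨a, ha, rtg_mono ?_ hz⟩
  rintro u v ⟨h1, h2, h3⟩
  refine ⟨h1, h2, ?_⟩
  rcases h3 with h3 | ⟨h3, h4⟩
  · obtain ⟨e, he, ho⟩ := step_iff.1 h3
    exact Or.inl (step_iff.2 ⟨e, he, by rw [← h' e ((mem_E2 he).2 ⟨h1, h2⟩)]; exact ho⟩)
  · obtain ⟨e, he, ho⟩ := step_iff.1 h3
    exact Or.inr ⟨step_iff.2 ⟨e, he, by rw [← h e ((mem_E2 he).2 ⟨h1, h2⟩)]; exact ho⟩, h4⟩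

def FailE (m n : ℕ) (S : Finset (Vertex d)) (c : Col) (x t : Vertex d) : Set (BC d) :=
  {w | ∀ y ∈ bx t n, ¬ ((bx y m : Set (Vertex d)) ⊆
      Rnew S (bx x (n + 2 * m + 1) : Set (Vertex d)) (lay none w) (lay (some c) w))}

lemma steer (m n : ℕ) (i0 i1 : Fin d) (sg : ℤˣ) (x c0 t : Vertex d) (hx : x ∈ bx c0 n)
    (h1 : t i1 = c0 i1 + sg * (n + m + 1 : ℤ)) (h2 : ∀ j, j ≠ i1 → t j = c0 j) :
    ∃ s : Fin d → ℤˣ, ∀ y, InF i0 m n y → affEquiv x (Equiv.swap i0 i1) s y ∈ bx t n := by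
  classical
  rw [mem_bx] at hx
  refine ⟨fun j => if j = i1 then sg else if x j - c0 j ≤ 0 then 1 else -1, fun y hy => ?_⟩
  rw [mem_bx]
  intro j
  rw [affEquiv_apply]
  have hxj := abs_le.1 (hx j)
  by_cases hj : j = i1
  · subst hj
    simp only [if_true, Equiv.swap_apply_right]
    rw [hy.1, h1, abs_le]
    constructor <;> linarith
  · simp only [hj, if_false]
    rw [h2 j hj]
    have hne : Equiv.swap i0 i1 j ≠ i0 := by
      intro h
      apply hj
      have := congrArg (Equiv.swap i0 i1) h
      simpa using this
    have hyj := hy.2 _ hne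
    rw [abs_le]
    split_ifs with h
    · simp only [Units.val_one, one_mul]; constructor <;> linarith
    · simp only [Units.val_neg, Units.val_one]; push Not at h; constructor <;> linarith

lemma gstep (hq0 : 0 < (q:ℝ)) (hq1 : (q : ℝ) < 1) (hδ : 0 < (δ : ℝ))
    (h0 : PC d q (ZeroToInfinity d) ≠ 0) (i0 : Fin d) (ε : ℝ) (hε : 0 < ε) :
    ∃ m n : ℕ, 1 ≤ m ∧ m ≤ n ∧ ∀ (S : Finset (Vertex d)) (c : Col) (i1 : Fin d) (sg : ℤˣ)
      (x c0 t : Vertex d), bx x m ⊆ S → x ∈ bx c0 n →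
      t i1 = c0 i1 + sg * (n + m + 1 : ℤ) → (∀ j, j ≠ i1 → t j = c0 j) →
     (PB d q δ).real (FailE m n S c x t) ≤ ε := by
  classical
  obtain ⟨m, n, hm, hmn, H⟩ := step_lemma q δ hq0 hq1 hδ h0 i0 ε hε
  refine ⟨m, n, hm, hmn, fun S c i1 sg x c0 t hS hx h1 h2 => ?_⟩
  obtain ⟨s, hs⟩ := steer m n i0 i1 sg x c0 t hx h1 h2
  set φ := affEquiv x (Equiv.swap i0 i1) s with hφ
  have hφa : IsAut φ := affEquiv_aut _ _ _
  have hφ0 : φ (origin d) = x := by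
    funext j; rw [hφ, affEquiv_apply]; simp [origin]
  have hbx : ∀ y z r, φ z ∈ bx (φ y) r ↔ z ∈ bx y r := fun y z r => aff_bx _ _ _ _ _ _
  let S' : Finset (Vertex d) := S.map φ.symm.toEmbedding
  have hS'mem : ∀ z, z ∈ S' ↔ φ z ∈ S := by
    intro z; simp [S', Finset.mem_map]
  have hS' : bx (origin d) m ⊆ S' := by
    intro z hz
    rw [hS'mem]; apply hS; rw [← hφ0, hbx]; exact hz
  set W : Set (BC d) := {w | ∀ y, InF i0 m n y → ¬ ((bx y m : Set (Vertex d)) ⊆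
      Rnew S' (bx (origin d) (n + 2 * m + 1) : Set (Vertex d)) (lay none w) (lay (some c) w))} with hW
  have hWd : Dep ((E2 (bx (origin d) (n + 2 * m + 1) : Set (Vertex d))) ×ˢ
      (Set.univ : Set (Option Col))) W := by
    intro w w' hh hw y hy hc
    refine hw y hy (hc.trans (Rnew_congr ?_ ?_))
    · intro e he; exact (hh (e, none) ⟨he, trivial⟩).symm
    · intro e he; exact (hh (e, some c) ⟨he, trivial⟩).symm
  have hWm := hWd.meas ((E2_fin _).prod Set.finite_univ)
  have := H S' c hS'
  rw [← bpull_preserves q δ φ hφa hWm] at this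
  refine le_trans (measureReal_mono ?_) this
  intro w hw y hy hc
  refine hw (φ y) (hs y hy) ?_
  intro z hz
  have hz' : φ.symm z ∈ bx y m := by rw [← hbx]; simpa using hz
  obtain ⟨a, ha, hr⟩ := hc hz'
  refine ⟨φ a, (hS'mem a).1 ha, ?_⟩
  rw [← φ.apply_symm_apply z]
  refine rtg_lift φ ?_ hr
  rintro u v ⟨g1, g2, g3⟩
  refine ⟨?_, ?_, ?_⟩
  · have := (hbx (origin d) u (n + 2 * m + 1)).2 g1; rw [hφ0] at this; exact this
  · have := (hbx (origin d) v (n + 2 * m + 1)).2 g2; rw [hφ0] at this; exact this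
  · rcases g3 with g3 | ⟨g3, g4, g5⟩
    · exact Or.inl (step_pull.1 g3)
    · exact Or.inr ⟨step_pull.1 g3, fun h => g4 ((hS'mem u).2 h), fun h => g5 ((hS'mem v).2 h)⟩

end L5

section L6
open Relation
variable {d : ℕ}

abbrev Site := ℕ × ℕ

def nbr (v w : Site) : Prop :=
  (v.1 = w.1 ∧ (v.2 + 1 = w.2 ∨ w.2 + 1 = v.2)) ∨ (v.2 = w.2 ∧ (v.1 + 1 = w.1 ∨ w.1 + 1 = v.1))

/-- data of the macroscopic exploration -/
structure XP (d : ℕ) where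
  m : ℕ
  n : ℕ
  cen : Site → Vertex d
  col : Site → Col
  S0 : Finset (Vertex d)
  x0 : Vertex d

def XP.L (X : XP d) : ℕ := X.n + 2 * X.m + 1
def XP.Z (X : XP d) : ℕ := 3 * X.n + 3 * X.m + 2

structure XP.OK (X : XP d) : Prop where
  hcen : ∀ v w, nbr v w → X.cen v ∈ bx (X.cen w) (X.n + X.m + 1)
  hcol : ∀ u u', u ≠ u' → X.col u = X.col u' → ∀ z, z ∈ bx (X.cen u) X.Z → z ∉ bx (X.cen u') X.Z
  hx0 : X.x0 ∈ bx (X.cen (0, 0)) X.n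
  hS0 : bx X.x0 X.m ⊆ X.S0

abbrev St (d : ℕ) := Finset (Vertex d) × Finset (Site × Vertex d) × Finset Site

open Classical in
noncomputable def occS (s : St d) : Finset Site := s.2.1.image Prod.fst

lemma mem_occS {s : St d} {v : Site} : v ∈ occS s ↔ ∃ x, (v, x) ∈ s.2.1 := by
  classical
  simp [occS]

open Classical in
noncomputable def exam (s : St d) : Finset Site := occS s ∪ s.2.2

lemma mem_exam {s : St d} {v : Site} : v ∈ exam s ↔ v ∈ occS s ∨ v ∈ s.2.2 := by
  classical
  simp [exam]

abbrev Cd (d : ℕ) := (Site × Vertex d) × Site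

def Cand (s : St d) (p : Cd d) : Prop := p.1 ∈ s.2.1 ∧ nbr p.1.1 p.2 ∧ p.2 ∉ exam s

open Classical in
noncomputable def pick (s : St d) : Option (Cd d) :=
  if h : ∃ p, Cand s p then some h.choose else none

lemma pick_some {s : St d} {p : Cd d} (h : pick s = some p) : Cand s p := by
  classical
  unfold pick at h
  split_ifs at h with h'
  cases h
  exact h'.choose_spec

lemma pick_none {s : St d} (h : pick s = none) : ∀ p, ¬ Cand s p := by
  classical
  unfold pick at h
  split_ifs at h with h'
  exact fun p hp => h' ⟨p, hp⟩

open Classical in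
noncomputable def rnf (S B : Finset (Vertex d)) (ω σ : Config d) : Finset (Vertex d) :=
  (S ∪ B).filter (fun z => z ∈ Rnew (S : Set (Vertex d)) B ω σ)

lemma mem_rnf {S B : Finset (Vertex d)} {ω σ : Config d} {z : Vertex d} :
    z ∈ rnf S B ω σ ↔ z ∈ Rnew (S : Set (Vertex d)) B ω σ := by
  classical
  simp only [rnf, Finset.mem_filter, Finset.mem_union, and_iff_right_iff_imp]
  rintro ⟨a, ha, h⟩
  rcases ReflTransGen.cases_tail h with h | ⟨c, _, h⟩
  · subst h; exact Or.inl ha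
  · exact Or.inr h.2.1

lemma coe_rnf {S B : Finset (Vertex d)} {ω σ : Config d} :
    (rnf S B ω σ : Set (Vertex d)) = Rnew (S : Set (Vertex d)) B ω σ := by
  ext z; exact mem_rnf

lemma sub_rnf (S B : Finset (Vertex d)) (ω σ : Config d) : S ⊆ rnf S B ω σ := by
  intro z hz; rw [mem_rnf]; exact ⟨z, hz, ReflTransGen.refl⟩

lemma rnf_sub (S B : Finset (Vertex d)) (ω σ : Config d) {z : Vertex d} (h : z ∈ rnf S B ω σ) :
    z ∈ S ∨ z ∈ B := by
  classical
  simp only [rnf, Finset.mem_filter, Finset.mem_union] at h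
  exact h.1

/-- determinism with the closure property -/
lemma rnf_det {S B : Finset (Vertex d)} {ω σ ω' σ' : Config d}
    (h : ∀ e ∈ E2 (B : Set (Vertex d)), e ∈ ET (rnf S B ω σ : Set (Vertex d)) →
      e ∉ ET (S : Set (Vertex d)) → ω e = ω' e)
    (h' : ∀ e ∈ E2 (B : Set (Vertex d)), σ e = σ' e) : rnf S B ω' σ' = rnf S B ω σ := by
  apply Finset.Subset.antisymm
  · intro z hz
    rw [mem_rnf] at hz
    obtain ⟨a, ha, hr⟩ := hz
    induction hr with
    | refl => exact sub_rnf _ _ _ _ ha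
    | @tail u v _ huv ih =>
      rw [mem_rnf] at ih ⊢
      obtain ⟨a', ha', hr'⟩ := ih
      refine ⟨a', ha', hr'.tail ⟨huv.1, huv.2.1, ?_⟩⟩
      rcases huv.2.2 with g | ⟨g, g1, g2⟩
      · obtain ⟨e, he, ho⟩ := step_iff.1 g
        exact Or.inl (step_iff.2 ⟨e, he, by rw [h' e ((mem_E2 he).2 ⟨huv.1, huv.2.1⟩)]; exact ho⟩)
      · obtain ⟨e, he, ho⟩ := step_iff.1 g
        refine Or.inr ⟨step_iff.2 ⟨e, he, ?_⟩, g1, g2⟩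
        rw [h e ((mem_E2 he).2 ⟨huv.1, huv.2.1⟩)
          ((mem_ET he).2 (Or.inl (Finset.mem_coe.2 (mem_rnf.2 ⟨a', ha', hr'⟩)))) ?_]
        · exact ho
        · rw [mem_ET he]; rintro (k | k); exacts [g1 k, g2 k]
  · intro z hz
    have hz0 := hz
    rw [mem_rnf] at hz
    obtain ⟨a, ha, hr⟩ := hz
    rw [mem_rnf]
    refine ⟨a, ha, ?_⟩
    clear hz0
    induction hr with
    | refl => exact ReflTransGen.refl
    | @tail u v huu huv ih =>
      refine ih.tail ⟨huv.1, huv.2.1, ?_⟩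
      rcases huv.2.2 with g | ⟨g, g1, g2⟩
      · obtain ⟨e, he, ho⟩ := step_iff.1 g
        exact Or.inl (step_iff.2 ⟨e, he, by rw [← h' e ((mem_E2 he).2 ⟨huv.1, huv.2.1⟩)]; exact ho⟩)
      · obtain ⟨e, he, ho⟩ := step_iff.1 g
        refine Or.inr ⟨step_iff.2 ⟨e, he, ?_⟩, g1, g2⟩
        rw [← h e ((mem_E2 he).2 ⟨huv.1, huv.2.1⟩)
          ((mem_ET he).2 (Or.inl (Finset.mem_coe.2 (mem_rnf.2 ⟨a, ha, huu⟩)))) ?_]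
        · exact ho
        · rw [mem_ET he]; rintro (k | k); exacts [g1 k, g2 k]

variable (X : XP d)

open Classical in
noncomputable def upd (s : St d) (p : Cd d) (R : Finset (Vertex d)) : St d :=
  if h : ∃ y ∈ bx (X.cen p.2) X.n, bx y X.m ⊆ R then
    (R, insert (p.2, h.choose) s.2.1, s.2.2) else (R, s.2.1, insert p.2 s.2.2)

noncomputable def rn (w : BC d) (s : St d) (p : Cd d) : Finset (Vertex d) :=
  rnf s.1 (bx p.1.2 X.L) (lay none w) (lay (some (X.col p.2)) w)

noncomputable def nxt (w : BC d) (s : St d) : St d :=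
  match pick s with
  | none => s
  | some p => upd X s p (rn X w s p)

def ini : St d := (X.S0, {((0, 0), X.x0)}, ∅)

noncomputable def st (w : BC d) : ℕ → St d
  | 0 => ini X
  | t + 1 => nxt X w (st w t)

lemma nxt_none {w : BC d} {s : St d} (h : pick s = none) : nxt X w s = s := by
  simp [nxt, h]
lemma nxt_some {w : BC d} {s : St d} {p : Cd d} (h : pick s = some p) :
    nxt X w s = upd X s p (rn X w s p) := by
  simp [nxt, h]

structure Inv (s : St d) : Prop where
  a : ∀ p ∈ s.2.1, p.2 ∈ bx (X.cen p.1) X.n ∧ bx p.2 X.m ⊆ s.1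
  b : ∀ v ∈ s.2.2, v ∉ occS s
  c : ∀ v ∈ s.2.2, ∃ u ∈ occS s, nbr u v
  e : ∀ v ∈ occS s, ReflTransGen (fun a b => nbr a b ∧ a ∈ occS s ∧ b ∈ occS s) (0, 0) v
  f : (0, 0) ∈ occS s
  g : X.S0 ⊆ s.1
  h : ∀ z ∈ s.1, z ∈ X.S0 ∨ ∃ p ∈ s.2.1, z ∈ bx p.2 X.L

/-- the two cases of an update -/
lemma upd_cases (s : St d) (p : Cd d) (R : Finset (Vertex d)) :
    (∃ y ∈ bx (X.cen p.2) X.n, bx y X.m ⊆ R ∧ (upd X s p R).1 = R ∧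
      (∀ z, z ∈ (upd X s p R).2.1 ↔ z = (p.2, y) ∨ z ∈ s.2.1) ∧
      (∀ v, v ∈ occS (upd X s p R) ↔ v = p.2 ∨ v ∈ occS s) ∧ (upd X s p R).2.2 = s.2.2) ∨
    ((∀ y ∈ bx (X.cen p.2) X.n, ¬ bx y X.m ⊆ R) ∧ (upd X s p R).1 = R ∧
      (upd X s p R).2.1 = s.2.1 ∧ occS (upd X s p R) = occS s ∧
      ∀ v, v ∈ (upd X s p R).2.2 ↔ v = p.2 ∨ v ∈ s.2.2) := by
  classical
  by_cases h : ∃ y ∈ bx (X.cen p.2) X.n, bx y X.m ⊆ R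
  · left
    have hu : upd X s p R = (R, insert (p.2, h.choose) s.2.1, s.2.2) := by
      unfold upd; rw [dif_pos h]
    refine ⟨h.choose, h.choose_spec.1, h.choose_spec.2, by rw [hu], ?_, ?_, by rw [hu]⟩
    · intro z; rw [hu]; exact Finset.mem_insert
    · intro v; rw [hu, mem_occS, mem_occS]
      simp only [Finset.mem_insert, Prod.mk.injEq]
      constructor
      · rintro ⟨x, h | h⟩
        · exact Or.inl h.1
        · exact Or.inr ⟨x, h⟩
      · rintro (h | ⟨x, h⟩)
        · exact ⟨_, Or.inl ⟨h, rfl⟩⟩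
        · exact ⟨x, Or.inr h⟩
  · right
    have hu : upd X s p R = (R, s.2.1, insert p.2 s.2.2) := by
      unfold upd; rw [dif_neg h]
    refine ⟨fun y hy hy' => h ⟨y, hy, hy'⟩, by rw [hu], by rw [hu], by rw [hu]; rfl,
      fun v => by rw [hu]; exact Finset.mem_insert⟩

lemma exam_upd (s : St d) (p : Cd d) (R : Finset (Vertex d)) (v : Site) :
    v ∈ exam (upd X s p R) ↔ v = p.2 ∨ v ∈ exam s := by
  rw [mem_exam, mem_exam]
  rcases upd_cases X s p R with ⟨y, _, _, _, _, h1, h2⟩ | ⟨_, _, _, h1, h2⟩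
  · rw [h1, h2, or_assoc]
  · rw [h1, h2]; tauto

lemma upd_fst (s : St d) (p : Cd d) (R : Finset (Vertex d)) : (upd X s p R).1 = R := by
  rcases upd_cases X s p R with ⟨y, _, _, h, _⟩ | ⟨_, h, _⟩ <;> exact h

lemma inv_upd {s : St d} (hs : Inv X s) {p : Cd d} (hp : Cand s p) {R : Finset (Vertex d)}
    (h1 : s.1 ⊆ R) (h2 : ∀ z ∈ R, z ∈ s.1 ∨ z ∈ bx p.1.2 X.L) : Inv X (upd X s p R) := by
  obtain ⟨hp1, hp2, hp3⟩ := hp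
  have hv : p.1.1 ∈ occS s := mem_occS.2 ⟨p.1.2, hp1⟩
  rw [mem_exam] at hp3
  push Not at hp3
  rcases upd_cases X s p R with ⟨y, hy, hyR, k1, k2, k3, k4⟩ | ⟨k0, k1, k2, k3, k4⟩
  · have mono : ∀ v, ReflTransGen (fun a b => nbr a b ∧ a ∈ occS s ∧ b ∈ occS s) (0, 0) v →
      ReflTransGen (fun a b => nbr a b ∧ a ∈ occS (upd X s p R) ∧ b ∈ occS (upd X s p R)) (0, 0) v := by
      intro v h
      refine rtg_mono ?_ h
      rintro a b ⟨g1, g2, g3⟩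
      exact ⟨g1, (k3 a).2 (Or.inr g2), (k3 b).2 (Or.inr g3)⟩
    constructor
    · intro z hz
      rw [k1]
      rcases (k2 z).1 hz with rfl | hz
      · exact ⟨hy, hyR⟩
      · exact ⟨(hs.a z hz).1, (hs.a z hz).2.trans h1⟩
    · intro v hv' hv2
      rw [k4] at hv'
      rcases (k3 v).1 hv2 with rfl | hv2
      · exact hp3.2 hv'
      · exact hs.b v hv' hv2
    · intro v hv'
      rw [k4] at hv'
      obtain ⟨u, hu, hu'⟩ := hs.c v hv'
      exact ⟨u, (k3 u).2 (Or.inr hu), hu'⟩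
    · intro v hv'
      rcases (k3 v).1 hv' with rfl | hv2
      · exact (mono _ (hs.e _ hv)).tail ⟨hp2, (k3 _).2 (Or.inr hv), hv'⟩
      · exact mono _ (hs.e _ hv2)
    · exact (k3 _).2 (Or.inr hs.f)
    · rw [k1]; exact hs.g.trans h1
    · intro z hz
      rw [k1] at hz
      rcases h2 z hz with hz | hz
      · rcases hs.h z hz with h | ⟨r, hr, hr'⟩
        · exact Or.inl h
        · exact Or.inr ⟨r, (k2 r).2 (Or.inr hr), hr'⟩
      · exact Or.inr ⟨p.1, (k2 _).2 (Or.inr hp1), hz⟩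
  · constructor
    · intro z hz
      rw [k2] at hz; rw [k1]
      exact ⟨(hs.a z hz).1, (hs.a z hz).2.trans h1⟩
    · intro v hv'
      rw [k4] at hv'
      rw [k3]
      rcases hv' with rfl | hv'
      · exact hp3.1
      · exact hs.b v hv'
    · intro v hv'
      rw [k4] at hv'
      rw [k3]
      rcases hv' with rfl | hv'
      · exact ⟨_, hv, hp2⟩
      · exact hs.c v hv'
    · rw [k3]; exact hs.e
    · rw [k3]; exact hs.f
    · rw [k1]; exact hs.g.trans h1
    · intro z hz
      rw [k1] at hz
      rw [k2]
      rcases h2 z hz with hz | hz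
      · exact hs.h z hz
      · exact Or.inr ⟨p.1, hp1, hz⟩

lemma inv_nxt {w : BC d} {s : St d} (hs : Inv X s) : Inv X (nxt X w s) := by
  rcases h : pick s with _ | p
  · rw [nxt_none X h]; exact hs
  · rw [nxt_some X h]
    exact inv_upd X hs (pick_some h) (sub_rnf _ _ _ _) (fun z hz => rnf_sub _ _ _ _ hz)

lemma inv_st (hX : X.OK) (w : BC d) (t : ℕ) : Inv X (st X w t) := by
  induction t with
  | zero =>
    have ho : ∀ v, v ∈ occS (ini X) ↔ v = (0, 0) := by
      intro v; rw [mem_occS]; simp [ini]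
    constructor
    · intro p hp
      have : p = ((0, 0), X.x0) := by simpa [st, ini] using hp
      subst this
      exact ⟨hX.hx0, hX.hS0⟩
    · intro v hv; simp [st, ini] at hv
    · intro v hv; simp [st, ini] at hv
    · intro v hv; rw [(ho v).1 hv]
    · exact (ho _).2 rfl
    · exact Finset.Subset.refl _
    · intro z hz; exact Or.inl hz
  | succ t ih => exact inv_nxt X ih

lemma nxt_mono1 (w : BC d) (s : St d) : s.1 ⊆ (nxt X w s).1 := by
  rcases h : pick s with _ | p
  · rw [nxt_none X h]
  · rw [nxt_some X h, upd_fst]; exact sub_rnf _ _ _ _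

lemma nxt_exam (w : BC d) (s : St d) : exam s ⊆ exam (nxt X w s) := by
  rcases h : pick s with _ | p
  · rw [nxt_none X h]
  · rw [nxt_some X h]; intro v hv; exact (exam_upd X s p _ v).2 (Or.inr hv)

lemma nxt_fail (w : BC d) (s : St d) : s.2.2 ⊆ (nxt X w s).2.2 := by
  rcases h : pick s with _ | p
  · rw [nxt_none X h]
  · rw [nxt_some X h]
    rcases upd_cases X s p (rn X w s p) with ⟨y, _, _, _, _, h1, h2⟩ | ⟨_, _, _, h1, h2⟩
    · rw [h2]
    · intro v hv; exact (h2 v).2 (Or.inr hv)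

/-- coordinates revealed by a state -/
def Coord (s : St d) : Set (BI d) :=
  {i | (i.2 = none ∧ i.1 ∈ ET (s.1 : Set (Vertex d)) ∧ i.1 ∉ ET (X.S0 : Set (Vertex d))) ∨
    ∃ u ∈ exam s, i.2 = some (X.col u) ∧ i.1 ∈ E2 (bx (X.cen u) X.Z : Set (Vertex d))}

lemma Coord_fin (s : St d) : (Coord X s).Finite := by
  have h1 : (ET (s.1 : Set (Vertex d)) ∪ ⋃ u ∈ exam s, E2 (bx (X.cen u) X.Z : Set (Vertex d))).Finite :=
    (ET_fin _).1.union (Set.Finite.biUnion (Finset.finite_toSet _) (fun u _ => E2_fin _))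
  refine (h1.prod (Set.finite_univ (α := Option Col))).subset ?_
  rintro ⟨e, o⟩ (⟨_, h, _⟩ | ⟨u, hu, _, h⟩)
  · exact ⟨Or.inl h, trivial⟩
  · exact ⟨Or.inr (Set.mem_biUnion hu h), trivial⟩

lemma Coord_mono {s s' : St d} (h1 : s.1 ⊆ s'.1) (h2 : exam s ⊆ exam s') : Coord X s ⊆ Coord X s' := by
  rintro ⟨e, o⟩ (⟨h, h', h''⟩ | ⟨u, hu, h⟩)
  · exact Or.inl ⟨h, ET_mono (Finset.coe_subset.2 h1) h', h''⟩
  · exact Or.inr ⟨u, h2 hu, h⟩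

lemma box_zone (hX : X.OK) {s : St d} (hs : Inv X s) {p : Cd d} (hp : Cand s p) :
    bx p.1.2 X.L ⊆ bx (X.cen p.2) X.Z := by
  intro z hz
  have h1 := (hs.a _ hp.1).1
  have h2 := hX.hcen _ _ hp.2.1
  have := bx_trans (bx_trans h2 h1) hz
  refine bx_mono ?_ this
  unfold XP.L XP.Z; omega

lemma st_det (hX : X.OK) (w w' : BC d) (t : ℕ) (h : ∀ i ∈ Coord X (st X w t), w i = w' i) :
    st X w' t = st X w t := by
  induction t with
  | zero => rfl
  | succ t ih =>
    have hs := inv_st X hX w t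
    have ih' := ih (fun i hi => h i (Coord_mono X (nxt_mono1 X w _) (nxt_exam X w _) hi))
    show nxt X w' (st X w' t) = nxt X w (st X w t)
    rw [ih']
    change ∀ i ∈ Coord X (nxt X w (st X w t)), w i = w' i at h
    generalize st X w t = s at *
    rcases hp : pick s with _ | p
    · rw [nxt_none X hp, nxt_none X hp]
    · rw [nxt_some X hp] at h
      rw [nxt_some X hp, nxt_some X hp]
      congr 1
      refine rnf_det ?_ ?_
      · intro e he h1 h2
        refine h (e, none) (Or.inl ⟨rfl, ?_, fun h3 => h2 (ET_mono (Finset.coe_subset.2 hs.g) h3)⟩)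
        rw [upd_fst]; exact h1
      · intro e he
        refine h (e, some (X.col p.2)) (Or.inr ⟨p.2, (exam_upd X s p _ _).2 (Or.inl rfl), rfl, ?_⟩)
        exact E2_mono (Finset.coe_subset.2 (box_zone X hX hs (pick_some hp))) he

lemma st_dep (hX : X.OK) (t : ℕ) (s : St d) : Dep (Coord X s) {w : BC d | st X w t = s} := by
  intro w w' h hw
  rw [Set.mem_ofPred_eq] at *
  subst hw
  exact st_det X hX w w' t h

lemma st_meas (hX : X.OK) (t : ℕ) (s : St d) : MeasurableSet {w : BC d | st X w t = s} :=
  (st_dep X hX t s).meas (Coord_fin X s)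

/-- global locality -/
lemma st_glob (hX : X.OK) (T : Set (Vertex d))
    (hT : ∀ v x, x ∈ bx (X.cen v) X.n → (bx x X.L : Set (Vertex d)) ⊆ T) (w w' : BC d)
    (h : ∀ i : BI d, i.1 ∈ E2 T → ¬ (i.2 = none ∧ i.1 ∈ ET (X.S0 : Set (Vertex d))) → w i = w' i)
    (t : ℕ) : st X w' t = st X w t := by
  induction t with
  | zero => rfl
  | succ t ih =>
    have hs := inv_st X hX w t
    show nxt X w' (st X w' t) = nxt X w (st X w t)
    rw [ih]
    generalize st X w t = s at *
    rcases hp : pick s with _ | p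
    · rw [nxt_none X hp, nxt_none X hp]
    · rw [nxt_some X hp, nxt_some X hp]
      have hB := hT _ _ (hs.a _ (pick_some hp).1).1
      congr 1
      refine rnf_det ?_ ?_
      · intro e he h1 h2
        exact h (e, none) (E2_mono hB he)
          (fun h3 => h2 (ET_mono (Finset.coe_subset.2 hs.g) h3.2))
      · intro e he
        exact h (e, some (X.col p.2)) (E2_mono hB he) (fun h3 => by simp at h3)

/-- union of all layers -/
noncomputable def eta (w : BC d) : Config d :=
  open Classical in fun e => decide (∃ o, w (e, o) = true)

lemma step_eta {w : BC d} {o : Option Col} {x y : Vertex d} (h : step (lay o w) x y) :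
    step (eta w) x y := by
  classical
  obtain ⟨e, he, ho⟩ := step_iff.1 h
  refine step_iff.2 ⟨e, he, ?_⟩
  simp only [eta, decide_eq_true_eq]
  exact ⟨o, ho⟩

lemma st_conn (w : BC d) (t : ℕ) : ∀ z ∈ (st X w t).1, ∃ a ∈ X.S0, Conn (eta w) a z := by
  induction t with
  | zero => intro z hz; exact ⟨z, hz, ReflTransGen.refl⟩
  | succ t ih =>
    change ∀ z ∈ (nxt X w (st X w t)).1, _
    generalize st X w t = s at *
    rcases hp : pick s with _ | p
    · rw [nxt_none X hp]; exact ih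
    · rw [nxt_some X hp, upd_fst]
      intro z hz
      obtain ⟨a, ha, hr⟩ := mem_rnf.1 hz
      obtain ⟨b, hb, hc⟩ := ih a ha
      refine ⟨b, hb, hc.trans (rtg_mono ?_ hr)⟩
      rintro u v ⟨_, _, h | h⟩
      · exact step_eta h
      · exact step_eta h.1

end L6

section L7
open Relation
variable {d : ℕ} (X : XP d) (q δ : unitInterval)

lemma lint_cond_le {Ω α : Type*} [MeasurableSpace Ω] [Countable α] (P : Measure Ω) (f : Ω → α)
    (F G : Ω → ENNReal) (hf : ∀ a, MeasurableSet {ω | f ω = a})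
    (h : ∀ a, ∫⁻ ω in {ω | f ω = a}, F ω ∂P ≤ ∫⁻ ω in {ω | f ω = a}, G ω ∂P) :
    ∫⁻ ω, F ω ∂P ≤ ∫⁻ ω, G ω ∂P := by
  have hu : (⋃ a, {ω | f ω = a}) = Set.univ := by ext; simp
  have hd : Pairwise (Function.onFun Disjoint (fun a => {ω | f ω = a})) := by
    intro a b hab
    rw [Function.onFun, Set.disjoint_left]
    rintro ω h1 h2
    exact hab (h1.symm.trans h2)
  rw [← setLIntegral_univ F, ← setLIntegral_univ G, ← hu, lintegral_iUnion hf hd,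
    lintegral_iUnion hf hd]
  exact ENNReal.tsum_le_tsum h

lemma failE_dep (hX : X.OK) {s : St d} {p : Cd d} :
    Dep {i : BI d | i.1 ∈ E2 (bx p.1.2 X.L : Set (Vertex d)) ∧
      ((i.2 = none ∧ i.1 ∉ ET (s.1 : Set (Vertex d))) ∨ i.2 = some (X.col p.2))}
      (FailE X.m X.n s.1 (X.col p.2) p.1.2 (X.cen p.2)) := by
  intro w w' h hw y hy hc
  have : rn X w s p = rn X w' s p := by
    refine rnf_det ?_ ?_
    · intro e he h1 h2
      exact (h (e, none) ⟨he, Or.inl ⟨rfl, h2⟩⟩).symm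
    · intro e he
      exact (h (e, some (X.col p.2)) ⟨he, Or.inr rfl⟩).symm
  refine hw y hy (hc.trans ?_)
  have h2 : Rnew (s.1 : Set (Vertex d)) (bx p.1.2 X.L) (lay none w) (lay (some (X.col p.2)) w) =
    Rnew (s.1 : Set (Vertex d)) (bx p.1.2 X.L) (lay none w') (lay (some (X.col p.2)) w') := by
    rw [← coe_rnf, ← coe_rnf]; exact congrArg _ this
  exact h2.ge

def StepHyp (ε : ℝ) : Prop := ∀ (S : Finset (Vertex d)) (c : Col) (v u : Site) (x : Vertex d),
  nbr v u → bx x X.m ⊆ S → x ∈ bx (X.cen v) X.n →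
  (PB d q δ).real (FailE X.m X.n S c x (X.cen u)) ≤ ε

lemma fail_cond (hX : X.OK) (ε : ℝ) (hstep : StepHyp X q δ ε) (t : ℕ) (s : St d) (p : Cd d)
    (hp : pick s = some p) :
    PB d q δ ({w | st X w t = s} ∩ FailE X.m X.n s.1 (X.col p.2) p.1.2 (X.cen p.2)) ≤
      ENNReal.ofReal ε * PB d q δ {w | st X w t = s} := by
  by_cases hne : ∃ w₀, st X w₀ t = s
  swap
  · have : {w : BC d | st X w t = s} = ∅ := by
      ext w; simp only [Set.mem_ofPred_eq, Set.mem_empty_iff_false, iff_false]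
      exact fun h => hne ⟨w, h⟩
    rw [this]; simp
  obtain ⟨w₀, hw₀⟩ := hne
  have hs : Inv X s := hw₀ ▸ inv_st X hX w₀ t
  have hc := pick_some hp
  have hfin : Set.Finite {i : BI d | i.1 ∈ E2 (bx p.1.2 X.L : Set (Vertex d)) ∧
      ((i.2 = none ∧ i.1 ∉ ET (s.1 : Set (Vertex d))) ∨ i.2 = some (X.col p.2))} :=
    ((E2_fin _).prod (Set.finite_univ (α := Option Col))).subset (fun i hi => ⟨hi.1, trivial⟩)
  have hFd := failE_dep X hX (s := s) (p := p)
  have hdis : Disjoint (Coord X s) {i : BI d | i.1 ∈ E2 (bx p.1.2 X.L : Set (Vertex d)) ∧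
      ((i.2 = none ∧ i.1 ∉ ET (s.1 : Set (Vertex d))) ∨ i.2 = some (X.col p.2))} := by
    rw [Set.disjoint_left]
    rintro ⟨e, o⟩ h1 ⟨h2, h3⟩
    simp only at h2 h3
    rcases h1 with ⟨k1, k2, _⟩ | ⟨u, k1, k2, k3⟩
    · simp only at k1 k2
      rcases h3 with h3 | h3
      · exact h3.2 k2
      · rw [k1] at h3; cases h3
    · simp only at k2 k3
      rcases h3 with h3 | h3
      · rw [k2] at h3; cases h3.1
      · rw [k2] at h3
        have hne : u ≠ p.2 := by rintro rfl; exact hc.2.2 k1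
        obtain ⟨a, b, hab, rfl⟩ := edge_exists e
        have ha := ((mem_E2 rfl).1 k3).1
        have ha' := ((mem_E2 rfl).1 h2).1
        exact hX.hcol u p.2 hne (Option.some.inj h3) a ha (box_zone X hX hs hc ha')
  rw [indep (rB d q δ) (st_meas X hX t s) (hFd.meas hfin) (st_dep X hX t s) hFd hdis, mul_comm]
  gcongr
  have := hstep s.1 (X.col p.2) p.1.1 p.2 p.1.2 hc.2.1 (hs.a _ hc.1).2 (hs.a _ hc.1).1
  rw [measureReal_def] at this
  rw [← ENNReal.ofReal_toReal (measure_ne_top (PB d q δ) (FailE X.m X.n s.1 (X.col p.2) p.1.2 (X.cen p.2)))]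
  exact ENNReal.ofReal_le_ofReal this

open Classical in
noncomputable def MM (a : ENNReal) (D : Finset Site) (s : St d) : ENNReal :=
  if Disjoint D (occS s) then a ^ (D \ s.2.2).card else 0

lemma MM_upd_notin {a : ENNReal} (ha : a ≤ 1) (D : Finset Site) (s : St d) (p : Cd d)
    (R : Finset (Vertex d)) (h : p.2 ∉ D) : MM a D (upd X s p R) ≤ MM a D s := by
  classical
  rcases upd_cases X s p R with ⟨y, _, _, _, _, h1, h2⟩ | ⟨_, _, _, h1, h2⟩
  · unfold MM
    have : Disjoint D (occS (upd X s p R)) ↔ Disjoint D (occS s) := by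
      rw [Finset.disjoint_left, Finset.disjoint_left]
      constructor
      · intro g v hv hv'; exact g hv ((h1 v).2 (Or.inr hv'))
      · intro g v hv hv'
        rcases (h1 v).1 hv' with rfl | hv'
        · exact h hv
        · exact g hv hv'
    rw [h2]; simp only [this]; rfl
  · unfold MM
    rw [h1]
    have : D \ (upd X s p R).2.2 = D \ s.2.2 := by
      ext v; simp only [Finset.mem_sdiff, h2, Finset.mem_insert]
      constructor
      · rintro ⟨g1, g2⟩; push Not at g2; exact ⟨g1, g2.2⟩
      · rintro ⟨g1, g2⟩; refine ⟨g1, ?_⟩; rintro (rfl | g3); exacts [h g1, g2 g3]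
    rw [this]

lemma MM_upd_in {a : ENNReal} (D : Finset Site) (s : St d) (p : Cd d)
    (R : Finset (Vertex d)) (h : p.2 ∈ D) (hf : p.2 ∉ s.2.2) :
    MM a D (upd X s p R) * a ≤ MM a D s ∧
      ((∃ y ∈ bx (X.cen p.2) X.n, bx y X.m ⊆ R) → MM a D (upd X s p R) = 0) := by
  classical
  rcases upd_cases X s p R with ⟨y, _, _, _, _, h1, h2⟩ | ⟨h0, _, _, h1, h2⟩
  · have : MM a D (upd X s p R) = 0 := by
      unfold MM
      rw [if_neg]
      rw [Finset.disjoint_left]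
      exact fun g => g h ((h1 _).2 (Or.inl rfl))
    rw [this]; simp
  · refine ⟨?_, fun ⟨y, hy, hy'⟩ => absurd hy' (h0 y hy)⟩
    unfold MM
    rw [h1]
    split_ifs
    · have : D \ s.2.2 = insert p.2 (D \ (upd X s p R).2.2) := by
        ext v; simp only [Finset.mem_sdiff, h2, Finset.mem_insert]
        by_cases hv : v = p.2
        · subst hv; simp [h, hf]
        · simp [hv]
      rw [this, Finset.card_insert_of_notMem, pow_succ]
      simp [h2]
    · simp

lemma MM_step (hX : X.OK) (ε : ℝ) (hε : 0 < ε) (hε1 : ε ≤ 1) (hstep : StepHyp X q δ ε)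
    (D : Finset Site) (t : ℕ) :
    ∫⁻ w, MM (ENNReal.ofReal ε) D (st X w (t + 1)) ∂(PB d q δ) ≤
      ∫⁻ w, MM (ENNReal.ofReal ε) D (st X w t) ∂(PB d q δ) := by
  classical
  set a := ENNReal.ofReal ε with ha
  have ha1 : a ≤ 1 := by rw [ha]; exact ENNReal.ofReal_le_one.2 hε1
  have ha0 : a ≠ 0 := by rw [ha]; simpa using hε
  have hat : a ≠ ⊤ := ENNReal.ofReal_ne_top
  refine lint_cond_le (PB d q δ) (fun w => st X w t) _ _ (st_meas X hX t) (fun s => ?_)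
  have e1 : ∫⁻ w in {w | st X w t = s}, MM a D (st X w (t + 1)) ∂(PB d q δ) =
      ∫⁻ w in {w | st X w t = s}, MM a D (nxt X w s) ∂(PB d q δ) := by
    refine setLIntegral_congr_fun (st_meas X hX t s) ?_
    intro w hw
    have hw' : st X w t = s := hw
    simp only [st, hw']
  have e2 : ∫⁻ w in {w | st X w t = s}, MM a D (st X w t) ∂(PB d q δ) =
      ∫⁻ w in {w | st X w t = s}, MM a D s ∂(PB d q δ) := by
    refine setLIntegral_congr_fun (st_meas X hX t s) ?_
    intro w hw
    have hw' : st X w t = s := hw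
    simp only [hw']
  rw [e1, e2]
  rcases hp : pick s with _ | p
  · simp only [nxt_none X hp]; exact le_rfl
  simp only [nxt_some X hp]
  by_cases hD : p.2 ∈ D
  swap
  · exact lintegral_mono (fun w => MM_upd_notin X ha1 D s p _ hD)
  have hf : p.2 ∉ s.2.2 := fun h => (pick_some hp).2.2 (mem_exam.2 (Or.inr h))
  set F := FailE X.m X.n s.1 (X.col p.2) p.1.2 (X.cen p.2) with hF
  have hFm : MeasurableSet F := by
    refine (failE_dep X hX (s := s) (p := p)).meas ?_
    exact ((E2_fin _).prod (Set.finite_univ (α := Option Col))).subset (fun i hi => ⟨hi.1, trivial⟩)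
  have hpt : ∀ w, MM a D (upd X s p (rn X w s p)) ≤ F.indicator (fun _ => MM a D s / a) w := by
    intro w
    obtain ⟨h1, h2⟩ := MM_upd_in X (a := a) D s p (rn X w s p) hD hf
    by_cases hw : w ∈ F
    · rw [Set.indicator_of_mem hw]
      rwa [ENNReal.le_div_iff_mul_le (Or.inl ha0) (Or.inl hat)]
    · rw [h2]
      · simp
      · rw [hF, FailE, Set.mem_ofPred_eq] at hw
        push Not at hw
        obtain ⟨y, hy, hy'⟩ := hw
        refine ⟨y, hy, fun z hz => mem_rnf.2 (hy' hz)⟩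
  refine (lintegral_mono hpt).trans ?_
  rw [lintegral_indicator_const hFm, setLIntegral_const, Measure.restrict_apply hFm, Set.inter_comm]
  calc MM a D s / a * PB d q δ ({w | st X w t = s} ∩ F)
      ≤ MM a D s / a * (a * PB d q δ {w | st X w t = s}) := by
        gcongr; exact fail_cond X q δ hX ε hstep t s p hp
    _ = MM a D s * PB d q δ {w | st X w t = s} := by
        rw [← mul_assoc, ENNReal.div_mul_cancel ha0 hat]

lemma fail_sub (w : BC d) : Monotone (fun t => (st X w t).2.2) :=
  monotone_nat_of_le_succ (fun t => nxt_fail X w _)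

lemma fail_prob (hX : X.OK) (ε : ℝ) (hε : 0 < ε) (hε1 : ε ≤ 1) (hstep : StepHyp X q δ ε)
    (D : Finset Site) :
    PB d q δ {w | ∃ t, D ⊆ (st X w t).2.2} ≤ ENNReal.ofReal ε ^ D.card := by
  classical
  have key : ∀ t, ∫⁻ w, MM (ENNReal.ofReal ε) D (st X w t) ∂(PB d q δ) ≤ ENNReal.ofReal ε ^ D.card := by
    intro t
    induction t with
    | zero =>
      refine (lintegral_mono (g := fun _ => ENNReal.ofReal ε ^ D.card) ?_).trans (by simp)
      intro w
      by_cases hd : Disjoint D (occS (st X w 0))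
      · simp [MM, if_pos hd]; simp [st, ini]
      · simp [MM, if_neg hd]
    | succ t ih => exact (MM_step X q δ hX ε hε hε1 hstep D t).trans ih
  have e : {w : BC d | ∃ t, D ⊆ (st X w t).2.2} = ⋃ t, {w | D ⊆ (st X w t).2.2} := by ext; simp
  rw [e]
  have hm : Monotone (fun t => {w : BC d | D ⊆ (st X w t).2.2}) := by
    intro t t' h w hw
    exact Finset.Subset.trans hw (fail_sub X w h)
  rw [hm.measure_iUnion]
  refine iSup_le (fun t => ?_)
  refine le_trans ?_ (key t)
  have hms : MeasurableSet {w : BC d | D ⊆ (st X w t).2.2} := by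
    have : {w : BC d | D ⊆ (st X w t).2.2} = ⋃ s ∈ {s : St d | D ⊆ s.2.2}, {w | st X w t = s} := by
      ext w; simp
    rw [this]
    exact MeasurableSet.biUnion (Set.to_countable _) (fun s _ => st_meas X hX t s)
  rw [← lintegral_indicator_one hms]
  refine lintegral_mono (fun w => ?_)
  by_cases hw : w ∈ {w : BC d | D ⊆ (st X w t).2.2}
  · rw [Set.indicator_of_mem hw]
    have hw' : D ⊆ (st X w t).2.2 := hw
    simp only [MM]
    rw [if_pos, Finset.sdiff_eq_empty_iff_subset.2 hw']
    · simp
    · rw [Finset.disjoint_left]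
      exact fun v hv => (inv_st X hX w t).b v (hw' hv)
  · rw [Set.indicator_of_notMem hw]; simp

/-- non-termination yields infinitely many occupied sites -/
lemma nonterm (hX : X.OK) (w : BC d) (h : ∀ t, pick (st X w t) ≠ none) :
    {v | ∃ t, v ∈ occS (st X w t)}.Infinite := by
  classical
  intro hfin
  have hcard : ∀ t, t ≤ (exam (st X w t)).card := by
    intro t
    induction t with
    | zero => simp
    | succ t ih =>
      obtain ⟨p, hp⟩ := Option.ne_none_iff_exists'.1 (h t)
      have hn : st X w (t + 1) = upd X (st X w t) p (rn X w (st X w t) p) := nxt_some X hp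
      have : insert p.2 (exam (st X w t)) ⊆ exam (st X w (t + 1)) := by
        intro v hv
        rw [hn, exam_upd]
        exact Finset.mem_insert.1 hv
      have := Finset.card_le_card this
      rw [Finset.card_insert_of_notMem (pick_some hp).2.2] at this
      omega
  let O := hfin.toFinset
  let N : Finset Site := O ∪ O.biUnion (fun v => {(v.1, v.2 + 1), (v.1, v.2 - 1), (v.1 + 1, v.2), (v.1 - 1, v.2)})
  have hN : ∀ t, exam (st X w t) ⊆ N := by
    intro t v hv
    have hocc : ∀ u ∈ occS (st X w t), u ∈ O := fun u hu => hfin.mem_toFinset.2 ⟨t, hu⟩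
    rcases mem_exam.1 hv with hv | hv
    · exact Finset.mem_union_left _ (hocc v hv)
    · obtain ⟨u, hu, hn⟩ := (inv_st X hX w t).c v hv
      refine Finset.mem_union_right _ (Finset.mem_biUnion.2 ⟨u, hocc u hu, ?_⟩)
      obtain ⟨v1, v2⟩ := v
      obtain ⟨u1, u2⟩ := u
      simp only [nbr] at hn
      simp only [Finset.mem_insert, Finset.mem_singleton, Prod.mk.injEq]
      omega
  have := (hcard (N.card + 1)).trans (Finset.card_le_card (hN _))
  omega

end L7

section L8
open Relation

lemma nbr_symm {u v : Site} (h : nbr u v) : nbr v u := by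
  unfold nbr at *; omega

/-- a discrete potential on the quadrant -/
lemma pot (φ : Site → Site → ZMod 2) (hs : ∀ u v, φ u v = φ v u)
    (hsq : ∀ x y, φ (x, y) (x + 1, y) + φ (x + 1, y) (x + 1, y + 1) =
      φ (x, y) (x, y + 1) + φ (x, y + 1) (x + 1, y + 1)) :
    ∃ B : Site → ZMod 2, B (0, 0) = 0 ∧ ∀ u v, nbr u v → B v = B u + φ u v := by
  let B : Site → ZMod 2 := fun v => (∑ i ∈ Finset.range v.1, φ (i, 0) (i + 1, 0)) +
    ∑ j ∈ Finset.range v.2, φ (v.1, j) (v.1, j + 1)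
  have hv : ∀ x y, B (x, y + 1) = B (x, y) + φ (x, y) (x, y + 1) := by
    intro x y
    simp only [B, Finset.sum_range_succ]; ring
  have hh : ∀ y x, B (x + 1, y) = B (x, y) + φ (x, y) (x + 1, y) := by
    intro y
    induction y with
    | zero => intro x; simp only [B, Finset.sum_range_succ]; simp
    | succ y ih =>
      intro x
      rw [hv, hv, ih]
      have := hsq x y
      linear_combination this
  have two : ∀ a b : ZMod 2, a + b + b = a := by decide
  refine ⟨B, by simp [B], ?_⟩
  rintro ⟨u1, u2⟩ ⟨v1, v2⟩ (⟨h1, h2 | h2⟩ | ⟨h1, h2 | h2⟩) <;> simp only at h1 h2 <;> subst h1 h2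
  · exact hv _ _
  · rw [hv, hs, two]
  · exact hh _ _
  · rw [hh, hs, two]

def king (u v : Site) : Prop := u.1 ≤ v.1 + 1 ∧ v.1 ≤ u.1 + 1 ∧ u.2 ≤ v.2 + 1 ∧ v.2 ≤ u.2 + 1

lemma king_symm {u v : Site} (h : king u v) : king v u := by unfold king at *; omega

section
variable (O : Finset Site) (h : ℕ)

def oo (a b : Site) : Prop := nbr a b ∧ a ∉ O ∧ b ∉ O
def Ext (v : Site) : Prop := v ∉ O ∧ ReflTransGen (oo O) v (h + 1, h + 1)
def Bd (v : Site) : Prop := Ext O h v ∧ ∃ u ∈ O, nbr u v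

lemma oo_symm {a b : Site} (hh : oo O a b) : oo O b a := ⟨nbr_symm hh.1, hh.2.2, hh.2.1⟩

lemma row_path (a b : ℕ) (hr : ∀ j, a ≤ j → (j, b) ∉ O) (i : ℕ) :
    ReflTransGen (oo O) (a, b) (a + i, b) := by
  induction i with
  | zero => exact ReflTransGen.refl
  | succ i ih =>
    refine ih.tail ⟨Or.inr ⟨rfl, Or.inl rfl⟩, hr _ (by omega), hr _ (by omega)⟩

lemma col_path (a b : ℕ) (hr : ∀ j, b ≤ j → (a, j) ∉ O) (i : ℕ) :
    ReflTransGen (oo O) (a, b) (a, b + i) := by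
  induction i with
  | zero => exact ReflTransGen.refl
  | succ i ih =>
    refine ih.tail ⟨Or.inl ⟨rfl, Or.inl rfl⟩, hr _ (by omega), hr _ (by omega)⟩

variable {O h}

lemma far_ext (hle : ∀ v ∈ O, v.1 ≤ h ∧ v.2 ≤ h) (v : Site) (hv : h < v.1 ∨ h < v.2) : Ext O h v := by
  have hn : ∀ u : Site, h < u.1 ∨ h < u.2 → u ∉ O := by
    intro u hu hu'
    have := hle u hu'
    omega
  refine ⟨hn v hv, ?_⟩
  obtain ⟨a, b⟩ := v
  have r1 : ∀ a, h < a → ∀ b, ReflTransGen (oo O) (a, 0) (a, b) := by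
    intro a ha b
    have := col_path O a 0 (fun j _ => hn _ (Or.inl ha)) b
    simpa using this
  have r2 : ∀ b, h < b → ∀ a, ReflTransGen (oo O) (0, b) (a, b) := by
    intro b hb a
    have := row_path O 0 b (fun j _ => hn _ (Or.inr hb)) a
    simpa using this
  have sy : ∀ {u v}, ReflTransGen (oo O) u v → ReflTransGen (oo O) v u :=
    fun hr => rtg_symm (fun _ _ => oo_symm O) hr
  rcases hv with hv | hv
  · exact (sy (r1 a hv b)).trans ((r1 a hv (h + 1)).trans
      ((sy (r2 (h+1) (by omega) a)).trans (r2 (h + 1) (by omega) (h + 1))))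
  · exact (sy (r2 b hv a)).trans ((r2 b hv (h + 1)).trans
      ((sy (r1 (h+1) (by omega) b)).trans (r1 (h + 1) (by omega) (h + 1))))

lemma row_ext (hle : ∀ v ∈ O, v.1 ≤ h ∧ v.2 ≤ h) (a b : ℕ) (hr : ∀ j, a ≤ j → (j, b) ∉ O) : Ext O h (a, b) :=
  ⟨hr a le_rfl, (row_path O a b hr (h + 1)).trans (far_ext hle _ (Or.inl (by simp; omega))).2⟩

lemma col_ext (hle : ∀ v ∈ O, v.1 ≤ h ∧ v.2 ≤ h) (a b : ℕ) (hr : ∀ j, b ≤ j → (a, j) ∉ O) : Ext O h (a, b) :=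
  ⟨hr b le_rfl, (col_path O a b hr (h + 1)).trans (far_ext hle _ (Or.inr (by simp; omega))).2⟩

lemma ext_step {u v : Site} (hu : Ext O h u) (huv : nbr u v) : Ext O h v ∨ v ∈ O := by
  by_cases hv : v ∈ O
  · exact Or.inr hv
  · exact Or.inl ⟨hv, ReflTransGen.head ⟨nbr_symm huv, hv, hu.1⟩ hu.2⟩

end

lemma sq_aux (Ea Eb Ec Ee Ka Kb Kc Ke : Prop)
   (hab : (Ea ∧ (¬ Eb ∨ ¬ Ee)) → (Eb ∧ (¬ Ea ∨ ¬ Ec)) → (Ka ↔ Kb))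
   (hac : (Ea ∧ (¬ Eb ∨ ¬ Ee)) → (Ec ∧ (¬ Eb ∨ ¬ Ee)) → (Ka ↔ Kc))
   (hae : (Ea ∧ (¬ Eb ∨ ¬ Ee)) → (Ee ∧ (¬ Ea ∨ ¬ Ec)) → (Ka ↔ Ke))
   (hbc : (Eb ∧ (¬ Ea ∨ ¬ Ec)) → (Ec ∧ (¬ Eb ∨ ¬ Ee)) → (Kb ↔ Kc))
   (hbe : (Eb ∧ (¬ Ea ∨ ¬ Ec)) → (Ee ∧ (¬ Ea ∨ ¬ Ec)) → (Kb ↔ Ke))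
   (hce : (Ec ∧ (¬ Eb ∨ ¬ Ee)) → (Ee ∧ (¬ Ea ∨ ¬ Ec)) → (Kc ↔ Ke))
   (f : Prop → ZMod 2) (hf1 : ∀ p, p → f p = 1) (hf0 : ∀ p, ¬ p → f p = 0) :
   f ((Ea ∧ ¬ Eb ∧ Ka) ∨ (Eb ∧ ¬ Ea ∧ Kb)) + f ((Eb ∧ ¬ Ec ∧ Kb) ∨ (Ec ∧ ¬ Eb ∧ Kc)) =
   f ((Ea ∧ ¬ Ee ∧ Ka) ∨ (Ee ∧ ¬ Ea ∧ Ke)) + f ((Ee ∧ ¬ Ec ∧ Ke) ∨ (Ec ∧ ¬ Ee ∧ Kc)) := by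
  have two' : ∀ a : ZMod 2, a + a = 0 := by decide
  have fT : f True = 1 := hf1 _ trivial
  have fF : f False = 0 := hf0 _ id
  by_cases h1 : Ea <;> by_cases h2 : Eb <;> by_cases h3 : Ec <;> by_cases h4 : Ee <;>
    simp only [h1, h2, h3, h4, not_true, not_false_iff, true_and, and_true, false_and, and_false,
      or_false, false_or, or_true, true_or, true_imp_iff, false_imp_iff, fF, add_zero, zero_add,
      or_self, not_true_eq_false, not_false_eq_true, forall_const] at hab hac hae hbc hbe hce ⊢ <;>
    (try rw [hab]) <;> (try rw [hac]) <;> (try rw [hae]) <;> (try rw [hbc]) <;> (try rw [hbe]) <;>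
    (try rw [hce]) <;> (try simp only [two']) <;> (try ring)

/-- all outer boundary sites are king-connected -/
lemma bd_conn (O : Finset Site) (h : ℕ) (h0 : (0, 0) ∈ O)
    (hconn : ∀ v ∈ O, ReflTransGen (fun a b => nbr a b ∧ a ∈ O ∧ b ∈ O) (0, 0) v)
    (hle : ∀ v ∈ O, v.1 ≤ h ∧ v.2 ≤ h) (f0 : Site) (hf0 : Bd O h f0) (v : Site) (hv : Bd O h v) :
    ReflTransGen (fun a b => king a b ∧ Bd O h a ∧ Bd O h b) f0 v := by
  classical
  set K : Site → Prop := fun v => ReflTransGen (fun a b => king a b ∧ Bd O h a ∧ Bd O h b) f0 v with hK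
  have Kmove : ∀ {u v}, king u v → Bd O h u → Bd O h v → (K u ↔ K v) := by
    intro u v h1 h2 h3
    exact ⟨fun hh => hh.tail ⟨h1, h2, h3⟩, fun hh => hh.tail ⟨king_symm h1, h3, h2⟩⟩
  let f : Prop → ZMod 2 := fun p => if p then 1 else 0
  let φ : Site → Site → ZMod 2 := fun u v =>
    f ((Ext O h u ∧ ¬ Ext O h v ∧ K u) ∨ (Ext O h v ∧ ¬ Ext O h u ∧ K v))
  have hbd : ∀ {u v}, Ext O h u → nbr u v → ¬ Ext O h v → Bd O h u := by
    intro u v h1 h2 h3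
    rcases ext_step h1 h2 with h4 | h4
    · exact absurd h4 h3
    · exact ⟨h1, v, h4, nbr_symm h2⟩
  have hbd2 : ∀ {u v v'}, nbr u v → nbr u v' → (Ext O h u ∧ (¬ Ext O h v ∨ ¬ Ext O h v')) →
      Bd O h u := by
    rintro u v v' h1 h2 ⟨h3, h4 | h4⟩
    · exact hbd h3 h1 h4
    · exact hbd h3 h2 h4
  obtain ⟨B, hB0, hB⟩ := pot φ (fun u v => by simp only [φ]; rw [or_comm]) (by
    intro x y
    have n1 : nbr (x, y) (x + 1, y) := Or.inr ⟨rfl, Or.inl rfl⟩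
    have n2 : nbr (x + 1, y) (x + 1, y + 1) := Or.inl ⟨rfl, Or.inl rfl⟩
    have n3 : nbr (x, y) (x, y + 1) := Or.inl ⟨rfl, Or.inl rfl⟩
    have n4 : nbr (x, y + 1) (x + 1, y + 1) := Or.inr ⟨rfl, Or.inl rfl⟩
    have a' := hbd2 n1 n3
    have b' := hbd2 (nbr_symm n1) n2
    have c' := hbd2 (nbr_symm n2) (nbr_symm n4)
    have e' := hbd2 (nbr_symm n3) n4
    refine sq_aux _ _ _ _ _ _ _ _ ?_ ?_ ?_ ?_ ?_ ?_ f (fun p hp => if_pos hp) (fun p hp => if_neg hp)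
    · exact fun h1 h2 => Kmove (by simp only [king]; omega) (a' h1) (b' h2)
    · exact fun h1 h2 => Kmove (by simp only [king]; omega) (a' h1) (c' h2)
    · exact fun h1 h2 => Kmove (by simp only [king]; omega) (a' h1) (e' h2)
    · exact fun h1 h2 => Kmove (by simp only [king]; omega) (b' h1) (c' h2)
    · exact fun h1 h2 => Kmove (by simp only [king]; omega) (b' h1) (e' h2)
    · exact fun h1 h2 => Kmove (by simp only [king]; omega) (c' h1) (e' h2))
  have hnO : ∀ u ∈ O, ¬ Ext O h u := fun u hu he => he.1 hu
  have BO : ∀ u ∈ O, B u = 0 := by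
    intro u hu
    have := hconn u hu
    clear hu
    induction this with
    | refl => exact hB0
    | @tail a b _ hab ih =>
      rw [hB a b hab.1, ih]
      have : φ a b = 0 := if_neg (by
        rintro (hh | hh)
        · exact hnO a hab.2.1 hh.1
        · exact hnO b hab.2.2 hh.1)
      rw [this, add_zero]
  have Bfar : ∀ u, Ext O h u → B u = B (h + 1, h + 1) := by
    rintro u ⟨_, hu⟩
    induction hu using ReflTransGen.head_induction_on with
    | refl => rfl
    | @head a b hab hb ih =>
      have ea : Ext O h a := ⟨hab.2.1, ReflTransGen.head hab hb⟩
      have eb : Ext O h b := ⟨hab.2.2, hb⟩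
      rw [← ih hab.2.2, hB a b hab.1]
      have : φ a b = 0 := if_neg (by
        rintro (hh | hh)
        · exact hh.2.1 eb
        · exact hh.2.1 ea)
      rw [this, add_zero]
  obtain ⟨e0, u0, hu0, hn0⟩ := hf0
  obtain ⟨e1, u1, hu1, hn1⟩ := hv
  have b0 : B f0 = 1 := by
    rw [hB u0 f0 hn0, BO u0 hu0, zero_add]
    exact if_pos (Or.inr ⟨e0, hnO _ hu0, ReflTransGen.refl⟩)
  have b1 : B v = 1 := by rw [Bfar v e1, ← Bfar f0 e0, b0]
  rw [hB u1 v hn1, BO u1 hu1, zero_add] at b1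
  by_contra hc
  have : φ u1 v = 0 := if_neg (by
        rintro (hh | hh)
        · exact hnO _ hu1 hh.1
        · exact hc hh.2.2)
  rw [this] at b1
  exact absurd b1 (by decide)

/-- extraction of a self-avoiding king path -/
lemma king_path (F : Finset Site) (a b : Site) (ha : a ∈ F)
    (hr : ReflTransGen (fun u v => king u v ∧ u ∈ F ∧ v ∈ F) a b) (ℓ : ℕ)
    (hℓ : a.1 + ℓ ≤ b.1 + 1 ∨ b.1 + ℓ ≤ a.1 + 1 ∨ b.2 + ℓ ≤ a.2 + 1 ∨ a.2 + ℓ ≤ b.2 + 1) (hpos : 1 ≤ ℓ) :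
    ∃ l : List Site, (a :: l).Nodup ∧ (a :: l).IsChain king ∧ (a :: l).length = ℓ ∧
      ∀ v ∈ a :: l, v ∈ F := by
  classical
  let G : SimpleGraph Site :=
    { Adj := fun u v => u ≠ v ∧ king u v ∧ u ∈ F ∧ v ∈ F
      symm := ⟨fun u v hh => ⟨hh.1.symm, king_symm hh.2.1, hh.2.2.2, hh.2.2.1⟩⟩
      loopless := ⟨fun u hh => hh.1 rfl⟩ }
  have hreach : ∀ b, ReflTransGen (fun u v => king u v ∧ u ∈ F ∧ v ∈ F) a b → G.Reachable a b := by
    intro b hr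
    induction hr with
    | refl => exact SimpleGraph.Reachable.refl _
    | @tail u v _ huv ih =>
      by_cases he : u = v
      · subst he; exact ih
      · have : G.Adj u v := ⟨he, huv⟩
        exact ih.trans this.reachable
  obtain ⟨p, hp⟩ := (hreach b hr).exists_isPath
  have hlen : ∀ {a b : Site} (p : G.Walk a b), b.1 ≤ a.1 + p.length ∧ a.1 ≤ b.1 + p.length ∧
      b.2 ≤ a.2 + p.length ∧ a.2 ≤ b.2 + p.length := by
    intro a b p
    induction p with
    | nil => simp
    | @cons u v w hadj q ih =>
      have h1 : king u v := hadj.2.1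
      unfold king at h1
      rw [SimpleGraph.Walk.length_cons]
      omega
  have hsup : ∀ {a b : Site} (p : G.Walk a b), a ∈ F → ∀ v ∈ p.support, v ∈ F := by
    intro a b p
    induction p with
    | nil => intro ha v hv; simp at hv; subst hv; exact ha
    | @cons u v w hadj q ih =>
      intro ha x hx
      rw [SimpleGraph.Walk.support_cons, List.mem_cons] at hx
      rcases hx with rfl | hx
      · exact ha
      · exact ih hadj.2.2.2 x hx
  have hch : p.support.IsChain king := p.isChain_adj_support.imp (fun u v huv => huv.2.1)
  have hl : ℓ ≤ p.support.length := by
    rw [SimpleGraph.Walk.length_support]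
    have := hlen p
    omega
  obtain ⟨k, rfl⟩ : ∃ k, ℓ = k + 1 := ⟨ℓ - 1, by omega⟩
  have hsc : p.support = a :: p.support.tail := (SimpleGraph.Walk.support_eq_cons p)
  have ht : a :: p.support.tail.take k = p.support.take (k + 1) := by
    conv_rhs => rw [hsc]
    rw [List.take_succ_cons]
  refine ⟨p.support.tail.take k, ?_, ?_, ?_, ?_⟩
  · rw [ht]; exact hp.support_nodup.sublist (List.take_sublist _ _)
  · rw [ht]; exact hch.take _
  · rw [ht, List.length_take]; omega
  · rw [ht]; exact fun v hv => hsup p ha v (List.mem_of_mem_take hv)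

lemma peierls (O F : Finset Site) (h : ℕ) (h0 : (0, 0) ∈ O)
    (hconn : ∀ v ∈ O, ReflTransGen (fun a b => nbr a b ∧ a ∈ O ∧ b ∈ O) (0, 0) v)
    (hb : ∀ v ∈ O, ∀ u, nbr v u → u ∈ O ∨ u ∈ F)
    (hle : ∀ v ∈ O, v.1 ≤ h ∧ v.2 ≤ h) (hex : ∃ v ∈ O, v.1 = h ∨ v.2 = h) :
    ∃ k ≤ h, ∃ l : List Site, ((k + 1, 0) :: l).Nodup ∧ ((k + 1, 0) :: l).IsChain king ∧
      ((k + 1, 0) :: l).length = (h + 4) / 2 ∧ ∀ v ∈ ((k + 1, 0) :: l : List Site), v ∈ F := by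
  classical
  have hBF : ∀ v, Bd O h v → v ∈ F := by
    rintro v ⟨h1, u, hu, huv⟩
    exact (hb u hu v huv).resolve_left h1.1
  obtain ⟨k, hk0, hk1⟩ : ∃ k, (k, 0) ∈ O ∧ ∀ j, k < j → (j, 0) ∉ O := by
    have hk := Nat.findGreatest_spec (P := fun k => (k, 0) ∈ O) (n := h) (m := 0) (by omega) h0
    refine ⟨_, hk, fun j hj hj' => ?_⟩
    have h1 := (hle _ hj').1
    exact Nat.findGreatest_is_greatest hj h1 hj'
  obtain ⟨l, hl0, hl1⟩ : ∃ k, (0, k) ∈ O ∧ ∀ j, k < j → (0, j) ∉ O := by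
    have hk := Nat.findGreatest_spec (P := fun k => (0, k) ∈ O) (n := h) (m := 0) (by omega) h0
    refine ⟨_, hk, fun j hj hj' => ?_⟩
    have h1 := (hle _ hj').2
    exact Nat.findGreatest_is_greatest hj h1 hj'
  have hkh := (hle _ hk0).1
  have f0 : Bd O h (k + 1, 0) := ⟨row_ext hle _ _ (fun j hj => hk1 j (by omega)), (k, 0), hk0,
    Or.inr ⟨rfl, Or.inl rfl⟩⟩
  have f1 : Bd O h (0, l + 1) := ⟨col_ext hle _ _ (fun j hj => hl1 j (by omega)), (0, l), hl0,
    Or.inl ⟨rfl, Or.inl rfl⟩⟩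
  have key : ∀ b, Bd O h b →
      ReflTransGen (fun u v => king u v ∧ u ∈ F ∧ v ∈ F) (k + 1, 0) b := fun b hbb =>
    rtg_mono (fun u v huv => ⟨huv.1, hBF _ huv.2.1, hBF _ huv.2.2⟩)
      (bd_conn O h h0 hconn hle _ f0 b hbb)
  refine ⟨k, hkh, ?_⟩
  by_cases hc : (h + 4) / 2 ≤ k + 2
  · exact king_path F _ _ (hBF _ f0) (key _ f1) _ (by simp; omega) (by omega)
  obtain ⟨⟨x, y⟩, hv, hh | hh⟩ := hex
  · simp only at hh
    subst hh
    have f2 : Bd O x (x + 1, y) := ⟨far_ext hle _ (Or.inl (by simp)), (x, y), hv,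
      Or.inr ⟨rfl, Or.inl rfl⟩⟩
    exact king_path F _ _ (hBF _ f0) (key _ f2) _ (by simp; omega) (by omega)
  · simp only at hh
    subst hh
    have f2 : Bd O y (x, y + 1) := ⟨far_ext hle _ (Or.inr (by simp)), (x, y), hv,
      Or.inl ⟨rfl, Or.inl rfl⟩⟩
    exact king_path F _ _ (hBF _ f0) (key _ f2) _ (by simp; omega) (by omega)

def kingNb (v : Site) : Finset Site :=
  Finset.Icc (v.1 - 1) (v.1 + 1) ×ˢ Finset.Icc (v.2 - 1) (v.2 + 1)

lemma card_kingNb (v : Site) : (kingNb v).card ≤ 9 := by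
  unfold kingNb
  rw [Finset.card_product, Nat.card_Icc, Nat.card_Icc]
  calc _ ≤ 3 * 3 := Nat.mul_le_mul (by omega) (by omega)
    _ = 9 := rfl

open Classical in
def kp : ℕ → Site → Finset (List Site)
  | 0, _ => {[]}
  | ℓ + 1, v => (kingNb v).biUnion fun u => (kp ℓ u).image (List.cons v)

lemma card_kp (ℓ : ℕ) : ∀ v, (kp ℓ v).card ≤ 9 ^ ℓ := by
  classical
  induction ℓ with
  | zero => intro v; simp [kp]
  | succ ℓ ih =>
    intro v
    unfold kp
    refine (Finset.card_biUnion_le_card_mul _ _ (9 ^ ℓ) ?_).trans ?_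
    · intro u _
      exact Finset.card_image_le.trans (ih u)
    · rw [pow_succ, mul_comm]
      exact Nat.mul_le_mul_left _ (card_kingNb v)

lemma mem_kp (l : List Site) : ∀ v, (v :: l).IsChain king → (v :: l) ∈ kp (l.length + 1) v := by
  classical
  induction l with
  | nil =>
    intro v _
    simp only [kp, List.length_nil, Finset.mem_biUnion, Finset.mem_image, Finset.mem_singleton]
    exact ⟨v, by simp [kingNb], _, rfl, rfl⟩
  | cons u l ih =>
    intro v hv
    rw [List.isChain_cons_cons] at hv
    have := ih u hv.2
    rw [List.length_cons, kp, Finset.mem_biUnion]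
    refine ⟨u, ?_, Finset.mem_image.2 ⟨_, this, rfl⟩⟩
    have hk := hv.1
    unfold king at hk
    simp only [kingNb, Finset.mem_product, Finset.mem_Icc]
    omega

end L8

section L9
open Relation
variable {d : ℕ} (X : XP d)

noncomputable def hgt (s : St d) : ℕ := (occS s).sup (fun v => max v.1 v.2)

def EE (h : ℕ) : Set (BC d) := {w | ∃ t, pick (st X w t) = none ∧ hgt (st X w t) = h}

lemma EE_meas (hX : X.OK) (h : ℕ) : MeasurableSet (EE X h) := by
  have : EE X h = ⋃ t : ℕ, ⋃ s ∈ {s : St d | pick s = none ∧ hgt s = h}, {w | st X w t = s} := by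
    ext w
    simp only [EE, Set.mem_ofPred_eq, Set.mem_iUnion, exists_prop]
    constructor
    · rintro ⟨t, ht⟩; exact ⟨t, _, ht, rfl⟩
    · rintro ⟨t, s, hs, rfl⟩; exact ⟨t, hs⟩
  rw [this]
  exact MeasurableSet.iUnion fun t => MeasurableSet.biUnion (Set.to_countable _)
    (fun s _ => st_meas X hX t s)

lemma hgt_le {s : St d} {v : Site} (hv : v ∈ occS s) : v.1 ≤ hgt s ∧ v.2 ≤ hgt s := by
  have : max v.1 v.2 ≤ hgt s := Finset.le_sup (f := fun v : Site => max v.1 v.2) hv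
  omega

lemma EE_prob (q δ : unitInterval) (hX : X.OK) (hstep : StepHyp X q δ (1 / 2304)) (h : ℕ) :
    (PB d q δ).real (EE X h) ≤ (1 / 8) ^ (h + 1) := by
  classical
  set ℓ := (h + 4) / 2 with hℓ
  let D : Finset (List Site) := (Finset.range (h + 1)).biUnion fun k =>
    (kp ℓ (k + 1, 0)).filter (fun l => l.Nodup ∧ l.length = ℓ)
  have hD : D.card ≤ (h + 1) * 9 ^ ℓ := by
    refine (Finset.card_biUnion_le_card_mul _ _ (9 ^ ℓ) ?_).trans (by simp)
    intro k _
    exact (Finset.card_filter_le _ _).trans (card_kp _ _)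
  have hsub : EE X h ⊆ ⋃ l ∈ D, {w | ∃ t, l.toFinset ⊆ (st X w t).2.2} := by
    rintro w ⟨t, hp, hh⟩
    have hs := inv_st X hX w t
    set s := st X w t
    obtain ⟨k, hk, l, h1, h2, h3, h4⟩ := peierls (occS s) s.2.2 h hs.f hs.e (by
      intro v hv u hu
      by_contra hc
      push Not at hc
      obtain ⟨x, hx⟩ := mem_occS.1 hv
      refine pick_none hp ((v, x), u) ⟨hx, hu, ?_⟩
      rw [mem_exam]; push Not; exact hc) (by
      intro v hv; rw [← hh]; exact hgt_le hv) (by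
      obtain ⟨v, hv, hv'⟩ := Finset.exists_mem_eq_sup (occS s) ⟨_, hs.f⟩ (fun v : Site => max v.1 v.2)
      refine ⟨v, hv, ?_⟩
      have : h = max v.1 v.2 := by rw [← hh, ← hv']; rfl
      omega)
    simp only [Set.mem_iUnion]
    refine ⟨(k + 1, 0) :: l, ?_, t, ?_⟩
    · rw [Finset.mem_biUnion]
      refine ⟨k, by simp; omega, Finset.mem_filter.2 ⟨?_, h1, h3⟩⟩
      have := mem_kp l _ h2
      rwa [← List.length_cons (a := ((k+1, 0) : Site)), h3] at this
    · intro v hv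
      exact h4 v (List.mem_toFinset.1 hv)
  have hP : PB d q δ (EE X h) ≤ ENNReal.ofReal ((h + 1) * (1 / 256) ^ ℓ) := by
    calc PB d q δ (EE X h) ≤ PB d q δ (⋃ l ∈ D, {w | ∃ t, l.toFinset ⊆ (st X w t).2.2}) :=
          measure_mono hsub
      _ ≤ ∑ l ∈ D, PB d q δ {w | ∃ t, l.toFinset ⊆ (st X w t).2.2} := measure_biUnion_finset_le _ _
      _ ≤ ∑ l ∈ D, ENNReal.ofReal (1 / 2304) ^ ℓ := by
          refine Finset.sum_le_sum fun l hl => ?_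
          refine (fail_prob X q δ hX (1 / 2304) (by norm_num) (by norm_num) hstep _).trans ?_
          simp only [D, Finset.mem_biUnion, Finset.mem_filter] at hl
          obtain ⟨k, _, _, h1, h2⟩ := hl
          rw [List.toFinset_card_of_nodup h1, h2]
      _ = D.card * ENNReal.ofReal (1 / 2304) ^ ℓ := by rw [Finset.sum_const, nsmul_eq_mul]
      _ ≤ (((h + 1) * 9 ^ ℓ : ℕ) : ENNReal) * ENNReal.ofReal (1 / 2304) ^ ℓ := by
          gcongr
      _ = ENNReal.ofReal ((h + 1) * (1 / 256) ^ ℓ) := by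
          rw [← ENNReal.ofReal_pow (by norm_num), ← ENNReal.ofReal_natCast,
            ← ENNReal.ofReal_mul (by positivity)]
          congr 1
          push_cast
          rw [mul_assoc, ← mul_pow]; norm_num
  have h1 : (PB d q δ).real (EE X h) ≤ (h + 1) * (1 / 256) ^ ℓ :=
    ENNReal.toReal_le_of_le_ofReal (by positivity) hP
  refine h1.trans ?_
  have h2 : ((1 : ℝ) / 256) ^ ℓ ≤ (1 / 16) ^ (h + 1) := by
    have : ((1 : ℝ) / 256) = (1 / 16) ^ 2 := by norm_num
    rw [this, ← pow_mul]
    exact pow_le_pow_of_le_one (by norm_num) (by norm_num) (by omega)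
  have h3 : ((h : ℝ) + 1) ≤ 2 ^ (h + 1) := by
    have := Nat.lt_two_pow_self (n := h + 1)
    exact_mod_cast this.le
  calc ((h : ℝ) + 1) * (1 / 256) ^ ℓ ≤ 2 ^ (h + 1) * (1 / 16) ^ (h + 1) := by gcongr
    _ = (1 / 8) ^ (h + 1) := by rw [← mul_pow]; norm_num

end L9

section L10
open Relation
variable {d : ℕ} (i0 i1 : Fin d) (m n : ℕ)

def shf (x : Vertex d) (j : ℤ) : Vertex d := Function.update x i0 (x i0 + j)

open Classical in
noncomputable def XQ (x : Vertex d) : XP d where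
  m := m
  n := n
  cen := fun v i => x i + (if i = i0 then ((n + m + 1 : ℕ) : ℤ) * (3 + v.1) else 0) +
    (if i = i1 then ((n + m + 1 : ℕ) : ℤ) * v.2 else 0)
  col := fun v => (Fin.ofNat 7 v.1, Fin.ofNat 7 v.2)
  S0 := (Finset.range (3 * (n + m + 1))).image (fun j : ℕ => shf i0 x (j + 1)) ∪
    bx (shf i0 x (3 * (n + m + 1 : ℕ))) m
  x0 := shf i0 x (3 * (n + m + 1 : ℕ))

variable {i0 i1}

lemma XQ_cen0 (h01 : i0 ≠ i1) (x : Vertex d) (v : Site) :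
    (XQ i0 i1 m n x).cen v i0 = x i0 + ((n + m + 1 : ℕ) : ℤ) * (3 + v.1) := by
  simp [XQ, h01]

lemma XQ_cen1 (h01 : i0 ≠ i1) (x : Vertex d) (v : Site) :
    (XQ i0 i1 m n x).cen v i1 = x i1 + ((n + m + 1 : ℕ) : ℤ) * v.2 := by
  simp [XQ, h01.symm]

lemma XQ_cen2 (x : Vertex d) (v : Site) {i : Fin d} (h0 : i ≠ i0) (h1 : i ≠ i1) :
    (XQ i0 i1 m n x).cen v i = x i := by
  simp [XQ, h0, h1]

lemma far7 (D : ℤ) (hD : 1 ≤ D) (a b : ℕ) (z y : ℤ) (hab : a % 7 = b % 7)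
    (h1 : |z - (y + D * a)| ≤ 3 * D - 1) (h2 : |z - (y + D * b)| ≤ 3 * D - 1) : a = b := by
  rw [abs_le] at h1 h2
  rcases lt_trichotomy a b with h | h | h
  · exfalso
    have : (a : ℤ) + 7 ≤ b := by omega
    nlinarith
  · exact h
  · exfalso
    have : (b : ℤ) + 7 ≤ a := by omega
    nlinarith

lemma XQ_ok (h01 : i0 ≠ i1) (x : Vertex d) : (XQ i0 i1 m n x).OK := by
  classical
  constructor
  · intro v w hvw
    rw [mem_bx]
    intro i
    show |_| ≤ ((n + m + 1 : ℕ) : ℤ)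
    generalize hD : ((n + m + 1 : ℕ) : ℤ) = D
    have hD0 : 0 ≤ D := by omega
    by_cases hi0 : i = i0
    · subst hi0
      rw [XQ_cen0 m n h01, XQ_cen0 m n h01, hD, abs_le]
      rcases hvw with ⟨h1, h2⟩ | ⟨h1, h2 | h2⟩
      · rw [h1]; constructor <;> linarith
      · rw [← h2]; push_cast; constructor <;> nlinarith
      · rw [← h2]; push_cast; constructor <;> nlinarith
    by_cases hi1 : i = i1
    · subst hi1
      rw [XQ_cen1 m n h01, XQ_cen1 m n h01, hD, abs_le]
      rcases hvw with ⟨h1, h2 | h2⟩ | ⟨h1, h2⟩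
      · rw [← h2]; push_cast; constructor <;> nlinarith
      · rw [← h2]; push_cast; constructor <;> nlinarith
      · rw [h1]; constructor <;> linarith
    · rw [XQ_cen2 m n x v hi0 hi1, XQ_cen2 m n x w hi0 hi1]; simpa using hD0
  · intro u u' hne hc z hz hz'
    apply hne
    simp only [XQ, Prod.mk.injEq, Fin.ext_iff, Fin.val_ofNat] at hc
    rw [mem_bx] at hz hz'
    have a0 := hz i0
    have b0 := hz' i0
    have a1 := hz i1
    have b1 := hz' i1
    rw [XQ_cen0 m n h01] at a0 b0
    rw [XQ_cen1 m n h01] at a1 b1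
    have hZ : ((XQ i0 i1 m n x).Z : ℤ) = 3 * ((n + m + 1 : ℕ) : ℤ) - 1 := by
      simp only [XP.Z, XQ]; push_cast; ring
    rw [hZ] at a0 b0 a1 b1
    refine Prod.ext (far7 ((n + m + 1 : ℕ) : ℤ) (by omega) _ _ (z i0) (x i0 + ((n + m + 1 : ℕ) : ℤ) * 3)
      hc.1 ?_ ?_) (far7 ((n + m + 1 : ℕ) : ℤ) (by omega) _ _ (z i1) (x i1) hc.2 a1 b1)
    · convert a0 using 3; ring
    · convert b0 using 3; ring
  · have : (XQ i0 i1 m n x).x0 = (XQ i0 i1 m n x).cen (0, 0) := by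
      funext i
      by_cases hi : i = i0
      · subst hi; simp [XQ, shf]; ring
      · simp [XQ, shf, hi]
    rw [this]; exact self_mem_bx _ _
  · exact Finset.subset_union_right

lemma XQ_step (h01 : i0 ≠ i1) (q δ : unitInterval) (ε : ℝ)
    (H : ∀ (S : Finset (Vertex d)) (c : Col) (i1 : Fin d) (sg : ℤˣ)
      (x c0 t : Vertex d), bx x m ⊆ S → x ∈ bx c0 n →
      t i1 = c0 i1 + sg * (n + m + 1 : ℤ) → (∀ j, j ≠ i1 → t j = c0 j) →
     (PB d q δ).real (FailE m n S c x t) ≤ ε) (x : Vertex d) : StepHyp (XQ i0 i1 m n x) q δ ε := by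
  intro S c v u y hvu hS hy
  have key : ∃ (j : Fin d) (sg : ℤˣ), (XQ i0 i1 m n x).cen u j = (XQ i0 i1 m n x).cen v j +
      sg * (n + m + 1 : ℤ) ∧ ∀ k, k ≠ j → (XQ i0 i1 m n x).cen u k = (XQ i0 i1 m n x).cen v k := by
    rcases hvu with ⟨h1, h2⟩ | ⟨h1, h2⟩
    · refine ⟨i1, ?_⟩
      have hk : ∀ k, k ≠ i1 → (XQ i0 i1 m n x).cen u k = (XQ i0 i1 m n x).cen v k := by
        intro k hk; simp [XQ, hk, h1]
      rcases h2 with h2 | h2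
      · refine ⟨1, ?_, hk⟩
        rw [XQ_cen1 m n h01, XQ_cen1 m n h01, ← h2]; push_cast; ring
      · refine ⟨-1, ?_, hk⟩
        rw [XQ_cen1 m n h01, XQ_cen1 m n h01, ← h2]; push_cast; ring
    · refine ⟨i0, ?_⟩
      have hk : ∀ k, k ≠ i0 → (XQ i0 i1 m n x).cen u k = (XQ i0 i1 m n x).cen v k := by
        intro k hk; simp [XQ, hk, h1]
      rcases h2 with h2 | h2
      · refine ⟨1, ?_, hk⟩
        rw [XQ_cen0 m n h01, XQ_cen0 m n h01, ← h2]; push_cast; ring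
      · refine ⟨-1, ?_, hk⟩
        rw [XQ_cen0 m n h01, XQ_cen0 m n h01, ← h2]; push_cast; ring
  obtain ⟨j, sg, h1, h2⟩ := key
  exact H S c j sg y _ _ hS hy h1 h2

/-- heights of the starter -/
lemma S0_height (x : Vertex d) {z : Vertex d} (hz : z ∈ (XQ i0 i1 m n x).S0) :
    x i0 < z i0 ∧ z i0 ≤ x i0 + 3 * (n + m + 1) + m := by
  classical
  simp only [XQ, Finset.mem_union, Finset.mem_image, Finset.mem_range] at hz
  rcases hz with ⟨j, hj, rfl⟩ | hz
  · simp only [shf, Function.update_self]; omega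
  · have := mem_bx.1 hz i0
    simp only [shf, Function.update_self] at this
    rw [abs_le] at this
    omega

lemma S0_card (x : Vertex d) : (XQ i0 i1 m n x).S0.card ≤ 3 * (n + m + 1) + (2 * m + 1) ^ d := by
  classical
  refine (Finset.card_union_le _ _).trans ?_
  rw [card_bx]
  have := Finset.card_image_le (s := Finset.range (3 * (n + m + 1))) (f := fun j : ℕ => shf i0 x (j + 1))
  rw [Finset.card_range] at this
  omega

/-- starter event -/
def SE (X : XP d) : Set (BC d) := {w | ∀ i ∈ (et X.S0).map (withCol none), w i = true}

lemma SE_dep (X : XP d) : Dep {i : BI d | i.2 = none ∧ i.1 ∈ ET (X.S0 : Set (Vertex d))} (SE X) := by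
  have := dep_cyl ((et X.S0).map (withCol none)) (fun _ => true)
  refine this.mono ?_
  intro i hi
  rw [Finset.mem_coe, Finset.mem_map] at hi
  obtain ⟨e, he, rfl⟩ := hi
  refine ⟨rfl, ?_⟩
  rw [← coe_et]; exact he

lemma SE_meas (X : XP d) : MeasurableSet (SE X) :=
  (dep_cyl ((et X.S0).map (withCol none)) (fun _ => true)).meas (Finset.finite_toSet _)

lemma SE_prob (q δ : unitInterval) (x : Vertex d) :
    (q : ℝ) ^ ((3 * (n + m + 1) + (2 * m + 1) ^ d) * 3 ^ d) ≤
      (PB d q δ).real (SE (XQ i0 i1 m n x)) := by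
  unfold SE
  rw [PM_open, Finset.prod_map]
  have : ∀ e : Edge d, ((rB d q δ (withCol none e) : unitInterval) : ℝ) = q := fun e =>
    congrArg _ (rB_none q δ e)
  simp only [this, Finset.prod_const]
  exact pow_le_pow_of_le_one q.2.1 q.2.2 ((card_et _).trans (Nat.mul_le_mul_right _ (S0_card m n x)))

lemma SE_conn (x : Vertex d) {w : BC d} (hw : w ∈ SE (XQ i0 i1 m n x)) {z : Vertex d}
    (hz : z ∈ (XQ i0 i1 m n x).S0) : Conn (eta w) x z := by
  classical
  have hop : ∀ u v, adj u v → v ∈ (XQ i0 i1 m n x).S0 → step (lay none w) u v := by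
    intro u v huv hv
    refine step_iff.2 ⟨edge u v huv, rfl, ?_⟩
    refine hw (edge u v huv, none) (Finset.mem_map.2 ⟨edge u v huv, ?_, rfl⟩)
    rw [← Finset.mem_coe, coe_et]
    exact (mem_ET rfl).2 (Or.inr hv)
  have hline : ∀ j : ℕ, j ≤ 3 * (n + m + 1) → Conn (eta w) x (shf i0 x j) := by
    intro j
    induction j with
    | zero => intro _; simp [shf]; exact ReflTransGen.refl
    | succ j ih =>
      intro hj
      refine (ih (by omega)).tail (step_eta (hop _ _ ?_ ?_))
      · have h1 : shf i0 x ((j + 1 : ℕ) : ℤ) = Function.update (shf i0 x j) i0 (x i0 + (j + 1 : ℕ)) := by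
          simp [shf]
        rw [h1]
        refine adj_update _ _ _ ?_
        simp only [shf, Function.update_self]; omega
      · simp only [XQ, Finset.mem_union, Finset.mem_image, Finset.mem_range]
        exact Or.inl ⟨j, by omega, by push_cast; rfl⟩
  have hz' := hz
  simp only [XQ, Finset.mem_union, Finset.mem_image, Finset.mem_range] at hz
  rcases hz with ⟨j, hj, rfl⟩ | hz
  · have := hline (j + 1) (by omega)
    push_cast at this; exact this
  · have h1 := hline (3 * (n + m + 1)) le_rfl
    push_cast at h1
    push_cast at hz
    refine Relation.ReflTransGen.trans h1 (rtg_mono ?_ (bx_conn _ _ _ hz))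
    rintro a b ⟨ha, hb, hab⟩
    refine step_eta (hop a b hab ?_)
    simp only [XQ, Finset.mem_union]
    right; push_cast; exact hb

lemma nonterm_inf (h01 : i0 ≠ i1) (x : Vertex d) {w : BC d} (hw : w ∈ SE (XQ i0 i1 m n x))
    (hE : ∀ h, w ∉ EE (XQ i0 i1 m n x) h) : (cluster (eta w) x).Infinite := by
  have hX := XQ_ok m n h01 x
  have hinf := nonterm _ hX w (fun t ht => hE _ ⟨t, ht, rfl⟩)
  intro hfin
  apply hinf
  have hb : ∀ i : Fin d, ∃ M : ℕ, ∀ y ∈ cluster (eta w) x, y i ≤ x i + M := by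
    intro i
    obtain ⟨M, hM⟩ := (hfin.image (fun y => (y i - x i).toNat)).bddAbove
    refine ⟨M, fun y hy => ?_⟩
    have := hM (Set.mem_image_of_mem _ hy)
    omega
  obtain ⟨M0, h0⟩ := hb i0
  obtain ⟨M1, h1⟩ := hb i1
  refine Set.Finite.subset (Set.finite_Icc ((0, 0) : Site) (M0 + n, M1 + n)) ?_
  rintro ⟨a, b⟩ ⟨t, ht⟩
  have hs := inv_st _ hX w t
  obtain ⟨y, hy⟩ := mem_occS.1 ht
  obtain ⟨g1, g2⟩ := hs.a _ hy
  obtain ⟨a', ha', hc⟩ := st_conn _ w t y (g2 (self_mem_bx _ _))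
  have hyc : y ∈ cluster (eta w) x := Relation.ReflTransGen.trans (SE_conn m n x hw ha') hc
  have k0 := h0 y hyc
  have k1 := h1 y hyc
  have b0 := mem_bx.1 g1 i0
  have b1 := mem_bx.1 g1 i1
  simp only at b0 b1
  rw [XQ_cen0 m n h01, abs_le] at b0
  rw [XQ_cen1 m n h01, abs_le] at b1
  simp only at b0 b1
  have hn : ((XQ i0 i1 m n x).n : ℤ) = n := rfl
  rw [hn] at b0 b1
  have e0 : (a : ℤ) ≤ ((n + m + 1 : ℕ) : ℤ) * (3 + a) := by push_cast; nlinarith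
  have e1 : (b : ℤ) ≤ ((n + m + 1 : ℕ) : ℤ) * b := by push_cast; nlinarith
  rw [Set.mem_Icc, Prod.mk_le_mk, Prod.mk_le_mk]
  refine ⟨⟨by omega, by omega⟩, ?_, ?_⟩ <;> omega

end L10

section L11
open Relation
variable {d : ℕ} (i0 i1 : Fin d) (m n : ℕ)

def Hs (k : ℕ) : Set (Vertex d) := {z | z i0 ≤ k}
def JJ (k : ℕ) : Set (BI d) := {i | i.1 ∈ E2 (Hs i0 k)}
def QQ (N : ℕ) : Set (BC d) := {w | (∃ y, Conn (eta w) (origin d) y ∧ (N : ℤ) ≤ y i0) ∧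
  ¬ (cluster (eta w) (origin d)).Infinite}
def TT (k : ℕ) (x : Vertex d) : Set (BC d) := {w | x i0 = k ∧ CB (eta w) (Hs i0 k) (origin d) x}

lemma eta_meas : Measurable (eta : BC d → Config d) := by
  classical
  rw [measurable_pi_iff]
  intro e
  refine measurable_to_bool ?_
  have : (fun w : BC d => eta w e) ⁻¹' {true} = ⋃ o, {w | w (e, o) = true} := by
    ext w; simp [eta]
  rw [this]
  refine MeasurableSet.iUnion fun o => ?_
  exact measurableSet_eq_fun (measurable_pi_apply (e, o)) measurable_const

lemma eta_congr {w w' : BC d} {e : Edge d} (h : ∀ o, w (e, o) = w' (e, o)) : eta w e = eta w' e := by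
  classical
  simp [eta, h]

variable {i0 i1}

lemma JJ_mono {k k' : ℕ} (h : k ≤ k') : JJ i0 k ⊆ JJ i0 k' := by
  intro i hi
  refine E2_mono ?_ hi
  intro z hz
  have : z i0 ≤ k := hz
  show z i0 ≤ k'
  omega

lemma TT_meas (k : ℕ) (x : Vertex d) : MeasurableSet (TT i0 k x) :=
  (MeasurableSet.const _).inter (eta_meas (meas_CB _ _ _))

lemma TT_dep (k : ℕ) (x : Vertex d) : Dep (JJ i0 k) (TT i0 k x) := by
  rintro w w' h ⟨h1, h2⟩
  refine ⟨h1, h2.congr fun e he => eta_congr fun o => h (e, o) he⟩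

lemma tip_exists {k N : ℕ} (hk : k ≤ N) {w : BC d} (hw : w ∈ QQ i0 N) : ∃ x, w ∈ TT i0 k x := by
  obtain ⟨⟨y, hy, hN⟩, _⟩ := hw
  rcases Nat.eq_zero_or_pos k with rfl | hk0
  · exact ⟨origin d, rfl, ReflTransGen.refl⟩
  · have h1 : origin d ∈ {z : Vertex d | z i0 < k} := by
      show (0 : ℤ) < k; omega
    have h2 : y ∉ {z : Vertex d | z i0 < k} := by
      intro h
      have : y i0 < k := h
      omega
    obtain ⟨u, v, huv, hu, hv, hs⟩ := rtg_exit hy h1 h2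
    have hu' : u i0 < k := hu
    have hv' : ¬ v i0 < k := hv
    have := abs_le.1 (adj_le (step_adj hs) i0)
    have hvk : v i0 = k := by omega
    refine ⟨v, hvk, ReflTransGen.tail (rtg_mono ?_ huv) ⟨hu'.le, hvk.le, hs⟩⟩
    rintro a b ⟨ha, hb, hab⟩
    have ha' : a i0 < k := ha
    have hb' : b i0 < k := hb
    exact ⟨ha'.le, hb'.le, hab⟩

lemma EE_dep1 (h01 : i0 ≠ i1) (x : Vertex d) (h : ℕ) :
    Dep {i : BI d | i.1 ∈ E2 {z : Vertex d | x i0 < z i0} ∧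
      ¬ (i.2 = none ∧ i.1 ∈ ET ((XQ i0 i1 m n x).S0 : Set (Vertex d)))} (EE (XQ i0 i1 m n x) h) := by
  rintro w w' hh ⟨t, h1, h2⟩
  have := st_glob _ (XQ_ok m n h01 x) {z : Vertex d | x i0 < z i0} (by
    intro v y hy z hz
    have g1 := abs_le.1 (mem_bx.1 hy i0)
    have g2 := abs_le.1 (mem_bx.1 (Finset.mem_coe.1 hz) i0)
    rw [XQ_cen0 m n h01] at g1
    simp only [XP.L, XQ] at g1 g2
    show x i0 < z i0
    push_cast at g1 g2
    nlinarith [mul_nonneg (show (0:ℤ) ≤ n + m + 1 by omega) (show (0 : ℤ) ≤ v.1 by omega)]) w w'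
    (fun i hi1 hi2 => hh i ⟨hi1, hi2⟩) t
  exact ⟨t, by rw [this]; exact h1, by rw [this]; exact h2⟩

lemma SE_dep2 (x : Vertex d) (k : ℕ) (hx : x i0 = k) (h : ℕ) :
    Dep (JJ i0 (k + 7 * (n + m + 1) * (h + 1))) (SE (XQ i0 i1 m n x)) := by
  refine (SE_dep _).mono ?_
  rintro ⟨e, o⟩ ⟨h1, h2⟩
  obtain ⟨u, v, huv, rfl⟩ := edge_exists e
  have key : ∀ u v : Vertex d, adj u v → u ∈ (XQ i0 i1 m n x).S0 →
      u ∈ Hs i0 (k + 7 * (n + m + 1) * (h + 1)) ∧ v ∈ Hs i0 (k + 7 * (n + m + 1) * (h + 1)) := by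
    intro u v huv hu
    have g1 := S0_height m n x hu
    have g2 := abs_le.1 (adj_le huv i0)
    have g3 : (k : ℤ) + 7 * (n + m + 1) ≤ ((k + 7 * (n + m + 1) * (h + 1) : ℕ) : ℤ) := by
      push_cast; nlinarith [mul_nonneg (show (0:ℤ) ≤ n + m + 1 by omega) (show (0 : ℤ) ≤ h by omega)]
    constructor
    · show u i0 ≤ _; omega
    · show v i0 ≤ _; omega
  refine (mem_E2 rfl).2 ?_
  rcases (mem_ET rfl).1 h2 with h3 | h3
  · exact key u v huv h3
  · exact (key v u (adj_symm huv) h3).symm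

lemma EE_dep2 (h01 : i0 ≠ i1) (x : Vertex d) (k : ℕ) (hx : x i0 = k) (h : ℕ) :
    Dep (JJ i0 (k + 7 * (n + m + 1) * (h + 1))) (EE (XQ i0 i1 m n x) h) := by
  rintro w w' hh ⟨t, h1, h2⟩
  have hX := XQ_ok m n h01 x
  have hs := inv_st _ hX w t
  have := st_det _ hX w w' t (by
    have g3 : (k : ℤ) + 6 * (n + m + 1) + (n + m + 1) * (h + 1) ≤
        ((k + 7 * (n + m + 1) * (h + 1) : ℕ) : ℤ) := by
      push_cast; nlinarith [mul_nonneg (show (0:ℤ) ≤ n + m + 1 by omega) (show (0 : ℤ) ≤ h by omega)]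
    have hocc : ∀ v ∈ occS (st (XQ i0 i1 m n x) w t), v.1 ≤ h := by
      intro v hv; rw [← h2]; exact (hgt_le hv).1
    rintro ⟨e, o⟩ (⟨g0, g1, g2⟩ | ⟨u, hu, g1, g2⟩)
    · apply hh
      obtain ⟨u, v, huv, rfl⟩ := edge_exists e
      have key : ∀ u v : Vertex d, adj u v → u ∈ (st (XQ i0 i1 m n x) w t).1 →
        u ∈ Hs i0 (k + 7 * (n + m + 1) * (h + 1)) ∧ v ∈ Hs i0 (k + 7 * (n + m + 1) * (h + 1)) := by
        intro u v huv hu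
        have a2 := abs_le.1 (adj_le huv i0)
        have a1 : u i0 + 1 ≤ k + 6 * (n + m + 1) + (n + m + 1) * (h + 1) := by
          rcases hs.h u hu with hu | ⟨p, hp, hu⟩
          · have a1 := S0_height m n x hu
            nlinarith [mul_nonneg (show (0:ℤ) ≤ n + m + 1 by omega) (show (0 : ℤ) ≤ h by omega)]
          · have b1 := abs_le.1 (mem_bx.1 hu i0)
            have b2 := abs_le.1 (mem_bx.1 (hs.a p hp).1 i0)
            rw [XQ_cen0 m n h01] at b2
            have b3 : ((p.1.1 : ℕ) : ℤ) ≤ h := by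
              exact_mod_cast hocc p.1 (mem_occS.2 ⟨p.2, hp⟩)
            have b4 := mul_le_mul_of_nonneg_left b3 (show (0:ℤ) ≤ n + m + 1 by omega)
            simp only [XP.L, XQ] at b1 b2
            push_cast at b1 b2
            nlinarith
        constructor
        · show u i0 ≤ _; omega
        · show v i0 ≤ _; omega
      refine (mem_E2 rfl).2 ?_
      rcases (mem_ET rfl).1 g1 with h3 | h3
      · exact key u v huv h3
      · exact (key v u (adj_symm huv) h3).symm
    · apply hh
      refine E2_mono ?_ g2
      intro z hz
      have b1 := abs_le.1 (mem_bx.1 (Finset.mem_coe.1 hz) i0)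
      rw [XQ_cen0 m n h01] at b1
      have b3 : ((u.1 : ℕ) : ℤ) ≤ h + 1 := by
        rcases mem_exam.1 hu with hu | hu
        · have := hocc u hu; omega
        · obtain ⟨v, hv, hn⟩ := hs.c u hu
          have := hocc v hv
          unfold nbr at hn
          omega
      have b4 := mul_le_mul_of_nonneg_left b3 (show (0:ℤ) ≤ n + m + 1 by omega)
      simp only [XP.Z, XQ] at b1
      push_cast at b1
      show z i0 ≤ _
      nlinarith)
  exact ⟨t, by rw [this]; exact h1, by rw [this]; exact h2⟩

end L11

section L12
open Relation

lemma sum4 {Ω : Type*} [MeasurableSpace Ω] (P : Measure Ω) [IsProbabilityMeasure P] (A : Set Ω)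
    (E : ℕ → Set Ω) (K : ℝ) (hK : 0 ≤ K) (h : ∀ j, P.real (A ∩ E j) ≤ K * (1 / 4) ^ (j + 1)) :
    P.real (A ∩ ⋃ j, E j) ≤ K / 3 := by
  have hs : HasSum (fun j : ℕ => K * (1 / 4 : ℝ) ^ (j + 1)) (K / 3) := by
    have h1 := (hasSum_geometric_of_lt_one (r := (1 / 4 : ℝ)) (by norm_num) (by norm_num)).mul_left (K / 4)
    have e1 : (fun j : ℕ => K * (1 / 4 : ℝ) ^ (j + 1)) = fun j => K / 4 * (1 / 4) ^ j := by
      funext j; rw [pow_succ]; ring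
    have e2 : K / 3 = K / 4 * (1 - 1 / 4)⁻¹ := by
      have : (1 - 1 / 4 : ℝ)⁻¹ = 4 / 3 := by norm_num
      rw [this]; ring
    rw [e1, e2]; exact h1
  have : P (A ∩ ⋃ j, E j) ≤ ENNReal.ofReal (K / 3) := by
    rw [Set.inter_iUnion]
    calc _ ≤ ∑' j, P (A ∩ E j) := measure_iUnion_le _
      _ ≤ ∑' j, ENNReal.ofReal (K * (1 / 4) ^ (j + 1)) := by
          refine ENNReal.tsum_le_tsum fun j => ?_
          rw [← ENNReal.ofReal_toReal (measure_ne_top P (A ∩ E j))]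
          exact ENNReal.ofReal_le_ofReal (h j)
      _ = ENNReal.ofReal (K / 3) := by
          rw [← ENNReal.ofReal_tsum_of_nonneg (fun j => by positivity) hs.summable, hs.tsum_eq]
  exact ENNReal.toReal_le_of_le_ofReal (by positivity) this

lemma first_cover {Ω : Type*} [MeasurableSpace Ω] (P : Measure Ω) [IsProbabilityMeasure P]
    (A D : ℕ → Set Ω) (hD : ∀ j, D j = {w | w ∈ A j ∧ ∀ i < j, w ∉ A i}) (hA : ∀ j, MeasurableSet (A j))
    (B Q : Set Ω) (hB : MeasurableSet B)
    (hQ : Q ⊆ ⋃ j, A j) (c : ℝ) (hc : 0 ≤ c)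
    (h : ∀ j, P.real (B ∩ D j ∩ Q) ≤ c * P.real (B ∩ D j)) :
    P.real (B ∩ Q) ≤ c * P.real B := by
  have hDm : ∀ j, MeasurableSet (D j) := by
    intro j
    have : D j = A j ∩ ⋂ i ∈ Finset.range j, (A i)ᶜ := by
      rw [hD]; ext w; simp
    rw [this]
    exact (hA j).inter (Finset.measurableSet_biInter _ fun i _ => (hA i).compl)
  have hdis : Pairwise (Function.onFun Disjoint fun j => B ∩ D j) := by
    intro i j hij
    rw [Function.onFun, Set.disjoint_left]
    rintro w ⟨_, h1⟩ ⟨_, h2⟩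
    rw [hD] at h1 h2
    rcases lt_trichotomy i j with h | h | h
    · exact h2.2 i h h1.1
    · exact hij h
    · exact h1.2 j h h2.1
  have hcov : B ∩ Q ⊆ ⋃ j, (B ∩ D j ∩ Q) := by
    classical
    rintro w ⟨h1, h2⟩
    have hex : ∃ j, w ∈ A j := by simpa using hQ h2
    rw [Set.mem_iUnion]
    refine ⟨Nat.find hex, ⟨h1, ?_⟩, h2⟩
    rw [hD]
    exact ⟨Nat.find_spec hex, fun i hi => Nat.find_min hex hi⟩
  have : P (B ∩ Q) ≤ ENNReal.ofReal (c * P.real B) := by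
    calc P (B ∩ Q) ≤ ∑' j, P (B ∩ D j ∩ Q) := (measure_mono hcov).trans (measure_iUnion_le _)
      _ ≤ ∑' j, ENNReal.ofReal c * P (B ∩ D j) := by
          refine ENNReal.tsum_le_tsum fun j => ?_
          rw [← ENNReal.ofReal_toReal (measure_ne_top P (B ∩ D j ∩ Q)),
            ← ENNReal.ofReal_toReal (measure_ne_top P (B ∩ D j)), ← ENNReal.ofReal_mul hc]
          exact ENNReal.ofReal_le_ofReal (h j)
      _ = ENNReal.ofReal c * P (⋃ j, B ∩ D j) := by
          rw [ENNReal.tsum_mul_left, measure_iUnion hdis (fun j => hB.inter (hDm j))]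
      _ ≤ ENNReal.ofReal c * P B := by
          gcongr
          exact Set.iUnion_subset fun j => Set.inter_subset_left
      _ = ENNReal.ofReal (c * P.real B) := by
          rw [ENNReal.ofReal_mul hc, measureReal_def, ENNReal.ofReal_toReal (measure_ne_top _ _)]
  exact ENNReal.toReal_le_of_le_ofReal (by positivity) this

variable {d : ℕ} {i0 i1 : Fin d} (m n : ℕ)

lemma recur (q δ : unitInterval) (h01 : i0 ≠ i1)
    (hstep : ∀ x, StepHyp (XQ i0 i1 m n x) q δ (1 / 2304)) (c0 : ℝ) (hc0 : 0 < c0) (hc1 : c0 ≤ 1)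
    (hc : ∀ x, c0 ≤ (PB d q δ).real (SE (XQ i0 i1 m n x))) (N : ℕ) :
    ∀ j k (B : Set (BC d)), MeasurableSet B → Dep (JJ i0 k) B →
      (j ≠ 0 → k + 7 * (n + m + 1) * j ≤ N) →
      (PB d q δ).real (B ∩ QQ i0 N) ≤ ((1 + c0 / 3)⁻¹) ^ j * (PB d q δ).real B := by
  intro j
  set r := (1 + c0 / 3)⁻¹ with hr
  have hr0 : 0 < r := by positivity
  have hrr : r * (1 + c0 / 3) = 1 := inv_mul_cancel₀ (by positivity)
  have hr2 : 1 ≤ r * 2 := by nlinarith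
  induction j using Nat.strong_induction_on with
  | _ j IH =>
  intro k B hB hBd hk
  rcases Nat.eq_zero_or_pos j with rfl | hj
  · rw [pow_zero, one_mul]; exact measureReal_mono Set.inter_subset_left
  obtain ⟨xs, hxs⟩ := exists_surjective_nat (Vertex d)
  have hk' := hk (by omega)
  refine first_cover (PB d q δ) (fun a => TT i0 k (xs a)) (fun a => {w | w ∈ TT i0 k (xs a) ∧
    ∀ i < a, w ∉ TT i0 k (xs i)}) (fun a => rfl) (fun a => TT_meas k _) B _ hB ?_ _ (by positivity) ?_
  · intro w hw
    obtain ⟨x, hx⟩ := tip_exists (k := k) (by omega) hw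
    obtain ⟨a, rfl⟩ := hxs x
    exact Set.mem_iUnion.2 ⟨a, hx⟩
  intro a
  set x := xs a with hx
  set D : Set (BC d) := {w | w ∈ TT i0 k x ∧ ∀ i < a, w ∉ TT i0 k (xs i)} with hD
  have hDm : MeasurableSet D := by
    have : D = TT i0 k x ∩ ⋂ i ∈ Finset.range a, (TT i0 k (xs i))ᶜ := by
      ext w; simp [hD]
    rw [this]
    exact (TT_meas _ _).inter (Finset.measurableSet_biInter _ fun i _ => (TT_meas _ _).compl)
  have hDd : Dep (JJ i0 k) D := by
    rintro w w' hh ⟨h1, h2⟩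
    exact ⟨TT_dep k x w w' hh h1, fun i hi hc => h2 i hi
      (TT_dep k _ w' w (fun i hi => (hh i hi).symm) hc)⟩
  set C := B ∩ D with hC
  have hCm : MeasurableSet C := hB.inter hDm
  have hCd : Dep (JJ i0 k) C := hBd.inter hDd
  by_cases hxk : x i0 = k
  swap
  · have : C ∩ QQ i0 N ⊆ ∅ := by
      rintro w ⟨⟨_, hw⟩, _⟩
      exact hxk hw.1.1
    rw [Set.subset_empty_iff.1 this, measureReal_empty]
    positivity
  set X := XQ i0 i1 m n x with hX
  have hXok := XQ_ok m n h01 x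
  set P := PB d q δ with hP
  -- disjointness of coordinate sets
  have hSd := SE_dep X
  have dis1 : Disjoint (JJ i0 k) {i : BI d | i.2 = none ∧ i.1 ∈ ET (X.S0 : Set (Vertex d))} := by
    rw [Set.disjoint_left]
    rintro ⟨e, o⟩ h1 ⟨_, v, hv, hvS⟩
    have g1 : v i0 ≤ k := h1 v hv
    have g2 := (S0_height m n x (Finset.mem_coe.1 hvS)).1
    omega
  have dis2 : ∀ U : Set (Edge d), Disjoint (JJ i0 k ∪ {i : BI d | i.2 = none ∧ i.1 ∈ ET (X.S0 : Set (Vertex d))})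
      {i : BI d | i.1 ∈ E2 {z : Vertex d | x i0 < z i0} ∧
      ¬ (i.2 = none ∧ i.1 ∈ ET (X.S0 : Set (Vertex d)))} := by
    intro U
    rw [Set.disjoint_left]
    rintro ⟨e, o⟩ (h1 | h1) ⟨h2, h3⟩
    · obtain ⟨u, v, huv, rfl⟩ := edge_exists e
      have g1 : u i0 ≤ k := ((mem_E2 rfl).1 h1).1
      have g2 : x i0 < u i0 := ((mem_E2 rfl).1 h2).1
      omega
    · exact h3 h1
  have iS : P.real (C ∩ SE X) = P.real C * P.real (SE X) :=
    indep_real _ hCm (SE_meas X) hCd hSd dis1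
  have iE : ∀ h, P.real (C ∩ SE X ∩ EE X h) = P.real C * P.real (SE X) * P.real (EE X h) := by
    intro h
    rw [← iS]
    exact indep_real _ (hCm.inter (SE_meas X)) (EE_meas X hXok h)
      ((hCd.mono Set.subset_union_left).inter (hSd.mono Set.subset_union_right))
      (EE_dep1 m n h01 x h) (dis2 Set.univ)
  set s := P.real (SE X) with hs
  have hs1 : s ≤ 1 := measureReal_le_one
  have hs0 : c0 ≤ s := hc x
  have hPC : 0 ≤ P.real C := measureReal_nonneg
  -- starter fails
  have f1 : P.real (C ∩ (SE X)ᶜ ∩ QQ i0 N) ≤ r ^ (j - 1) * ((1 - s) * P.real C) := by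
    have h1 := IH (j - 1) (by omega) (k + 7 * (n + m + 1) * (0 + 1)) (C ∩ (SE X)ᶜ)
      (hCm.inter (SE_meas X).compl)
      ((hCd.mono (JJ_mono (by omega))).inter (SE_dep2 m n x k hxk 0).compl) (by
        intro _
        have : j = (j - 1) + 1 := by omega
        rw [this] at hk'
        linarith [hk'])
    have h2 : P.real (C ∩ (SE X)ᶜ) = (1 - s) * P.real C := by
      rw [indep_real _ hCm (SE_meas X).compl hCd hSd.compl dis1, probReal_compl_eq_one_sub (SE_meas X)]
      ring
    rw [h2] at h1
    exact h1
  have f2 : P.real ((C ∩ SE X ∩ QQ i0 N) ∩ ⋃ h, EE X h) ≤ (r ^ j * s * P.real C) / 3 := by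
    refine sum4 P _ _ _ (by positivity) ?_
    intro h
    have h1 := IH (j - 1 - h) (by omega) (k + 7 * (n + m + 1) * (h + 1)) (C ∩ SE X ∩ EE X h)
      ((hCm.inter (SE_meas X)).inter (EE_meas X hXok h))
      (((hCd.mono (JJ_mono (by omega))).inter (SE_dep2 m n x k hxk h)).inter
        (EE_dep2 m n h01 x k hxk h)) (by
        intro hne
        obtain ⟨b, hb⟩ : ∃ b, j = b + 1 + h := ⟨j - 1 - h, by omega⟩
        have hb' : j - 1 - h = b := by omega
        rw [hb']
        rw [hb] at hk'
        linarith [hk'])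
    have h2 : C ∩ SE X ∩ QQ i0 N ∩ EE X h = C ∩ SE X ∩ EE X h ∩ QQ i0 N := by
      ext w; simp only [Set.mem_inter_iff]; tauto
    rw [h2]
    refine h1.trans ?_
    rw [iE]
    have h3 := EE_prob X q δ hXok (hstep x) h
    have h4 : r ^ (j - 1 - h) ≤ r ^ j * 2 ^ (h + 1) := by
      have hr1 : r ≤ 1 := by
        rw [hr]; apply inv_le_one_of_one_le₀; linarith
      calc r ^ (j - 1 - h) ≤ r ^ (j - 1 - h) * (r * 2) ^ (h + 1) :=
            le_mul_of_one_le_right (by positivity) (one_le_pow₀ hr2)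
        _ = r ^ (j - 1 - h + (h + 1)) * 2 ^ (h + 1) := by rw [mul_pow, pow_add]; ring
        _ ≤ r ^ j * 2 ^ (h + 1) := by
            have := pow_le_pow_of_le_one hr0.le hr1 (show j ≤ j - 1 - h + (h + 1) by omega)
            gcongr
    calc r ^ (j - 1 - h) * (P.real C * s * P.real (EE X h))
        ≤ (r ^ j * 2 ^ (h + 1)) * (P.real C * s * (1 / 8) ^ (h + 1)) := by gcongr
      _ = r ^ j * s * P.real C * (2 * (1 / 8)) ^ (h + 1) := by rw [mul_pow]; ring
      _ = r ^ j * s * P.real C * (1 / 4) ^ (h + 1) := by norm_num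
  have hcover : C ∩ QQ i0 N ⊆ (C ∩ (SE X)ᶜ ∩ QQ i0 N) ∪ ((C ∩ SE X ∩ QQ i0 N) ∩ ⋃ h, EE X h) := by
    rintro w ⟨hw1, hw2⟩
    by_cases hw3 : w ∈ SE X
    · right
      refine ⟨⟨⟨hw1, hw3⟩, hw2⟩, ?_⟩
      by_contra hne
      rw [Set.mem_iUnion] at hne
      push Not at hne
      have hinf := nonterm_inf m n h01 x hw3 hne
      have hcx : Conn (eta w) (origin d) x := hw1.2.1.2.conn
      refine hw2.2 (hinf.mono ?_)
      intro y hy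
      exact Relation.ReflTransGen.trans hcx hy
    · left; exact ⟨⟨hw1, hw3⟩, hw2⟩
  have f3 : P.real (C ∩ QQ i0 N) ≤ r ^ (j - 1) * ((1 - s) * P.real C) + (r ^ j * s * P.real C) / 3 :=
    (measureReal_mono hcover).trans ((measureReal_union_le _ _).trans (add_le_add f1 f2))
  refine f3.trans ?_
  have hj1 : r ^ (j - 1) = r ^ j * (1 + c0 / 3) := by
    obtain ⟨b, rfl⟩ : ∃ b, j = b + 1 := ⟨j - 1, by omega⟩
    rw [Nat.add_sub_cancel, pow_succ, mul_assoc, hrr, mul_one]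
  rw [hj1]
  have : (1 + c0 / 3) * (1 - s) + s / 3 ≤ 1 := by nlinarith
  calc _ = (r ^ j * P.real C) * ((1 + c0 / 3) * (1 - s) + s / 3) := by ring
    _ ≤ (r ^ j * P.real C) * 1 := by gcongr
    _ = _ := by ring

end L12

section L13
variable {d : ℕ}

lemma num_end (f : ℕ → ℝ) (a K r : ℝ) (L : ℕ) (hL : 1 ≤ L) (ha : a < 1) (hK : 0 < K) (hr0 : 0 < r)
    (hr1 : r < 1) (h1 : ∀ n, f n ≤ a) (h2 : ∀ n, f n ≤ K * r ^ (n / L)) :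
    ∃ c : ℝ, 0 < c ∧ ∀ n : ℕ, 1 ≤ n → f n ≤ Real.exp (-c * n) := by
  have hLr : (0:ℝ) < L := by exact_mod_cast hL
  set t := Real.sqrt r with ht
  have ht0 : 0 < t := Real.sqrt_pos.2 hr0
  have htt : t * t = r := Real.mul_self_sqrt hr0.le
  have ht1 : t < 1 := by nlinarith
  obtain ⟨k0, hk0⟩ := exists_pow_lt_of_lt_one (show 0 < t / K by positivity) ht1
  set b := max a (1 / 2) with hb
  have hb0 : 0 < b := lt_of_lt_of_le (by norm_num) (le_max_right _ _)
  have hb1 : b < 1 := max_lt ha (by norm_num)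
  set c1 := - Real.log t / L with hc1
  set c2 := - Real.log b / (L * k0 + 1) with hc2
  have hlt : Real.log t < 0 := Real.log_neg ht0 ht1
  have hlb : Real.log b < 0 := Real.log_neg hb0 hb1
  have hc1p : 0 < c1 := div_pos (by linarith) hLr
  have hc2p : 0 < c2 := div_pos (by linarith) (by positivity)
  refine ⟨min c1 c2, lt_min hc1p hc2p, fun n hn => ?_⟩
  by_cases hk : k0 ≤ n / L
  · refine (h2 n).trans ?_
    set k := n / L with hkk
    have hnk : (n:ℝ) ≤ L * (k + 1) := by
      have := Nat.lt_mul_div_succ n (show 0 < L by omega)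
      exact_mod_cast this.le
    have e1 : t ^ (k + 1) = Real.exp (-(c1 * (L * (k + 1)))) := by
      have : -(c1 * (L * (k + 1))) = ((k + 1 : ℕ) : ℝ) * Real.log t := by
        rw [hc1]; push_cast; field_simp
      rw [this, Real.exp_nat_mul, Real.exp_log ht0]
    have e2 : K * r ^ k ≤ t ^ (k + 1) := by
      rw [← htt, mul_pow, pow_succ]
      have h3 : t ^ k ≤ t / K := (pow_le_pow_of_le_one ht0.le ht1.le hk).trans hk0.le
      have h4 : K * t ^ k ≤ t := by
        rw [le_div_iff₀ hK] at h3; linarith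
      have : 0 < t ^ k := by positivity
      nlinarith
    refine e2.trans (e1.le.trans (Real.exp_le_exp.2 ?_))
    have h5 : min c1 c2 * n ≤ c1 * (L * (k + 1)) :=
      mul_le_mul (min_le_left _ _) hnk (by positivity) hc1p.le
    linarith
  · refine (h1 n).trans ((show a ≤ b from le_max_left _ _).trans ?_)
    have hn2 : (n:ℝ) ≤ L * k0 + 1 := by
      have h6 : n < L * (n / L + 1) := Nat.lt_mul_div_succ n (show 0 < L by omega)
      have h7 : L * (n / L + 1) ≤ L * k0 := Nat.mul_le_mul_left _ (by omega)
      have : n ≤ L * k0 + 1 := by omega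
      exact_mod_cast this
    have e3 : b = Real.exp (-(c2 * (L * k0 + 1))) := by
      have : -(c2 * (L * k0 + 1)) = Real.log b := by
        rw [hc2, div_mul_cancel₀ _ (by positivity)]; ring
      rw [this, Real.exp_log hb0]
    calc b = _ := e3
      _ ≤ _ := Real.exp_le_exp.2 (by
        have : min c1 c2 * n ≤ c2 * (L * k0 + 1) :=
          mul_le_mul (min_le_right _ _) hn2 (by positivity) hc2p.le
        linarith)

lemma eta_false (q δ : unitInterval) (e : Edge d) :
    (PB d q δ).real {w | eta w e = false} = (1 - (q:ℝ)) * (1 - (δ:ℝ)) ^ 49 := by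
  classical
  have h1 : {w : BC d | eta w e = false} = {w | ∀ i ∈ (Finset.univ : Finset (Option Col)).map
      ⟨fun o => ((e, o) : BI d), fun a b h => (Prod.ext_iff.1 h).2⟩, w i = false} := by
    ext w
    simp [eta]
    rfl
  have h2 : ∀ o : Option Col, ((rB d q δ (e, o) : unitInterval) : ℝ) = if o = none then (q:ℝ) else δ := by
    intro o; unfold rB; split_ifs <;> rfl
  rw [h1, PM_closed, Finset.prod_map, Fintype.prod_option]
  show (1 - ((rB d q δ (e, none) : unitInterval) : ℝ)) *
    ∏ x : Col, (1 - ((rB d q δ (e, some x) : unitInterval) : ℝ)) = _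
  simp only [h2]
  simp [Col]

lemma eta_law (q δ p : unitInterval) (h : (1 - (q:ℝ)) * (1 - (δ:ℝ)) ^ 49 = 1 - p) :
    (PB d q δ).map eta = PC d p := by
  classical
  refine eq_PM _ _ fun s f => ?_
  have hcm : ∀ s : Finset (Edge d), MeasurableSet {ω : Config d | ∀ e ∈ s, ω e = f e} := fun s =>
    Dep.meas (J := (s : Set (Edge d))) s.finite_toSet (dep_cyl s f)
  have hm1 : ∀ (e : Edge d) b, MeasurableSet {w : BC d | eta w e = b} := fun e b =>
    ((measurable_pi_apply e).comp eta_meas) (MeasurableSet.singleton b)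
  rw [Measure.map_apply eta_meas (hcm s)]
  have key : ∀ s : Finset (Edge d), (PB d q δ).real (eta ⁻¹' {ω : Config d | ∀ e ∈ s, ω e = f e}) =
      ∏ e ∈ s, if f e then (p:ℝ) else 1 - p := by
    intro s
    induction s using Finset.induction_on with
    | empty => simp
    | insert e s he ih =>
      have hs : eta ⁻¹' {ω : Config d | ∀ e' ∈ insert e s, ω e' = f e'} =
          {w : BC d | eta w e = f e} ∩ eta ⁻¹' {ω : Config d | ∀ e ∈ s, ω e = f e} := by
        ext w; simp
      rw [hs, Finset.prod_insert he, ← ih]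
      rw [indep_real (rB d q δ) (J := {i | i.1 = e}) (J' := {i | i.1 ∈ s}) (hm1 e _)
        (eta_meas (hcm s))]
      · congr 1
        have hf := eta_false q δ e
        rw [h] at hf
        cases hfe : f e with
        | false => simp [hf]
        | true =>
          have : {w : BC d | eta w e = true} = {w | eta w e = false}ᶜ := by
            ext w; simp
          rw [this, probReal_compl_eq_one_sub (hm1 e _), hf]; simp
      · intro w w' hh hw
        have : eta w e = eta w' e := by
          unfold eta
          congr 1
          refine propext (exists_congr fun o => ?_)
          rw [hh (e, o) rfl]
        show eta w' e = f e
        rw [← this]; exact hw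
      · intro w w' hh hw e' he'
        have : eta w e' = eta w' e' := by
          unfold eta
          congr 1
          refine propext (exists_congr fun o => ?_)
          rw [hh (e', o) he']
        rw [← this]; exact hw e' he'
      · rw [Set.disjoint_left]
        rintro ⟨e1, o⟩ h1 h2
        exact he (by
          have h1' : e1 = e := h1
          rw [← h1']; exact h2)
  have hk := key s
  rw [measureReal_def] at hk
  rw [← ENNReal.ofReal_toReal (measure_ne_top (PB d q δ) _), hk]

/-- connection far in signed direction with finite cluster -/
def QC (i : Fin d) (s : ℤˣ) (N : ℕ) : Set (Config d) :=
  {ω | (∃ y, Conn ω (origin d) y ∧ (N : ℤ) ≤ s * y i) ∧ ¬ (cluster ω (origin d)).Infinite}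

lemma QC_meas (i : Fin d) (s : ℤˣ) (N : ℕ) : MeasurableSet (QC i s N) := by
  have : QC i s N = (⋃ y : Vertex d, ({ω | Conn ω (origin d) y} ∩ {_ω | (N : ℤ) ≤ s * y i})) ∩
      {ω : Config d | (cluster ω (origin d)).Infinite}ᶜ := by
    ext ω; simp [QC]
  rw [this]
  exact (MeasurableSet.iUnion fun y => (meas_conn _ y).inter (MeasurableSet.const _)).inter
    (meas_inf _).compl

lemma conn_pull {φ : Vertex d ≃ Vertex d} {h : IsAut φ} {ω : Config d} {x y : Vertex d} :
    Conn (pull φ h ω) x y ↔ Conn ω (φ x) (φ y) := by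
  constructor
  · exact fun hc => rtg_lift φ (fun a b hab => step_pull.1 hab) hc
  · intro hc
    have := rtg_lift (q := step (pull φ h ω)) φ.symm (fun a b hab => by
      rw [step_pull]; simpa using hab) hc
    rw [Equiv.symm_apply_apply, Equiv.symm_apply_apply] at this
    exact this

lemma QC_sym (p : unitInterval) (i0 i : Fin d) (s : ℤˣ) (N : ℕ) :
    (PC d p).real (QC i s N) = (PC d p).real (QC i0 1 N) := by
  classical
  set φ := affEquiv (origin d) (Equiv.swap i0 i) (fun _ => s) with hφ
  have hA : IsAut φ := affEquiv_aut _ _ _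
  have h0 : φ (origin d) = origin d := by
    funext j; rw [hφ, affEquiv_apply]; simp [origin]
  have hi : ∀ y, (s:ℤ) * φ y i = y i0 := by
    intro y
    rw [hφ, affEquiv_apply]
    rcases Int.units_eq_one_or s with h | h <;> simp [h, origin]
  have := pull_preserves p φ hA (QC_meas i0 1 N)
  rw [← this]
  congr 1
  ext ω
  have hcl : cluster ω (origin d) = φ '' cluster (pull φ hA ω) (origin d) := by
    ext z
    constructor
    · intro hz
      refine ⟨φ.symm z, ?_, by simp⟩
      show Conn _ _ _
      rw [conn_pull, h0, Equiv.apply_symm_apply]; exact hz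
    · rintro ⟨y, hy, rfl⟩
      have hy' : Conn (pull φ hA ω) (origin d) y := hy
      rw [conn_pull, h0] at hy'; exact hy'
  show ((∃ y, Conn ω (origin d) y ∧ (N : ℤ) ≤ s * y i) ∧ ¬ (cluster ω (origin d)).Infinite) ↔
    ((∃ y, Conn (pull φ hA ω) (origin d) y ∧ (N : ℤ) ≤ ((1:ℤˣ):ℤ) * y i0) ∧
      ¬ (cluster (pull φ hA ω) (origin d)).Infinite)
  refine and_congr ?_ ?_
  · constructor
    · rintro ⟨y, hy, hN⟩
      refine ⟨φ.symm y, ?_, ?_⟩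
      · rw [conn_pull, h0]; simpa using hy
      · have := hi (φ.symm y)
        rw [Equiv.apply_symm_apply] at this
        rw [Units.val_one, one_mul, ← this]; exact hN
    · rintro ⟨y, hy, hN⟩
      rw [conn_pull, h0] at hy
      refine ⟨φ y, hy, ?_⟩
      rw [hi]; simpa using hN
  · rw [hcl, Set.infinite_image_iff φ.injective.injOn]

lemma event_sub (N : ℕ) : ZeroToBoundary d N ∩ {ω : Config d | ¬ (cluster ω (origin d)).Infinite} ⊆
    ⋃ i : Fin d, (QC i 1 N ∪ QC i (-1) N) := by
  rintro ω ⟨⟨y, ⟨hy1, z, hz1, hz2⟩, hc⟩, hf⟩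
  have hz2' : ¬ ∀ i, |z i| ≤ (N:ℤ) := hz2
  push Not at hz2'
  obtain ⟨i, hi⟩ := hz2'
  have h1 : |y i| ≤ N := hy1 i
  have h2 : (y i - z i).natAbs ≤ 1 := by
    have h3 : (∑ i, (y i - z i).natAbs) = 1 := hz1
    rw [← h3]
    exact Finset.single_le_sum (f := fun i => (y i - z i).natAbs) (fun _ _ => Nat.zero_le _)
      (Finset.mem_univ i)
  rw [Set.mem_iUnion]
  refine ⟨i, ?_⟩
  rw [abs_le] at h1
  rw [lt_abs] at hi
  rcases hi with hi | hi
  · left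
    refine ⟨⟨y, hc, ?_⟩, hf⟩
    rw [Units.val_one, one_mul]; omega
  · right
    refine ⟨⟨y, hc, ?_⟩, hf⟩
    rw [Units.val_neg, Units.val_one]; omega

lemma event_bound (p : unitInterval) (i0 : Fin d) (N : ℕ) :
    (PC d p).real (ZeroToBoundary d N ∩ {ω : Config d | ¬ (cluster ω (origin d)).Infinite}) ≤
      2 * d * (PC d p).real (QC i0 1 N) := by
  calc _ ≤ (PC d p).real (⋃ i : Fin d, (QC i 1 N ∪ QC i (-1) N)) := measureReal_mono (event_sub N)
    _ ≤ ∑ i : Fin d, (PC d p).real (QC i 1 N ∪ QC i (-1) N) := measureReal_iUnion_fintype_le _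
    _ ≤ ∑ i : Fin d, (2 * (PC d p).real (QC i0 1 N)) := by
        refine Finset.sum_le_sum fun i _ => ?_
        refine (measureReal_union_le _ _).trans ?_
        rw [QC_sym p i0 i 1, QC_sym p i0 i (-1)]; linarith
    _ = _ := by simp; ring

lemma exists_delta (q p : ℝ) (hqp : q < p) (hp : p < 1) :
    ∃ δ : unitInterval, 0 < (δ:ℝ) ∧ (1 - q) * (1 - (δ:ℝ)) ^ 49 = 1 - p := by
  have hq : 0 < 1 - q := by linarith
  have h0 : 0 < (1 - p) / (1 - q) := div_pos (by linarith) hq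
  have h1 : (1 - p) / (1 - q) < 1 := by rw [div_lt_one hq]; linarith
  set a := ((1 - p) / (1 - q)) ^ (((49 : ℕ) : ℝ)⁻¹) with ha
  have ha0 : 0 ≤ a := Real.rpow_nonneg h0.le _
  have ha1 : a < 1 := Real.rpow_lt_one h0.le h1 (by positivity)
  refine ⟨⟨1 - a, by linarith, by linarith⟩, by simpa using ha1, ?_⟩
  show (1 - q) * (1 - (1 - a)) ^ 49 = 1 - p
  rw [sub_sub_cancel, ha, Real.rpow_inv_natCast_pow h0.le (by norm_num)]
  field_simp

lemma main_PC (hd : 2 ≤ d) (q p : unitInterval) (hq0 : 0 < (q:ℝ)) (hqp : (q:ℝ) < p)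
    (hp : (p:ℝ) < 1) (h0 : PC d q (ZeroToInfinity d) ≠ 0) (h1 : PC d p (ZeroToInfinity d) ≠ 0) :
    ∃ c : ℝ, 0 < c ∧ ∀ n : ℕ, 1 ≤ n →
      (PC d p).real (ZeroToBoundary d n ∩ {ω : Config d | ¬ (cluster ω (origin d)).Infinite}) ≤
        Real.exp (-c * n) := by
  obtain ⟨δ, hδ0, hδ⟩ := exists_delta q p hqp hp
  have hlaw := eta_law (d := d) q δ p hδ
  let i0 : Fin d := ⟨0, by omega⟩
  let i1 : Fin d := ⟨1, by omega⟩
  have h01 : i0 ≠ i1 := by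
    intro h; have := congrArg Fin.val h; simp [i0, i1] at this
  obtain ⟨m, n, hm, hmn, H⟩ := gstep (d := d) q δ hq0 (hqp.trans hp) hδ0 h0 i0 (1 / 2304) (by norm_num)
  have hstep := fun x => XQ_step (i0 := i0) (i1 := i1) m n h01 q δ (1 / 2304) H x
  set c0 := (q:ℝ) ^ ((3 * (n + m + 1) + (2 * m + 1) ^ d) * 3 ^ d) with hc0
  have hc0p : 0 < c0 := by positivity
  have hc01 : c0 ≤ 1 := pow_le_one₀ hq0.le q.2.2
  set r := (1 + c0 / 3)⁻¹ with hr
  have hr0 : 0 < r := by positivity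
  have hr1 : r < 1 := inv_lt_one_of_one_lt₀ (by linarith)
  have hQ : ∀ N : ℕ, (PC d p).real (QC i0 1 N) ≤ r ^ (N / (7 * (n + m + 1))) := by
    intro N
    have h2 := recur m n q δ h01 hstep c0 hc0p hc01 (fun x => SE_prob m n q δ x) N
      (N / (7 * (n + m + 1))) 0 Set.univ MeasurableSet.univ (fun _ _ _ _ => trivial) (by
        intro _
        rw [Nat.zero_add]; exact Nat.mul_div_le _ _)
    rw [Set.univ_inter, probReal_univ, mul_one] at h2
    have h3 : QQ i0 N = eta ⁻¹' (QC i0 1 N) := by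
      ext w; simp [QQ, QC]
    rw [← hlaw, measureReal_def, Measure.map_apply eta_meas (QC_meas _ _ _), ← measureReal_def, ← h3]
    exact h2
  have hth : 0 < (PC d p).real (ZeroToInfinity d) := by
    rw [measureReal_def]
    exact ENNReal.toReal_pos h1 (measure_ne_top _ _)
  refine num_end _ (1 - (PC d p).real (ZeroToInfinity d)) (2 * d) r (7 * (n + m + 1)) (by omega)
    (by linarith) (by
      have : (0:ℝ) < d := by exact_mod_cast (show 0 < d by omega)
      positivity) hr0 hr1 ?_ ?_
  · intro N
    rw [← probReal_compl_eq_one_sub (show MeasurableSet (ZeroToInfinity d) from meas_inf (origin d))]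
    exact measureReal_mono (fun ω hω => hω.2)
  · intro N
    refine (event_bound p i0 N).trans ?_
    exact mul_le_mul_of_nonneg_left (hQ N) (by positivity)

end L13

/-- Super-critical sharpness: for every `d ≥ 2` and `p ∈ (0,1)` with `p > p_c(ℤ^d)`, there
exists `c = c(p) > 0` such that
`ℙ_p[0 ↔ ∂Λ_n but the open cluster of 0 is finite] ≤ exp(−c·n)` for all `n ≥ 1`. -/
theorem supercritical_sharpness
    (d : ℕ) (hd : 2 ≤ d)
    (μ : ℝ → Measure (Config d))
    (hμ : ∀ p ∈ Set.Ioo (0 : ℝ) 1, IsBernoulli d p (μ p))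
    (p : ℝ) (hp : p ∈ Set.Ioo (0 : ℝ) 1)
    (hsup : sSup {q : ℝ | q ∈ Set.Ioo (0 : ℝ) 1 ∧ μ q (ZeroToInfinity d) = 0} < p) :
    ∃ c : ℝ, 0 < c ∧ ∀ n : ℕ, 1 ≤ n →
      μ p (ZeroToBoundary d n ∩ {ω : Config d | ¬ (cluster ω (origin d)).Infinite}) ≤
        ENNReal.ofReal (Real.exp (-c * n)) := by
  set A := {q : ℝ | q ∈ Set.Ioo (0 : ℝ) 1 ∧ μ q (ZeroToInfinity d) = 0} with hA
  have hbdd : BddAbove A := ⟨1, fun x hx => hx.1.2.le⟩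
  have hno : ∀ q ∈ Set.Ioo (0:ℝ) 1, sSup A < q → μ q (ZeroToInfinity d) ≠ 0 := by
    intro q hq hlt h
    exact absurd (le_csSup hbdd (show q ∈ A from ⟨hq, h⟩)) (not_le.2 hlt)
  have hPC : ∀ q (hq : q ∈ Set.Ioo (0:ℝ) 1), μ q = PC d ⟨q, hq.1.le, hq.2.le⟩ := by
    intro q hq
    exact eq_PM _ _ (hμ q hq).2
  obtain ⟨q, hq1, hq2⟩ := exists_between (max_lt hsup hp.1)
  have hq : q ∈ Set.Ioo (0:ℝ) 1 := ⟨(le_max_right _ _).trans_lt hq1, hq2.trans hp.2⟩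
  have h0 := hno q hq ((le_max_left _ _).trans_lt hq1)
  have h1 := hno p hp hsup
  rw [hPC q hq] at h0
  rw [hPC p hp] at h1 ⊢
  obtain ⟨c, hc, H⟩ := main_PC hd ⟨q, hq.1.le, hq.2.le⟩ ⟨p, hp.1.le, hp.2.le⟩ hq.1 hq2 hp.2 h0 h1
  refine ⟨c, hc, fun n hn => ?_⟩
  rw [← ENNReal.ofReal_toReal (measure_ne_top (PC d ⟨p, hp.1.le, hp.2.le⟩) _)]
  exact ENNReal.ofReal_le_ofReal (H n hn)
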